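/- Every K-trivial set A is such that every Martin-Löf random sequence R with A ⊕ R ≥_T ∅′ is itself Turing above ∅′ (R is complete). Equivalently: no K-trivial set is weakly ML-cuppable. -/

import Mathlib

open MeasureTheory ENNReal

/-! ### Cantor space and the uniform (coin-flipping) measure -/

/-- The binary digits of a real number in `[0,1)`, giving a point of Cantor space. -/
noncomputable def binaryDigits (x : ℝ) : ℕ → Bool :=
  fun n => decide (⌊x * 2 ^ (n + 1)⌋ % 2 = 1)

/-- The uniform (Lebesgue / coin-flipping) measure on Cantor space `2^ω`,
obtained as the pushforward of Lebesgue measure on `[0,1)` under binary expansion. -/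
noncomputable def μCantor : Measure (ℕ → Bool) :=
  Measure.map binaryDigits (volume.restrict (Set.Ico (0 : ℝ) 1))

/-- `σ` is an initial segment of the infinite sequence `X`. -/
def IsPrefixOf (σ : List Bool) (X : ℕ → Bool) : Prop :=
  ∀ i : Fin σ.length, X i = σ.get i

/-- The cylinder determined by a finite binary string. -/
def cylinder (σ : List Bool) : Set (ℕ → Bool) := {X | IsPrefixOf σ X}

/-- The open set generated by a set of finite binary strings. -/
def openOf (S : Set (List Bool)) : Set (ℕ → Bool) := ⋃ σ ∈ S, cylinder σ

/-- The density of a set `P` above the string `τ`: `μ([τ] ∩ P) · 2^{|τ|}`. -/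
noncomputable def dens (τ : List Bool) (P : Set (ℕ → Bool)) : ℝ≥0∞ :=
  μCantor (cylinder τ ∩ P) * 2 ^ τ.length

/-- The length-`n` initial segment of `X`, as a finite binary string. -/
def strPrefix (X : ℕ → Bool) (n : ℕ) : List Bool := (List.range n).map X

/-- A set of strings is prefix-free if no element is a proper prefix of another. -/
def PrefixFreeSet (S : Set (List Bool)) : Prop :=
  ∀ σ ∈ S, ∀ τ ∈ S, σ <+: τ → σ = τ

/-- The weight `∑_{σ ∈ S} 2^{-|σ|}` of a set of strings. -/
noncomputable def weight (S : Set (List Bool)) : ℝ≥0∞ :=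
  ∑' σ : S, 2⁻¹ ^ (σ : List Bool).length

/-- A set of strings is bounded if its weight is finite. -/
def BoundedStr (S : Set (List Bool)) : Prop := weight S < ⊤

/-- The tail `X(·+k)` of an infinite binary sequence. -/
def tailSeq (X : ℕ → Bool) (k : ℕ) : ℕ → Bool := fun n => X (n + k)

/-! ### Oracle computability -/

/-- The `e`-th computably enumerable set of naturals (the domain of the `e`-th
partial computable function). -/
def WEnum (e n : ℕ) : Prop := ((Denumerable.ofNat Nat.Partrec.Code e).eval n).Dom

/-- `OracleComputes e X n m` holds if the `e`-th Turing functional with oracle `X`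
outputs `m` on input `n`; a Turing functional is presented by the c.e. set `W_e`
of coded axioms `(σ, n, m)`, and `Γ_e^X(n) = m` iff some initial segment `σ` of `X`
has `(σ, n, m) ∈ W_e`. -/
def OracleComputes (e : ℕ) (X : ℕ → Bool) (n m : ℕ) : Prop :=
  ∃ σ : List Bool, IsPrefixOf σ X ∧
    WEnum e (Nat.pair (Encodable.encode σ) (Nat.pair n m))

def natOfBool (b : Bool) : ℕ := cond b 1 0

/-- `f : ℕ → ℕ` is computable with oracle `A`: some Turing functional with oracle `A`
has graph exactly `f`. -/
def FnComputableIn (f : ℕ → ℕ) (A : ℕ → Bool) : Prop :=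
  ∃ e, ∀ n m, OracleComputes e A n m ↔ m = f n

/-- Turing reducibility `B ≤_T A` for subsets of `ω` (as elements of Cantor space). -/
def TuringLE (B A : ℕ → Bool) : Prop := FnComputableIn (fun n => natOfBool (B n)) A

/-- Turing equivalence. -/
def TuringEquiv (A B : ℕ → Bool) : Prop := TuringLE A B ∧ TuringLE B A

/-- The Turing join `A ⊕ B`. -/
def joinSet (A B : ℕ → Bool) : ℕ → Bool :=
  fun n => if n % 2 = 0 then A (n / 2) else B (n / 2)

open Classical in
/-- The Turing jump `A′ = {e : Γ_e^A(e)↓}`. -/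
noncomputable def jump (A : ℕ → Bool) : ℕ → Bool :=
  fun e => decide (∃ m, OracleComputes e A e m)

/-- The empty oracle. -/
def emptyOracle : ℕ → Bool := fun _ => false

/-- The halting problem `∅′`. -/
noncomputable def zeroJump : ℕ → Bool := jump emptyOracle

/-- A set is computable iff it is Turing reducible to the empty oracle. -/
def ComputableSet (A : ℕ → Bool) : Prop := TuringLE A emptyOracle

/-- A set of naturals is c.e. in `A`. -/
def CeIn (A : ℕ → Bool) (S : Set ℕ) : Prop :=
  ∃ e, ∀ n, n ∈ S ↔ ∃ m, OracleComputes e A n m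

/-- A set of strings is c.e. in `A`. -/
def CeStrIn (A : ℕ → Bool) (S : Set (List Bool)) : Prop :=
  ∃ e, ∀ σ : List Bool, σ ∈ S ↔ ∃ m, OracleComputes e A (Encodable.encode σ) m

/-- A c.e. set of strings. -/
def CeStr (S : Set (List Bool)) : Prop := CeStrIn emptyOracle S

/-! ### Π⁰₁ classes, Martin-Löf randomness, K-triviality -/

/-- A `Π⁰₁(A)` class: the complement of the union of cylinders over an `A`-c.e.
set of strings. -/
def Pi01In (A : ℕ → Bool) (P : Set (ℕ → Bool)) : Prop :=
  ∃ S : Set (List Bool), CeStrIn A S ∧ P = (openOf S)ᶜ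

/-- A `Π⁰₁` class. -/
def Pi01 (P : Set (ℕ → Bool)) : Prop := Pi01In emptyOracle P

/-- The `n`-th level of the `e`-th `A`-effective sequence of open sets. -/
def testLevel (e : ℕ) (A : ℕ → Bool) (n : ℕ) : Set (ℕ → Bool) :=
  openOf {σ | ∃ m, OracleComputes e A (Nat.pair n (Encodable.encode σ)) m}

/-- A Martin-Löf test relative to `A`: a uniformly `A`-c.e. sequence of open sets
`G n` with `μ(G n) ≤ 2^{-n}`. -/
def MLTestIn (A : ℕ → Bool) (G : ℕ → Set (ℕ → Bool)) : Prop :=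
  (∃ e, ∀ n, G n = testLevel e A n) ∧ ∀ n, μCantor (G n) ≤ 2⁻¹ ^ n

/-- `X` is Martin-Löf random relative to `A`: it passes every `A`-Martin-Löf test. -/
def MLRandomIn (A X : ℕ → Bool) : Prop :=
  ∀ G : ℕ → Set (ℕ → Bool), MLTestIn A G → ∃ n, X ∉ G n

/-- `X` is Martin-Löf random. -/
def MLRandom (X : ℕ → Bool) : Prop := MLRandomIn emptyOracle X

/-- The domain of the `e`-th machine, viewed as a set of binary strings. -/
def machineDom (e : ℕ) : Set (List Bool) :=
  {σ | ((Denumerable.ofNat Nat.Partrec.Code e).eval (Encodable.encode σ)).Dom}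

/-- The `e`-th machine is prefix-free. -/
def PrefixFreeMachine (e : ℕ) : Prop := PrefixFreeSet (machineDom e)

/-- Prefix-free Kolmogorov complexity (defined, up to an additive constant, as the
least `|σ| + 2e + 2` over prefix-free machines `e` and programs `σ` producing `x`). -/
noncomputable def Kcpx (x : ℕ) : ℕ :=
  sInf {k | ∃ e, ∃ σ : List Bool, PrefixFreeMachine e ∧
    x ∈ (Denumerable.ofNat Nat.Partrec.Code e).eval (Encodable.encode σ) ∧
    k = σ.length + 2 * e + 2}

/-- `K(n)` means `K(1^n)`. -/
noncomputable def KofNat (n : ℕ) : ℕ := Kcpx (Encodable.encode (List.replicate n true))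

/-- `A` is K-trivial: `K(A↾n) ≤ K(n) + c` for some constant `c`. -/
def KTrivial (A : ℕ → Bool) : Prop :=
  ∃ c, ∀ n, Kcpx (Encodable.encode (strPrefix A n)) ≤ KofNat n + c

/-!
The engine is a covering theorem: a set of strings of bounded weight that is c.e. in a `K`-trivial
oracle `A` is contained in a c.e. set of strings of bounded weight. It comes from a finite tree of
procedures that issue Kraft–Chaitin requests on behalf of the current guesses about `A`, each
passing a smaller share of its weight on to its children; `K`-triviality forces the requests to be
paid for along `A`, so some procedure gets stuck while no child of it does, and what its children
have completed is the cover.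

Let `R` be random with `∅′ ≤_T A ⊕ R`. Covering the uses of an `A`-c.e. set leaves finitely many
candidates for each of its elements, and `∅′` can bound them, so the complement of an `A`-c.e. set
is c.e. in `A ⊕ R`. By self reference there are marks, enumerable in `A ⊕ R`, such that `R` marks
`(j, σ)` exactly when `A` does not see that the strings not marking `(j, σ)` have density less than
`2⁻ʲ` above `σ`; otherwise `σ` is `j`-big.

For each `j` some initial segment of `R` is `j`-big. Otherwise `R` passes through infinitely many
exits, an exit being a string that marks the exit before it when that one is not yet known to be
big. Density bounds the weight of the exits by `2ʲ`, and a c.e. cover of them would be a Solovay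
test which `R` fails. Strings that mark one of their own `j`-big initial segments are never initial
segments of `R`. A c.e. cover of the shortest ones meets only finitely many initial segments of `R`,
again by randomness, so avoiding the other strings of the cover is a `Π⁰₁` class containing `R`,
whose lower density along `R` is zero.

Finally `R` computes `∅′`. Consider the least stage at which `R` shows that this class has density
less than `2⁻ⁿ` above an initial segment of `R`. If `n` enters `∅′` later, then the strings in the
class that are in the same situation have weight at most `2⁻ⁿ`, so by the Solovay test of all these
strings it happens for finitely many `n` only.
-/

/-! ### Primitive recursion through `fun_prop` -/

attribute [fun_prop] Primrec PrimrecPred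
attribute [fun_prop] Primrec.const Primrec.fst Primrec.snd Primrec.comp Primrec.id Primrec.pair
  Primrec.ite PrimrecPred.comp PrimrecPred.and PrimrecPred.or PrimrecPred.not
  Primrec.list_range Primrec.list_tail Primrec.list_length Primrec.encode Primrec.unpair

section Primrec

variable {α β γ σ : Type*} [Primcodable α] [Primcodable β] [Primcodable γ] [Primcodable σ]

section Functions

variable {f g : α → ℕ}

@[fun_prop]
theorem primrec_add (hf : Primrec f) (hg : Primrec g) : Primrec fun a => f a + g a :=
  Primrec.nat_add.comp hf hg

@[fun_prop]
theorem primrec_sub (hf : Primrec f) (hg : Primrec g) : Primrec fun a => f a - g a :=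
  Primrec.nat_sub.comp hf hg

@[fun_prop]
theorem primrec_mul (hf : Primrec f) (hg : Primrec g) : Primrec fun a => f a * g a :=
  Primrec.nat_mul.comp hf hg

@[fun_prop]
theorem primrec_div (hf : Primrec f) (hg : Primrec g) : Primrec fun a => f a / g a :=
  Primrec.nat_div.comp hf hg

@[fun_prop]
theorem primrec_mod (hf : Primrec f) (hg : Primrec g) : Primrec fun a => f a % g a :=
  Primrec.nat_mod.comp hf hg

@[fun_prop]
theorem primrec_min (hf : Primrec f) (hg : Primrec g) : Primrec fun a => min (f a) (g a) :=
  Primrec.nat_min.comp hf hg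

@[fun_prop]
theorem primrec_pow (hf : Primrec f) (hg : Primrec g) : Primrec fun a => f a ^ g a :=
  (Primrec₂.unpaired'.1 Nat.Primrec.pow).comp hf hg

@[fun_prop]
theorem primrec_natPair (hf : Primrec f) (hg : Primrec g) :
    Primrec fun a => Nat.pair (f a) (g a) :=
  Primrec₂.natPair.comp hf hg

@[fun_prop]
theorem primrec_decode (hf : Primrec f) : Primrec fun a => (Encodable.decode (f a) : Option β) :=
  Primrec.decode.comp hf

@[fun_prop]
theorem primrec_ofNat {δ : Type*} [Denumerable δ] (hf : Primrec f) :
    Primrec fun a => Denumerable.ofNat δ (f a) :=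
  (Primrec.ofNat δ).comp hf

@[fun_prop]
theorem primrec_some {f : α → β} (hf : Primrec f) : Primrec fun a => some (f a) :=
  Primrec.option_some.comp hf

@[fun_prop]
theorem primrec_isSome {f : α → Option β} (hf : Primrec f) : Primrec fun a => (f a).isSome :=
  Primrec.option_isSome.comp hf

@[fun_prop]
theorem primrec_optionGetD {f : α → Option β} {g : α → β} (hf : Primrec f) (hg : Primrec g) :
    Primrec fun a => (f a).getD (g a) :=
  Primrec.option_getD.comp hf hg

@[fun_prop]
theorem primrec_optionMap {f : α → Option β} {g : α → β → σ} (hf : Primrec f)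
    (hg : Primrec fun p : α × β => g p.1 p.2) : Primrec fun a => (f a).map (g a) :=
  Primrec.option_map hf hg

@[fun_prop]
theorem primrec_optionBind {f : α → Option β} {g : α → β → Option σ} (hf : Primrec f)
    (hg : Primrec fun p : α × β => g p.1 p.2) : Primrec fun a => (f a).bind (g a) :=
  Primrec.option_bind hf hg

@[fun_prop]
theorem primrec_optionToList {f : α → Option β} (hf : Primrec f) :
    Primrec fun a => (f a).toList :=
  Primrec.optionToList.comp hf

@[fun_prop]
theorem primrec_cons {f : α → β} {g : α → List β} (hf : Primrec f) (hg : Primrec g) :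
    Primrec fun a => f a :: g a :=
  Primrec.list_cons.comp hf hg

@[fun_prop]
theorem primrec_append {f g : α → List β} (hf : Primrec f) (hg : Primrec g) :
    Primrec fun a => f a ++ g a :=
  Primrec.list_append.comp hf hg

@[fun_prop]
theorem primrec_head? {f : α → List β} (hf : Primrec f) : Primrec fun a => (f a).head? :=
  Primrec.list_head?.comp hf

@[fun_prop]
theorem primrec_take {l : α → List β} (hf : Primrec f) (hl : Primrec l) :
    Primrec fun a => (l a).take (f a) :=
  Primrec.list_take.comp hf hl

@[fun_prop]
theorem primrec_drop {l : α → List β} (hf : Primrec f) (hl : Primrec l) :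
    Primrec fun a => (l a).drop (f a) :=
  Primrec.list_drop.comp hf hl

@[fun_prop]
theorem primrec_getElem? {l : α → List β} (hf : Primrec f) (hl : Primrec l) :
    Primrec fun a => (l a)[f a]? :=
  Primrec.list_getElem?.comp hl hf

@[fun_prop]
theorem primrec_map {f : α → List β} {g : α → β → σ} (hf : Primrec f)
    (hg : Primrec fun p : α × β => g p.1 p.2) : Primrec fun a => (f a).map (g a) :=
  Primrec.list_map hf hg

@[fun_prop]
theorem primrec_flatMap {f : α → List β} {g : α → β → List σ} (hf : Primrec f)
    (hg : Primrec fun p : α × β => g p.1 p.2) : Primrec fun a => (f a).flatMap (g a) :=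
  Primrec.list_flatMap hf hg

@[fun_prop]
theorem primrec_filterMap {f : α → List β} {g : α → β → Option σ} (hf : Primrec f)
    (hg : Primrec fun p : α × β => g p.1 p.2) : Primrec fun a => (f a).filterMap (g a) :=
  Primrec.listFilterMap hf hg

@[fun_prop]
theorem primrec_natRec {g : α → β} {h : α → ℕ → β → β} (hf : Primrec f)
    (hg : Primrec g) (hh : Primrec fun p : α × ℕ × β => h p.1 p.2.1 p.2.2) :
    Primrec fun a => (Nat.rec (g a) (h a) (f a) : β) :=
  Primrec.nat_rec' hf hg (h := fun a p => h a p.1 p.2) hh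

theorem primrec_foldr {f : α → List β} {g : α → σ} {h : α → β → σ → σ} (hf : Primrec f)
    (hg : Primrec g) (hh : Primrec fun p : α × β × σ => h p.1 p.2.1 p.2.2) :
    Primrec fun a => (f a).foldr (h a) (g a) :=
  Primrec.list_foldr hf hg (h := fun a p => h a p.1 p.2) hh

@[fun_prop]
theorem primrec_sum {f : α → List ℕ} (hf : Primrec f) : Primrec fun a => (f a).sum :=
  (primrec_foldr (g := fun _ => 0) (h := fun _ x y => x + y) hf (by fun_prop)
    (by fun_prop)).of_eq fun _ => List.sum_eq_foldr.symm

@[fun_prop]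
theorem primrec_replicate {x : α → β} (hf : Primrec f) (hx : Primrec x) :
    Primrec fun a => List.replicate (f a) (x a) :=
  (show Primrec fun a => (List.range (f a)).map fun _ => x a by fun_prop).of_eq
    fun a => by simp

@[fun_prop]
theorem primrec_evaln {c : α → Nat.Partrec.Code} (hf : Primrec f) (hc : Primrec c)
    (hg : Primrec g) : Primrec fun a => Nat.Partrec.Code.evaln (f a) (c a) (g a) :=
  Nat.Partrec.Code.primrec_evaln.comp (show Primrec fun a => ((f a, c a), g a) by fun_prop)

@[fun_prop]
theorem primrec_curry {c : α → Nat.Partrec.Code} (hc : Primrec c) (hf : Primrec f) :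
    Primrec fun a => Nat.Partrec.Code.curry (c a) (f a) :=
  Nat.Partrec.Code.primrec₂_curry.comp hc hf

end Functions

section Predicates

variable {f g : α → ℕ}

@[fun_prop]
theorem primrecPred_le (hf : Primrec f) (hg : Primrec g) : PrimrecPred fun a => f a ≤ g a :=
  Primrec.nat_le.comp hf hg

@[fun_prop]
theorem primrecPred_lt (hf : Primrec f) (hg : Primrec g) : PrimrecPred fun a => f a < g a :=
  Primrec.nat_lt.comp hf hg

@[fun_prop]
theorem primrecPred_eq {f g : α → β} (hf : Primrec f) (hg : Primrec g) :
    PrimrecPred fun a => f a = g a :=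
  Primrec.eq.comp hf hg

@[fun_prop]
theorem primrecPred_exists_mem {l : α → List β} {r : α → β → Prop} (hl : Primrec l)
    (hr : PrimrecPred fun q : α × β => r q.1 q.2) : PrimrecPred fun a => ∃ i ∈ l a, r a i :=
  (PrimrecRel.exists_mem_list (R := fun i a => r a i)
    (hr.comp (Primrec.snd.pair Primrec.fst))).comp hl Primrec.id

@[fun_prop]
theorem primrecPred_exists_lt {r : α → ℕ → Prop} (hf : Primrec f)
    (hr : PrimrecPred fun q : α × ℕ => r q.1 q.2) : PrimrecPred fun a => ∃ i < f a, r a i :=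
  (show PrimrecPred fun a => ∃ i ∈ List.range (f a), r a i by fun_prop).of_eq
    fun a => by simp

@[fun_prop]
theorem primrecPred_exists_le {r : α → ℕ → Prop} (hf : Primrec f)
    (hr : PrimrecPred fun q : α × ℕ => r q.1 q.2) : PrimrecPred fun a => ∃ i ≤ f a, r a i :=
  (show PrimrecPred fun a => ∃ i < f a + 1, r a i by fun_prop).of_eq
    fun a => by simp only [Nat.lt_succ_iff]

theorem primrecPred_forall_lt {r : α → ℕ → Prop} (hf : Primrec f)
    (hr : PrimrecPred fun q : α × ℕ => r q.1 q.2) : PrimrecPred fun a => ∀ i < f a, r a i :=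
  (show PrimrecPred fun a => ¬ ∃ i < f a, ¬ r a i by fun_prop).of_eq
    fun a => by simp

@[fun_prop]
theorem primrecPred_mem {l : α → List β} {x : α → β} (hl : Primrec l) (hx : Primrec x) :
    PrimrecPred fun a => x a ∈ l a :=
  (show PrimrecPred fun a => ∃ i ∈ l a, i = x a by fun_prop).of_eq fun a => by simp

@[fun_prop]
theorem primrecPred_isPrefix {l m : α → List β} (hl : Primrec l) (hm : Primrec m) :
    PrimrecPred fun a => l a <+: m a :=
  (show PrimrecPred fun a => l a = (m a).take (l a).length by fun_prop).of_eq
    fun a => by rw [List.prefix_iff_eq_take]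

@[fun_prop]
theorem primrecPred_isSuffix {l m : α → List β} (hl : Primrec l) (hm : Primrec m) :
    PrimrecPred fun a => l a <:+ m a :=
  (show PrimrecPred fun a => l a = (m a).drop ((m a).length - (l a).length) by fun_prop).of_eq
    fun a => by rw [List.suffix_iff_eq_drop]

theorem primrecPred_exists_eq_some {b : α → Option β} {r : α → β → Prop} (hb : Primrec b)
    (hr : PrimrecPred fun q : α × β => r q.1 q.2) :
    PrimrecPred fun a => ∃ i, b a = some i ∧ r a i :=
  (show PrimrecPred fun a => ∃ i ∈ (b a).toList, r a i by fun_prop).of_eq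
    fun a => by simp

end Predicates

@[fun_prop]
theorem primrec_filter {f : α → List β} {p : α → β → Prop} [∀ a, DecidablePred (p a)]
    (hf : Primrec f) (hp : PrimrecPred fun q : α × β => p q.1 q.2) :
    Primrec fun a => (f a).filter fun b => p a b :=
  (show Primrec fun a => (f a).flatMap fun b => if p a b then [b] else [] by
    fun_prop).of_eq fun a => by
      induction f a with
      | nil => rfl
      | cons x l ih => by_cases h : p a x <;> simp [h, ih]

end Primrec

/-! ### Enumerations by stages -/

theorem exists_code_mem_eval_iff {G : ℕ → ℕ → ℕ → Prop}
    (hG : PrimrecPred fun p : ℕ × ℕ × ℕ => G p.1 p.2.1 p.2.2)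
    (huniq : ∀ n s t x y, G n s x → G n t y → x = y) :
    ∃ c : Nat.Partrec.Code, ∀ n x, x ∈ c.eval n ↔ ∃ s, G n s x := by
  classical
  let search (n t : ℕ) : Option ℕ := if G n t.unpair.1 t.unpair.2 then some t.unpair.2 else none
  have hsearch : Primrec fun p : ℕ × ℕ => search p.1 p.2 := by
    refine Primrec.ite ?_ (by fun_prop) (by fun_prop)
    exact hG.comp (f := fun p : ℕ × ℕ => (p.1, p.2.unpair.1, p.2.unpair.2)) (by fun_prop)
  have hspec : ∀ n t x, x ∈ search n t ↔ G n t.unpair.1 x ∧ t.unpair.2 = x := by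
    intro n t x
    by_cases h : G n t.unpair.1 t.unpair.2
    · simp only [search, if_pos h, Option.mem_some_iff]
      exact ⟨fun hx => ⟨hx ▸ h, hx⟩, And.right⟩
    · simp only [search, if_neg h, Option.not_mem_none, false_iff]
      rintro ⟨hx, rfl⟩
      exact h hx
  have hpart : Partrec fun n : ℕ => Nat.rfindOpt (search n) :=
    Partrec.rfindOpt (Computable₂.mk hsearch.to_comp)
  obtain ⟨c, hc⟩ := Nat.Partrec.Code.exists_code.1 (Partrec.nat_iff.1 hpart)
  refine ⟨c, fun n x => ⟨fun hx => ?_, fun ⟨s, hs⟩ => ?_⟩⟩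
  · obtain ⟨t, ht⟩ := Nat.rfindOpt_spec (hc ▸ hx)
    exact ⟨_, ((hspec n t x).1 ht).1⟩
  · have hdom : (Nat.rfindOpt (search n)).Dom :=
      Nat.rfindOpt_dom.2 ⟨Nat.pair s x, x, by simp [hspec, hs]⟩
    obtain ⟨y, hy⟩ := Part.dom_iff_mem.1 hdom
    obtain ⟨t, ht⟩ := Nat.rfindOpt_spec hy
    rw [hc, huniq n s t.unpair.1 x y hs ((hspec n t y).1 ht).1]
    exact hy

theorem exists_wEnum_iff {Q : ℕ → ℕ → Prop} (hQ : PrimrecPred fun p : ℕ × ℕ => Q p.1 p.2) :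
    ∃ e, ∀ n, WEnum e n ↔ ∃ s, Q n s := by
  obtain ⟨c, hc⟩ := exists_code_mem_eval_iff (G := fun n s x => Q n s ∧ x = 0) (by fun_prop)
    (by rintro _ _ _ _ _ ⟨-, rfl⟩ ⟨-, rfl⟩; rfl)
  exact ⟨Encodable.encode c, fun n => by simp [WEnum, Part.dom_iff_mem, hc]⟩

/-- `n` enters the c.e. set `W_e` within `s` steps of computation. -/
def WStage (e n s : ℕ) : Prop :=
  (Nat.Partrec.Code.evaln s (Denumerable.ofNat Nat.Partrec.Code e) n).isSome = true

@[fun_prop]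
theorem primrecPred_wStage : PrimrecPred fun p : ℕ × ℕ × ℕ => WStage p.1 p.2.1 p.2.2 := by
  unfold WStage; fun_prop

theorem wEnum_iff_exists_wStage (e n : ℕ) : WEnum e n ↔ ∃ s, WStage e n s := by
  simp only [WEnum, WStage, Part.dom_iff_mem, Nat.Partrec.Code.evaln_complete,
    Option.isSome_iff_exists, Option.mem_def]
  exact exists_comm

theorem WStage.mono {e n s t : ℕ} (h : WStage e n s) (hst : s ≤ t) : WStage e n t := by
  obtain ⟨y, hy⟩ := Option.isSome_iff_exists.1 h
  exact Option.isSome_iff_exists.2 ⟨y, Nat.Partrec.Code.evaln_mono hst hy⟩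

theorem WStage.lt {e n s : ℕ} (h : WStage e n s) : n < s := by
  obtain ⟨y, hy⟩ := Option.isSome_iff_exists.1 h
  exact Nat.Partrec.Code.evaln_bound hy

/-! ### Strings -/

section Strings

variable {σ τ : List Bool} {X : ℕ → Bool}

@[simp]
theorem length_strPrefix (X : ℕ → Bool) (n : ℕ) : (strPrefix X n).length = n := by
  simp [strPrefix]

theorem isPrefixOf_iff : IsPrefixOf σ X ↔ strPrefix X σ.length = σ := by
  constructor
  · intro h
    refine List.ext_getElem (by simp) fun i _ hi => ?_
    simpa [strPrefix] using h ⟨i, hi⟩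
  · intro h i
    have hi : (strPrefix X σ.length)[(i : ℕ)]? = σ[(i : ℕ)]? := by rw [h]
    simpa [strPrefix] using hi

theorem isPrefixOf_strPrefix (X : ℕ → Bool) (n : ℕ) : IsPrefixOf (strPrefix X n) X := by
  rw [isPrefixOf_iff, length_strPrefix]

theorem take_strPrefix (X : ℕ → Bool) {m n : ℕ} (h : m ≤ n) :
    (strPrefix X n).take m = strPrefix X m := by
  simp [strPrefix, ← List.map_take, List.take_range, h]

theorem strPrefix_isPrefix (X : ℕ → Bool) {m n : ℕ} (h : m ≤ n) :
    strPrefix X m <+: strPrefix X n := by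
  rw [← take_strPrefix X h]
  exact List.take_prefix _ _

theorem IsPrefixOf.eq (h : IsPrefixOf σ X) : strPrefix X σ.length = σ :=
  isPrefixOf_iff.1 h

theorem isPrefix_strPrefix_iff {n : ℕ} :
    σ <+: strPrefix X n ↔ IsPrefixOf σ X ∧ σ.length ≤ n := by
  constructor
  · intro h
    have hlen : σ.length ≤ n := by simpa using h.length_le
    rw [List.prefix_iff_eq_take, take_strPrefix X hlen] at h
    exact ⟨isPrefixOf_iff.2 h.symm, hlen⟩
  · rintro ⟨h, hlen⟩
    rw [← h.eq]
    exact strPrefix_isPrefix X hlen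

theorem IsPrefixOf.of_isPrefix (h : IsPrefixOf τ X) (hστ : σ <+: τ) : IsPrefixOf σ X := by
  rw [← h.eq, isPrefix_strPrefix_iff] at hστ
  exact hστ.1

theorem IsPrefixOf.isPrefix_of_length_le (hσ : IsPrefixOf σ X) (hτ : IsPrefixOf τ X)
    (hlen : σ.length ≤ τ.length) : σ <+: τ := by
  rw [← hσ.eq, ← hτ.eq]
  exact strPrefix_isPrefix X hlen

theorem IsPrefixOf.isPrefix_or_isPrefix (hσ : IsPrefixOf σ X) (hτ : IsPrefixOf τ X) :
    σ <+: τ ∨ τ <+: σ :=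
  (le_total σ.length τ.length).imp (hσ.isPrefix_of_length_le hτ) (hτ.isPrefix_of_length_le hσ)

/-- The list of all binary strings of length `n`. -/
def strs : ℕ → List (List Bool)
  | 0 => [[]]
  | n + 1 => (strs n).map (List.cons false) ++ (strs n).map (List.cons true)

@[simp]
theorem mem_strs {n : ℕ} : σ ∈ strs n ↔ σ.length = n := by
  induction n generalizing σ with
  | zero => simp [strs, List.length_eq_zero_iff]
  | succ n ih =>
    rcases σ with - | ⟨_ | _, σ⟩ <;> simp [strs, ih]

theorem nodup_strs (n : ℕ) : (strs n).Nodup := by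
  induction n with
  | zero => simp [strs]
  | succ n ih =>
    refine List.Nodup.append (ih.map (List.cons_injective)) (ih.map (List.cons_injective)) ?_
    simp [List.disjoint_left]

@[fun_prop]
theorem primrec_strs : Primrec strs :=
  (show Primrec fun n => (Nat.rec [[]] (fun _ l => l.map (List.cons false) ++
    l.map (List.cons true)) n : List (List Bool)) by fun_prop).of_eq fun n => by
      induction n with
      | zero => rfl
      | succ n ih => simp only [ih, strs]

end Strings

/-! ### Oracle computations by stages -/

section Oracle

/-- The computation `Γ_e^α(n) = m` has converged, using only the finite oracle string `α` and
`|α|` steps of the enumeration of `Γ_e`. -/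
def OracleStage (e : ℕ) (α : List Bool) (n m : ℕ) : Prop :=
  ∃ k ≤ α.length, WStage e (Nat.pair (Encodable.encode (α.take k)) (Nat.pair n m)) α.length

@[fun_prop]
theorem primrecPred_oracleStage :
    PrimrecPred fun p : ℕ × List Bool × ℕ × ℕ => OracleStage p.1 p.2.1 p.2.2.1 p.2.2.2 := by
  unfold OracleStage; fun_prop

theorem OracleStage.mono {e n m : ℕ} {α β : List Bool} (h : OracleStage e α n m) (hαβ : α <+: β) :
    OracleStage e β n m := by
  obtain ⟨k, hk, hstage⟩ := h
  refine ⟨k, hk.trans hαβ.length_le, ?_⟩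
  have htake : β.take k = α.take k := by
    rw [List.prefix_iff_eq_take.1 hαβ, List.take_take, min_eq_left hk]
  exact htake ▸ hstage.mono hαβ.length_le

theorem OracleStage.lt_length {e n m : ℕ} {α : List Bool} (h : OracleStage e α n m) :
    n < α.length ∧ m < α.length := by
  obtain ⟨k, -, hstage⟩ := h
  have hnm := (Nat.right_le_pair _ _).trans_lt hstage.lt
  exact ⟨(Nat.left_le_pair n m).trans_lt hnm, (Nat.right_le_pair n m).trans_lt hnm⟩

theorem oracleComputes_iff_exists_oracleStage {e : ℕ} {X : ℕ → Bool} {n m : ℕ} :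
    OracleComputes e X n m ↔ ∃ s, OracleStage e (strPrefix X s) n m := by
  constructor
  · rintro ⟨σ, hσ, hW⟩
    obtain ⟨s, hs⟩ := (wEnum_iff_exists_wStage _ _).1 hW
    refine ⟨max σ.length s, σ.length, by simp, ?_⟩
    rw [take_strPrefix X (le_max_left _ _), hσ.eq, length_strPrefix]
    exact hs.mono (le_max_right _ _)
  · rintro ⟨s, k, hk, hstage⟩
    rw [length_strPrefix] at hk
    rw [take_strPrefix X hk] at hstage
    exact ⟨_, isPrefixOf_strPrefix X k, (wEnum_iff_exists_wStage _ _).2 ⟨_, hstage⟩⟩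

theorem exists_oracleComputes_iff {P : List Bool → ℕ → ℕ → Prop}
    (hP : PrimrecPred fun p : List Bool × ℕ × ℕ => P p.1 p.2.1 p.2.2) :
    ∃ e, ∀ X n m, OracleComputes e X n m ↔ ∃ s, P (strPrefix X s) n m := by
  obtain ⟨e, he⟩ := exists_wEnum_iff (Q := fun k _ => ∃ σ,
    Encodable.decode k.unpair.1 = some σ ∧ P σ k.unpair.2.unpair.1 k.unpair.2.unpair.2)
    (primrecPred_exists_eq_some (by fun_prop) (by fun_prop))
  refine ⟨e, fun X n m => ?_⟩
  simp only [OracleComputes, he, Nat.unpair_pair, Encodable.encodek, Option.some.injEq,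
    exists_eq_left', exists_const]
  constructor
  · rintro ⟨σ, hσ, h⟩
    exact ⟨σ.length, hσ.eq.symm ▸ h⟩
  · rintro ⟨s, h⟩
    exact ⟨_, isPrefixOf_strPrefix X s, h⟩

end Oracle

/-! ### Weights of strings and the Kraft inequality -/

/-- The weight `2⁻ⁿ` of a binary string of length `n`, as a real number. -/
noncomputable def wt (n : ℕ) : ℝ := 2⁻¹ ^ n

theorem wt_pos (n : ℕ) : 0 < wt n := by unfold wt; positivity

theorem wt_nonneg (n : ℕ) : 0 ≤ wt n := (wt_pos n).le

@[simp]
theorem wt_zero : wt 0 = 1 := pow_zero _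

theorem wt_add (m n : ℕ) : wt (m + n) = wt m * wt n := pow_add _ _ _

theorem wt_succ (n : ℕ) : wt (n + 1) = wt n / 2 := by
  rw [wt, pow_succ, ← wt, div_eq_mul_inv]

theorem wt_mul_two_pow (n : ℕ) : wt n * 2 ^ n = 1 := by
  rw [wt, ← mul_pow]; norm_num

theorem wt_eq_one_div (n : ℕ) : wt n = 1 / 2 ^ n := by simp [wt]

theorem wt_anti {m n : ℕ} (h : m ≤ n) : wt n ≤ wt m :=
  pow_le_pow_of_le_one (by norm_num) (by norm_num) h

theorem wt_le_one (n : ℕ) : wt n ≤ 1 := wt_zero ▸ wt_anti n.zero_le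

theorem sum_wt_succ_le_one (F : Finset ℕ) : ∑ n ∈ F, wt (n + 1) ≤ 1 := by
  have hpartial (N : ℕ) : ∑ n ∈ Finset.range N, wt (n + 1) = 1 - wt N := by
    induction N with
    | zero => simp
    | succ N ih => rw [Finset.sum_range_succ, ih, wt_succ]; ring
  have hsub : F ⊆ Finset.range (F.sup id + 1) := fun n hn =>
    Finset.mem_range_succ_iff.2 (Finset.le_sup (f := id) hn)
  refine (Finset.sum_le_sum_of_subset_of_nonneg hsub fun n _ _ => wt_nonneg _).trans ?_
  rw [hpartial]
  exact sub_le_self _ (wt_nonneg _)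

theorem two_pow_sub_eq {m n : ℕ} (h : n ≤ m) : (2 : ℝ) ^ (m - n) = 2 ^ m * wt n := by
  rw [pow_sub₀ _ two_ne_zero h, wt, inv_pow]

section Kraft

/-- The finite set of all binary strings of length `n`. -/
def strFinset (n : ℕ) : Finset (List Bool) := (strs n).toFinset

@[simp]
theorem mem_strFinset {n : ℕ} {σ : List Bool} : σ ∈ strFinset n ↔ σ.length = n := by
  simp [strFinset]

theorem card_strFinset (n : ℕ) : (strFinset n).card = 2 ^ n := by
  rw [strFinset, List.toFinset_card_of_nodup (nodup_strs n)]
  induction n with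
  | zero => rfl
  | succ n ih => simp [strs, ih, pow_succ, mul_two]

theorem card_filter_isPrefix_strFinset {σ : List Bool} {n : ℕ} (h : σ.length ≤ n) :
    ((strFinset n).filter fun ρ => σ <+: ρ).card = 2 ^ (n - σ.length) := by
  have himage : ((strFinset n).filter fun ρ => σ <+: ρ) =
      (strFinset (n - σ.length)).image (σ ++ ·) := by
    ext ρ
    simp only [Finset.mem_filter, Finset.mem_image, mem_strFinset]
    constructor
    · rintro ⟨hlen, τ, rfl⟩
      exact ⟨τ, by simp at hlen; omega, rfl⟩
    · rintro ⟨τ, hlen, rfl⟩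
      exact ⟨by simp; omega, List.prefix_append _ _⟩
  rw [himage, Finset.card_image_of_injective _ (List.append_right_injective σ), card_strFinset]

theorem sum_wt_length_eq {F : Finset (List Bool)} {n : ℕ} (hn : ∀ σ ∈ F, σ.length ≤ n)
    (hF : PrefixFreeSet (F : Set (List Bool))) :
    ∑ σ ∈ F, wt σ.length = wt n * ((strFinset n).filter fun ρ => ∃ σ ∈ F, σ <+: ρ).card := by
  have hunion : ((strFinset n).filter fun ρ => ∃ σ ∈ F, σ <+: ρ) =
      F.biUnion fun σ => (strFinset n).filter fun ρ => σ <+: ρ := by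
    ext ρ; simp only [Finset.mem_filter, Finset.mem_biUnion]; tauto
  have hdisj : (F : Set (List Bool)).PairwiseDisjoint
      fun σ => (strFinset n).filter fun ρ => σ <+: ρ := by
    intro σ hσ τ hτ hne
    refine Finset.disjoint_left.2 fun ρ hσρ hτρ => hne ?_
    rcases List.prefix_or_prefix_of_prefix (Finset.mem_filter.1 hσρ).2
      (Finset.mem_filter.1 hτρ).2 with h | h
    · exact hF _ hσ _ hτ h
    · exact (hF _ hτ _ hσ h).symm
  rw [hunion, Finset.card_biUnion hdisj]
  push_cast
  rw [Finset.mul_sum]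
  refine Finset.sum_congr rfl fun σ hσ => ?_
  rw [card_filter_isPrefix_strFinset (hn σ hσ), Nat.cast_pow, Nat.cast_ofNat,
    two_pow_sub_eq (hn σ hσ), ← mul_assoc, wt_mul_two_pow, one_mul]

theorem PrefixFreeSet.sum_wt_length_le_one {F : Finset (List Bool)}
    (hF : PrefixFreeSet (F : Set (List Bool))) : ∑ σ ∈ F, wt σ.length ≤ 1 := by
  rw [sum_wt_length_eq (fun σ hσ => Finset.le_sup (f := List.length) hσ) hF,
    ← wt_mul_two_pow (F.sup List.length)]
  refine mul_le_mul_of_nonneg_left ?_ (wt_nonneg _)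
  exact_mod_cast (Finset.card_filter_le _ _).trans_eq (card_strFinset _)

/-- The total weight `∑ 2⁻ᵃ` over the entries `a` of a list. -/
noncomputable def wtSum (l : List ℕ) : ℝ := (l.map wt).sum

@[simp]
theorem wtSum_nil : wtSum [] = 0 := by simp [wtSum]

@[simp]
theorem wtSum_cons (a : ℕ) (l : List ℕ) : wtSum (a :: l) = wt a + wtSum l := by simp [wtSum]

@[simp]
theorem wtSum_append (l m : List ℕ) : wtSum (l ++ m) = wtSum l + wtSum m := by simp [wtSum]

@[simp]
theorem wtSum_replicate (n a : ℕ) : wtSum (List.replicate n a) = n * wt a := by simp [wtSum]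

theorem wtSum_flatMap {ι : Type*} (l : List ι) (f : ι → List ℕ) :
    wtSum (l.flatMap f) = (l.map fun a => wtSum (f a)).sum := by
  induction l with
  | nil => simp
  | cons a l ih => simp [ih]

theorem wtSum_nonneg (l : List ℕ) : 0 ≤ wtSum l :=
  List.sum_nonneg <| List.forall_mem_map.2 fun a _ => wt_nonneg a

theorem wtSum_mul_two_pow {l : List ℕ} {N : ℕ} (h : ∀ a ∈ l, a ≤ N) :
    wtSum l * 2 ^ N = ((l.map fun a => 2 ^ (N - a)).sum : ℕ) := by
  induction l with
  | nil => simp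
  | cons a l ih =>
    obtain ⟨ha, hl⟩ := List.forall_mem_cons.1 h
    simp only [wtSum_cons, List.map_cons, List.sum_cons, Nat.cast_add, Nat.cast_pow,
      Nat.cast_ofNat, add_mul, ih hl, two_pow_sub_eq ha, mul_comm]

-- Both sums are multiplied by a common power of two, which turns the comparison into one in `ℕ`.
@[fun_prop]
theorem primrecPred_wtSum_le {α : Type*} [Primcodable α] {f g : α → List ℕ} (hf : Primrec f)
    (hg : Primrec g) : PrimrecPred fun a => wtSum (f a) ≤ wtSum (g a) := by
  let N (a : α) : ℕ := (f a).sum + (g a).sum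
  refine (show PrimrecPred fun a => ((f a).map fun x => 2 ^ (N a - x)).sum ≤
    ((g a).map fun x => 2 ^ (N a - x)).sum by fun_prop).of_eq fun a => ?_
  rw [← Nat.cast_le (α := ℝ),
    ← wtSum_mul_two_pow fun x hx => (List.le_sum_of_mem hx).trans (Nat.le_add_right _ _),
    ← wtSum_mul_two_pow fun x hx => (List.le_sum_of_mem hx).trans (Nat.le_add_left _ _)]
  exact mul_le_mul_iff_left₀ (by positivity)

end Kraft

/-! ### The Kraft–Chaitin theorem -/

section KraftChaitin

/-- The natural number with binary expansion `σ`, most significant digit first. -/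
def binVal (σ : List Bool) : ℕ := σ.foldl (fun v b => 2 * v + b.toNat) 0

@[fun_prop]
theorem primrec_binVal : Primrec binVal := by
  have hbit : Primrec Bool.toNat := Primrec.dom_bool _
  exact Primrec.list_foldl (g := fun _ => 0) (h := fun _ (p : ℕ × Bool) => 2 * p.1 + p.2.toNat)
    Primrec.id
    (by fun_prop) (show Primrec fun p : List Bool × ℕ × Bool => 2 * p.2.1 + p.2.2.toNat
      by fun_prop)

theorem binVal_concat (σ : List Bool) (b : Bool) : binVal (σ ++ [b]) = 2 * binVal σ + b.toNat := by
  simp [binVal]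

theorem exists_binVal_eq {n v : ℕ} (h : v < 2 ^ n) :
    ∃ σ : List Bool, σ.length = n ∧ binVal σ = v := by
  induction n generalizing v with
  | zero => exact ⟨[], rfl, by simp at h; simp [binVal, h]⟩
  | succ n ih =>
    obtain ⟨σ, hlen, hval⟩ := ih (v := v / 2) (by omega)
    refine ⟨σ ++ [decide (v % 2 = 1)], by simp [hlen], ?_⟩
    rw [binVal_concat, hval]
    rcases Nat.mod_two_eq_zero_or_one v with hv | hv <;> simp [hv] <;> omega

/-- The left endpoint `0.σ` of the dyadic interval of the string `σ`. -/
noncomputable def binLeft (σ : List Bool) : ℝ := binVal σ * wt σ.length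

theorem binLeft_concat (σ : List Bool) (b : Bool) :
    binLeft (σ ++ [b]) = binLeft σ + b.toNat * wt (σ.length + 1) := by
  simp only [binLeft, binVal_concat, List.length_append, List.length_singleton, wt_succ]
  push_cast
  ring

theorem binLeft_mono {σ τ : List Bool} (h : σ <+: τ) : binLeft σ ≤ binLeft τ := by
  obtain ⟨ρ, rfl⟩ := h
  induction ρ using List.reverseRecOn with
  | nil => simp
  | append_singleton ρ b ih =>
    rw [← List.append_assoc, binLeft_concat]
    exact ih.trans (le_add_of_nonneg_right (mul_nonneg (Nat.cast_nonneg _) (wt_nonneg _)))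

theorem binLeft_add_wt_anti {σ τ : List Bool} (h : σ <+: τ) :
    binLeft τ + wt τ.length ≤ binLeft σ + wt σ.length := by
  obtain ⟨ρ, rfl⟩ := h
  induction ρ using List.reverseRecOn with
  | nil => simp
  | append_singleton ρ b ih =>
    have hbit : (b.toNat : ℝ) ≤ 1 := by exact_mod_cast Bool.toNat_le b
    have hmul := mul_le_mul_of_nonneg_right hbit (wt_nonneg ((σ ++ ρ).length + 1))
    have hhalf := wt_succ (σ ++ ρ).length
    have hlen : (σ ++ ρ ++ [b]).length = (σ ++ ρ).length + 1 := List.length_append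
    rw [← List.append_assoc, binLeft_concat, hlen]
    linarith

theorem exists_binLeft_mem {p : ℝ} {k : ℕ} (hp : 0 ≤ p) (hpk : p + wt k ≤ 1) :
    ∃ σ : List Bool, σ.length = k + 1 ∧ p ≤ binLeft σ ∧
      binLeft σ + wt (k + 1) ≤ p + wt k := by
  set v := ⌈p * 2 ^ (k + 1)⌉₊
  have hpos := wt_pos (k + 1)
  have hscale : p * 2 ^ (k + 1) * wt (k + 1) = p := by
    rw [mul_assoc, mul_comm (2 ^ (k + 1)), wt_mul_two_pow, mul_one]
  have hlower : p ≤ v * wt (k + 1) := by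
    simpa only [hscale] using mul_le_mul_of_nonneg_right (Nat.le_ceil (p * 2 ^ (k + 1))) hpos.le
  have hupper : v * wt (k + 1) < p + wt (k + 1) := by
    simpa only [add_mul, hscale, one_mul] using
      mul_lt_mul_of_pos_right (Nat.ceil_lt_add_one (by positivity : 0 ≤ p * 2 ^ (k + 1))) hpos
  have hhalf := wt_succ k
  have hv : v < 2 ^ (k + 1) := by
    have hmul : (v : ℝ) * wt (k + 1) < 2 ^ (k + 1) * wt (k + 1) := by
      rw [mul_comm (2 ^ (k + 1)), wt_mul_two_pow]; linarith
    exact_mod_cast lt_of_mul_lt_mul_right hmul hpos.le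
  obtain ⟨σ, hlen, hval⟩ := exists_binVal_eq hv
  refine ⟨σ, hlen, ?_⟩
  rw [binLeft, hlen, hval]
  exact ⟨hlower, by linarith⟩

variable {req : ℕ → Option (ℕ × ℕ)}

/-- The lengths requested before stage `s` by a sequence `req` of Kraft–Chaitin requests `(x, k)`,
each asking for a description of `x` of length about `k`. -/
def requestLengths (req : ℕ → Option (ℕ × ℕ)) (s : ℕ) : List ℕ :=
  (List.range s).flatMap fun t => ((req t).map Prod.snd).toList

theorem requestLengths_succ (s : ℕ) :
    requestLengths req (s + 1) = requestLengths req s ++ ((req s).map Prod.snd).toList := by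
  simp [requestLengths, List.range_succ]

theorem wtSum_requestLengths_succ {s x k : ℕ} (hs : req s = some (x, k)) :
    wtSum (requestLengths req (s + 1)) = wtSum (requestLengths req s) + wt k := by
  simp [requestLengths_succ, hs]

theorem wtSum_requestLengths_mono {s t : ℕ} (h : s ≤ t) :
    wtSum (requestLengths req s) ≤ wtSum (requestLengths req t) := by
  refine monotone_nat_of_le_succ (f := fun s => wtSum (requestLengths req s)) (fun s => ?_) h
  rw [requestLengths_succ, wtSum_append]
  exact le_add_of_nonneg_right (wtSum_nonneg _)

/-- The dyadic interval of `σ` lies in the interval of length `2⁻ᵏ` which the request made at stage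
`s` reserves, namely the one to the right of all intervals reserved before. A string of length
`k + 1` always fits in, even though the reserved interval need not be dyadic. -/
def Allocated (req : ℕ → Option (ℕ × ℕ)) (σ : List Bool) (s k : ℕ) : Prop :=
  σ.length = k + 1 ∧ wtSum (requestLengths req s) ≤ wtSum (List.replicate (binVal σ) σ.length) ∧
    wtSum (List.replicate (binVal σ + 1) σ.length) ≤ wtSum (k :: requestLengths req s)

theorem allocated_iff {σ : List Bool} {s k : ℕ} : Allocated req σ s k ↔
    σ.length = k + 1 ∧ wtSum (requestLengths req s) ≤ binLeft σ ∧
      binLeft σ + wt σ.length ≤ wtSum (requestLengths req s) + wt k := by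
  simp only [Allocated, wtSum_replicate, wtSum_cons, Nat.cast_succ, add_mul, one_mul, binLeft,
    add_comm (wt k)]

theorem primrecPred_allocated (hreq : Primrec req) :
    PrimrecPred fun p : List Bool × ℕ × ℕ => Allocated req p.1 p.2.1 p.2.2 := by
  unfold Allocated requestLengths; fun_prop

theorem Allocated.stage_unique {σ τ : List Bool} {s t x y k l : ℕ} (hσ : Allocated req σ s k)
    (hτ : Allocated req τ t l) (hs : req s = some (x, k)) (ht : req t = some (y, l))
    (hστ : σ <+: τ) : s = t := by
  rw [allocated_iff] at hσ hτ
  have hleft := binLeft_mono hστ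
  have hright := binLeft_add_wt_anti hστ
  have hpos := wt_pos τ.length
  have hs_succ := wtSum_requestLengths_succ hs
  have ht_succ := wtSum_requestLengths_succ ht
  rcases lt_trichotomy s t with hlt | heq | hlt
  · linarith [wtSum_requestLengths_mono (req := req) (Nat.succ_le_of_lt hlt)]
  · exact heq
  · linarith [wtSum_requestLengths_mono (req := req) (Nat.succ_le_of_lt hlt)]

theorem kraft_chaitin (hreq : Primrec req) (hsum : ∀ s, wtSum (requestLengths req s) ≤ 1) :
    ∃ e, PrefixFreeMachine e ∧ ∀ s x k, req s = some (x, k) →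
      ∃ σ : List Bool, σ.length = k + 1 ∧
        x ∈ (Denumerable.ofNat Nat.Partrec.Code e).eval (Encodable.encode σ) := by
  have hmatch : PrimrecPred fun q : ((ℕ × ℕ × ℕ) × List Bool) × ℕ × ℕ =>
      q.2.1 = q.1.1.2.2 ∧ Allocated req q.1.2 q.1.1.2.1 q.2.2 :=
    .and (by fun_prop) ((primrecPred_allocated hreq).comp
      (f := fun q : ((ℕ × ℕ × ℕ) × List Bool) × ℕ × ℕ => (q.1.2, q.1.1.2.1, q.2.2)) (by fun_prop))
  obtain ⟨c, hc⟩ := exists_code_mem_eval_iff (G := fun n s x => ∃ σ, Encodable.decode n = some σ ∧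
      ∃ p, req s = some p ∧ p.1 = x ∧ Allocated req σ s p.2)
    (primrecPred_exists_eq_some (by fun_prop) (primrecPred_exists_eq_some (by fun_prop) hmatch))
    (by
      rintro n s t _ _ ⟨σ, hσ, ⟨x, k⟩, hs, rfl, hk⟩ ⟨τ, hτ, ⟨y, l⟩, ht, rfl, hl⟩
      cases hσ.symm.trans hτ
      cases hk.stage_unique hl hs ht (List.prefix_refl σ)
      cases hs.symm.trans ht
      rfl)
  have heval : ∀ σ x, x ∈ c.eval (Encodable.encode σ) ↔
      ∃ s k, req s = some (x, k) ∧ Allocated req σ s k := by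
    intro σ x
    simp only [hc, Encodable.encodek, Option.some.injEq, exists_eq_left', Prod.exists]
    exact ⟨fun ⟨s, _, k, hs, hx, hk⟩ => ⟨s, k, hx ▸ hs, hk⟩,
      fun ⟨s, k, hs, hk⟩ => ⟨s, x, k, hs, rfl, hk⟩⟩
  refine ⟨Encodable.encode c, fun σ hσ τ hτ hστ => ?_, fun s x k hs => ?_⟩
  · simp only [machineDom, Denumerable.ofNat_encode, Set.mem_ofPred_eq, Part.dom_iff_mem,
      heval] at hσ hτ
    obtain ⟨x, s, k, hs, hk⟩ := hσ
    obtain ⟨y, t, l, ht, hl⟩ := hτ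
    cases hk.stage_unique hl hs ht hστ
    cases hs.symm.trans ht
    exact hστ.eq_of_length (hk.1.trans hl.1.symm)
  · obtain ⟨σ, hlen, hleft, hright⟩ := exists_binLeft_mem (wtSum_nonneg _)
      ((wtSum_requestLengths_succ hs).symm.trans_le (hsum (s + 1)))
    rw [Denumerable.ofNat_encode]
    exact ⟨σ, hlen, (heval σ x).2 ⟨s, k, hs, allocated_iff.2 ⟨hlen, hleft, hlen ▸ hright⟩⟩⟩

end KraftChaitin

/-! ### Kolmogorov complexity by stages -/

section Complexity

theorem Kcpx_le {e : ℕ} {σ : List Bool} {x : ℕ} (h : PrefixFreeMachine e)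
    (hx : x ∈ (Denumerable.ofNat Nat.Partrec.Code e).eval (Encodable.encode σ)) :
    Kcpx x ≤ σ.length + 2 * e + 2 :=
  Nat.sInf_le ⟨e, σ, h, hx, rfl⟩

theorem exists_program_length_eq_Kcpx (x : ℕ) : ∃ e, ∃ σ : List Bool, PrefixFreeMachine e ∧
    x ∈ (Denumerable.ofNat Nat.Partrec.Code e).eval (Encodable.encode σ) ∧
    Kcpx x = σ.length + 2 * e + 2 := by
  let req (s : ℕ) : Option (ℕ × ℕ) := if s = 0 then some (x, 0) else none
  have hlengths : ∀ s, requestLengths req s = if s = 0 then [] else [0] := by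
    intro s
    induction s with
    | zero => rfl
    | succ s ih => rw [requestLengths_succ, ih]; by_cases hs : s = 0 <;> simp [req, hs]
  obtain ⟨e, he, hreq⟩ := kraft_chaitin (req := req) (by fun_prop)
    (fun s => by rw [hlengths]; split_ifs <;> simp)
  obtain ⟨σ, -, hσ⟩ := hreq 0 x 0 rfl
  exact Nat.sInf_mem (s := {k | ∃ e, ∃ σ : List Bool, PrefixFreeMachine e ∧
    x ∈ (Denumerable.ofNat Nat.Partrec.Code e).eval (Encodable.encode σ) ∧
    k = σ.length + 2 * e + 2}) ⟨_, e, σ, he, hσ, rfl⟩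

/-- The part of the domain of the `e`-th machine which shows up within `s` steps is prefix-free. -/
def PrefixFreeStage (e s : ℕ) : Prop :=
  ¬ ∃ m < s, ∃ n < s, ∃ σ ∈ strs m, ∃ τ ∈ strs n,
    (WStage e (Encodable.encode σ) s ∧ WStage e (Encodable.encode τ) s) ∧ σ <+: τ ∧ ¬ σ = τ

/-- `π` is a program for `x` on the `e`-th machine, which looks prefix-free so far, at stage `s`. -/
def ProgramStage (s e : ℕ) (π : List Bool) (x : ℕ) : Prop :=
  Nat.Partrec.Code.evaln s (Denumerable.ofNat Nat.Partrec.Code e) (Encodable.encode π) = some x ∧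
    PrefixFreeStage e s

/-- By stage `s` we have seen a program witnessing `K(x) ≤ k`. The machine executing it may turn out
not to be prefix-free at a later stage; this does not affect the Kraft inequality. -/
def KcpxLeStage (s x k : ℕ) : Prop :=
  ∃ t ≤ s, ∃ e ≤ k, ∃ n < t, ∃ π ∈ strs n, n + 2 * e + 2 ≤ k ∧ ProgramStage t e π x

@[fun_prop]
theorem primrecPred_kcpxLeStage :
    PrimrecPred fun p : ℕ × ℕ × ℕ => KcpxLeStage p.1 p.2.1 p.2.2 := by
  unfold KcpxLeStage ProgramStage PrefixFreeStage; fun_prop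

theorem KcpxLeStage.mono {s t x k : ℕ} (h : KcpxLeStage s x k) (hst : s ≤ t) :
    KcpxLeStage t x k := by
  obtain ⟨r, hr, h⟩ := h
  exact ⟨r, hr.trans hst, h⟩

theorem exists_kcpxLeStage {x k : ℕ} (h : Kcpx x ≤ k) : ∃ s, KcpxLeStage s x k := by
  obtain ⟨e, σ, hpf, hx, hk⟩ := exists_program_length_eq_Kcpx x
  obtain ⟨s, hs⟩ := Nat.Partrec.Code.evaln_complete.1 hx
  have heval := Nat.Partrec.Code.evaln_mono (Nat.le_add_right s (σ.length + 1)) hs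
  refine ⟨s + (σ.length + 1), _, le_rfl, e, by omega, σ.length, by omega, σ, mem_strs.2 rfl,
    by omega, heval, ?_⟩
  rintro ⟨_, _, _, _, π, _, τ, _, ⟨hπ, hτ⟩, hprefix, hne⟩
  exact hne (hpf π ((wEnum_iff_exists_wStage _ _).2 ⟨_, hπ⟩)
    τ ((wEnum_iff_exists_wStage _ _).2 ⟨_, hτ⟩) hprefix)

theorem ProgramStage.unique_of_isPrefix {s t e x y : ℕ} {π ρ : List Bool}
    (hπ : ProgramStage s e π x) (hρ : ProgramStage t e ρ y) (hπs : π.length < s)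
    (hρt : ρ.length < t) (h : π <+: ρ) : x = y := by
  have hπW : WStage e (Encodable.encode π) s := by simp [WStage, hπ.1]
  have hρW : WStage e (Encodable.encode ρ) t := by simp [WStage, hρ.1]
  obtain rfl : π = ρ := by
    by_contra hne
    rcases le_total s t with hst | hts
    · exact hρ.2 ⟨_, hπs.trans_le hst, _, hρt, _, mem_strs.2 rfl, _, mem_strs.2 rfl,
        ⟨hπW.mono hst, hρW⟩, h, hne⟩
    · exact hπ.2 ⟨_, hπs, _, hρt.trans_le hts, _, mem_strs.2 rfl, _, mem_strs.2 rfl,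
        ⟨hπW, hρW.mono hts⟩, h, hne⟩
  exact Part.mem_unique (Nat.Partrec.Code.evaln_sound hπ.1) (Nat.Partrec.Code.evaln_sound hρ.1)

theorem isPrefix_of_replicate_append_isPrefix {d e : ℕ} {π ρ : List Bool}
    (h : List.replicate d true ++ false :: π <+: List.replicate e true ++ false :: ρ) :
    d = e ∧ π <+: ρ := by
  induction d generalizing e with
  | zero => cases e <;> simp_all [List.replicate_succ]
  | succ d ih =>
    cases e with
    | zero => simp [List.replicate_succ] at h
    | succ e => exact (ih (e := e) (by simpa [List.replicate_succ] using h)).imp (by omega) id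

-- The strings `1ᵉ0π` with `π` a program on the `e`-th machine form a single prefix-free set.
theorem sum_wt_le_one_of_kcpxLeStage {ι : Type*} {T : Finset ι} {x k : ι → ℕ} {s : ℕ}
    (hx : Set.InjOn x T) (h : ∀ i ∈ T, KcpxLeStage s (x i) (k i)) : ∑ i ∈ T, wt (k i) ≤ 1 := by
  classical
  choose! t _ e _ n hnt π hπ hk hprog using h
  let code (i : ι) : List Bool := List.replicate (e i) true ++ false :: π i
  have hunique : ∀ i ∈ T, ∀ j ∈ T, code i <+: code j → i = j := by
    intro i hi j hj hij
    obtain ⟨he, hprefix⟩ := isPrefix_of_replicate_append_isPrefix hij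
    have hlen (l) (hl : l ∈ T) : (π l).length < t l := (mem_strs.1 (hπ l hl)).trans_lt (hnt l hl)
    exact hx hi hj <|
      (hprog i hi).unique_of_isPrefix (he ▸ hprog j hj) (hlen i hi) (hlen j hj) hprefix
  have hinj : Set.InjOn code T := fun i hi j hj hij => hunique i hi j hj (hij ▸ List.prefix_refl _)
  have hpf : PrefixFreeSet (T.image code : Set (List Bool)) := by
    simp only [PrefixFreeSet, Finset.coe_image, Set.forall_mem_image]
    exact fun i hi j hj hij => congrArg code (hunique i hi j hj hij)
  calc ∑ i ∈ T, wt (k i) ≤ ∑ i ∈ T, wt (code i).length := by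
        refine Finset.sum_le_sum fun i hi => wt_anti ?_
        have hlen := mem_strs.1 (hπ i hi)
        have := hk i hi
        simp only [code, List.length_append, List.length_replicate, List.length_cons]
        omega
    _ = ∑ σ ∈ T.image code, wt σ.length := (Finset.sum_image (f := fun σ => wt σ.length) hinj).symm
    _ ≤ 1 := hpf.sum_wt_length_le_one

end Complexity

/-! ### The covering theorem for `K`-trivial oracles -/

/-- The items in `S` have total weight `∑ 2 ^ (-size x)` at most `C`. -/
def WeightLE {β : Type*} (size : β → ℕ) (S : β → Prop) (C : ℝ) : Prop :=
  ∀ F : Finset β, (∀ x ∈ F, S x) → ∑ x ∈ F, wt (size x) ≤ C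

/-- `W` enumerates a c.e. set of items by stages: `W s x` says that `x` has appeared by stage
`s`. -/
structure IsEnumeration {β : Type*} [Primcodable β] (W : ℕ → β → Prop) : Prop where
  primrecRel : PrimrecRel W
  monotone : Monotone W

/-- A set of weighted items, uniformly c.e. in an oracle: an oracle enumerates the valid items `x`
whose use `use x` it extends, and `x` has weight `2 ^ (-size x)`. -/
structure OracleItems (β : Type*) [Primcodable β] where
  Valid : β → Prop
  use : β → List Bool
  size : β → ℕ
  primrecPred_valid : PrimrecPred Valid
  primrec_use : Primrec use
  primrec_size : Primrec size

namespace OracleItems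

variable {β : Type*} [Primcodable β]

attribute [fun_prop] primrecPred_valid primrec_use primrec_size

/-- The items enumerated by the oracle `A`. -/
def Enumerated (D : OracleItems β) (A : ℕ → Bool) (x : β) : Prop :=
  D.Valid x ∧ IsPrefixOf (D.use x) A

/-- A node of the decanter tree, listed from the node up to the root. An entry `(x, t)` is the
`t`-th copy of the item `x`, of which there are `2 ^ (encode x + 1)`. -/
abbrev Node (β : Type*) := List (β × ℕ)

/-- The event `(ν, false)` is the start of the procedure at the node `ν`, and `(ν, true)` is its
halting. -/
abbrev Event (β : Type*) := Node β × Bool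

variable (D : OracleItems β) (b : ℕ)

/-- The procedure at `ν` has the amount `2 ^ (-cost b ν)` at its disposal. The parameter `b` is a
guess at the constant by which the oracle is `K`-trivial. The overhead `2 * b + 7` per level is
chosen so that it wastes at most `1 / 16` of the amount over the depth of the tree. -/
def cost (ν : Node β) : ℕ :=
  b + 1 + (ν.map fun p => 2 * b + 7 + (Encodable.encode p.1 + 1) + D.size p.1).sum

/-- The longest use along the node `ν`; the procedure at `ν` bets that the oracle extends it. -/
def base (ν : Node β) : List Bool :=
  ν.foldr (fun p σ => if σ.length ≤ (D.use p.1).length then D.use p.1 else σ) []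

/-- The length whose complexity is lowered on behalf of the leaf `κ`; distinct pairs `(b, κ)` get
distinct lengths. -/
def reqLength (κ : Node β) : ℕ :=
  Nat.pair (Nat.pair b (Encodable.encode κ)) (D.base κ).length

/-- The depth of the decanter tree. It is so large that the root cannot halt. -/
def depth : ℕ := 2 ^ (2 * b + 3)

/-- The root is always started; another node is started by its event. -/
def Started (Z : List (Event β)) (ν : Node β) : Prop := ν = [] ∨ (ν, false) ∈ Z

open Classical in
/-- The entries `p` such that the child `p :: ν` of `ν` has started (`c = false`) or halted
(`c = true`). -/
noncomputable def children (Z : List (Event β)) (c : Bool) (ν : Node β) : List (β × ℕ) :=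
  Z.filterMap fun ev => if ev.2 = c ∧ ev.1.tail = ν then ev.1.head? else none

/-- A node is active until its halted children have used up almost all of its amount. -/
def Active (Z : List (Event β)) (ν : Node β) : Prop :=
  ¬ wtSum [D.cost b ν] ≤ wtSum
    ((D.cost b ν + (2 * b + 7)) :: (children Z true ν).map fun p => D.cost b (p :: ν))

open Classical in
/-- The started leaves below `ν`. -/
noncomputable def leaves (Z : List (Event β)) (ν : Node β) : List (Node β) :=
  Z.filterMap fun ev =>
    if ev.2 = false ∧ ev.1.length = depth b ∧ ν <:+ ev.1 then some ev.1 else none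

open Classical in
/-- The strings of the length of the leaf `κ` that extend the base of `ν` and have by stage `s`
been described as cheaply as the initial segments of a `K`-trivial oracle. -/
noncomputable def paidStrings (s : ℕ) (ν κ : Node β) : List (List Bool) :=
  (strs (D.reqLength b κ)).filter fun σ =>
    D.base ν <+: σ ∧ KcpxLeStage s (Encodable.encode σ) (D.cost b κ + b)

/-- The payoff that lets `ν` halt: a fixed fraction of its amount for every level below it. -/
def HasPayoff (s : ℕ) (Z : List (Event β)) (ν : Node β) : Prop :=
  wtSum (List.replicate (depth b - ν.length + 1) (D.cost b ν + 2)) ≤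
    wtSum ((leaves b Z ν).flatMap fun κ =>
      List.replicate (D.paidStrings b s ν κ).length (D.cost b κ))

/-- The `t`-th copy of `x` may be a child of `ν`: the item is enumerated by an oracle that is
compatible with `ν`, and the earlier copies of `x` have halted. -/
structure IsChild (Z : List (Event β)) (ν : Node β) (x : β) (t : ℕ) : Prop where
  started : Started Z ν
  length_lt : ν.length < depth b
  valid : D.Valid x
  compatible : D.use x <+: D.base ν ∨ D.base ν <+: D.use x
  copy_lt : t < 2 ^ (Encodable.encode x + 1)
  halted_of_lt : ∀ t' < t, ((x, t') :: ν, true) ∈ Z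

/-- The node `κ` may start. -/
def CanStart (Z : List (Event β)) (κ : Node β) : Prop :=
  ¬ (κ, false) ∈ Z ∧ D.Active b Z κ.tail ∧
    ∃ p, κ.head? = some p ∧ D.IsChild b Z κ.tail p.1 p.2

/-- The node `ν` may halt. -/
def CanHalt (s : ℕ) (Z : List (Event β)) (ν : Node β) : Prop :=
  ¬ (ν, true) ∈ Z ∧ Started Z ν ∧ (ν.length = depth b ∨ ¬ D.Active b Z ν) ∧ D.HasPayoff b s Z ν

/-- The event `ev` may happen. -/
def CanOccur (s : ℕ) (Z : List (Event β)) (ev : Event β) : Prop :=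
  (ev.2 = false ∧ D.CanStart b Z ev.1) ∨ (ev.2 = true ∧ D.CanHalt b s Z ev.1)

open Classical in
/-- Stage `s` of the construction attends to the event coded by the first component of `s`, so
that every event is considered infinitely often. -/
noncomputable def advance (s : ℕ) (Z : List (Event β)) : List (Event β) :=
  ((Encodable.decode s.unpair.1 : Option (Event β)).map fun ev =>
    if D.CanOccur b s Z ev then ev :: Z else Z).getD Z

/-- The events that have happened before stage `s`, latest first. -/
noncomputable def stage (s : ℕ) : List (Event β) := Nat.rec [] (D.advance b) s

section Primrec

@[fun_prop]
theorem primrec_cost : Primrec fun p : ℕ × Node β => D.cost p.1 p.2 := by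
  unfold cost; fun_prop

@[fun_prop]
theorem primrec_base : Primrec D.base := by
  unfold base
  exact primrec_foldr (g := fun _ => []) Primrec.id (by fun_prop)
    (h := fun _ (p : β × ℕ) σ => if σ.length ≤ (D.use p.1).length then D.use p.1 else σ)
    (by fun_prop)

@[fun_prop]
theorem primrec_reqLength : Primrec fun p : ℕ × Node β => D.reqLength p.1 p.2 := by
  unfold reqLength; fun_prop

@[fun_prop]
theorem primrec_depth : Primrec depth := by
  unfold depth; fun_prop

@[fun_prop]
theorem primrecPred_started :
    PrimrecPred fun p : List (Event β) × Node β => Started p.1 p.2 := by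
  unfold Started; fun_prop

@[fun_prop]
theorem primrec_children :
    Primrec fun p : List (Event β) × Bool × Node β => children p.1 p.2.1 p.2.2 := by
  unfold children; fun_prop

@[fun_prop]
theorem primrec_leaves :
    Primrec fun p : ℕ × List (Event β) × Node β => leaves p.1 p.2.1 p.2.2 := by
  unfold leaves; fun_prop

@[fun_prop]
theorem primrecPred_active :
    PrimrecPred fun p : ℕ × List (Event β) × Node β => D.Active p.1 p.2.1 p.2.2 := by
  unfold Active; fun_prop

@[fun_prop]
theorem primrec_paidStrings :
    Primrec fun p : ℕ × ℕ × Node β × Node β => D.paidStrings p.1 p.2.1 p.2.2.1 p.2.2.2 := by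
  unfold paidStrings; fun_prop

@[fun_prop]
theorem primrecPred_hasPayoff :
    PrimrecPred fun p : ℕ × ℕ × List (Event β) × Node β =>
      D.HasPayoff p.1 p.2.1 p.2.2.1 p.2.2.2 := by
  unfold HasPayoff; fun_prop

@[fun_prop]
theorem primrecPred_isChild :
    PrimrecPred fun p : ℕ × List (Event β) × Node β × β × ℕ =>
      D.IsChild p.1 p.2.1 p.2.2.1 p.2.2.2.1 p.2.2.2.2 := by
  have halted : PrimrecPred fun p : ℕ × List (Event β) × Node β × β × ℕ =>
      ∀ t' < p.2.2.2.2, ((p.2.2.2.1, t') :: p.2.2.1, true) ∈ p.2.1 :=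
    primrecPred_forall_lt (by fun_prop) (by fun_prop)
  have rest : PrimrecPred fun p : ℕ × List (Event β) × Node β × β × ℕ =>
      Started p.2.1 p.2.2.1 ∧ p.2.2.1.length < depth p.1 ∧ D.Valid p.2.2.2.1 ∧
        (D.use p.2.2.2.1 <+: D.base p.2.2.1 ∨ D.base p.2.2.1 <+: D.use p.2.2.2.1) ∧
        p.2.2.2.2 < 2 ^ (Encodable.encode p.2.2.2.1 + 1) := by fun_prop
  exact (rest.and halted).of_eq fun p =>
    ⟨fun ⟨⟨h₁, h₂, h₃, h₄, h₅⟩, h₆⟩ => ⟨h₁, h₂, h₃, h₄, h₅, h₆⟩,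
      fun ⟨h₁, h₂, h₃, h₄, h₅, h₆⟩ => ⟨⟨h₁, h₂, h₃, h₄, h₅⟩, h₆⟩⟩

@[fun_prop]
theorem primrecPred_canStart :
    PrimrecPred fun p : ℕ × List (Event β) × Node β => D.CanStart p.1 p.2.1 p.2.2 := by
  have child : PrimrecPred fun p : ℕ × List (Event β) × Node β =>
      ∃ q, p.2.2.head? = some q ∧ D.IsChild p.1 p.2.1 p.2.2.tail q.1 q.2 :=
    primrecPred_exists_eq_some (by fun_prop) (by fun_prop)
  unfold CanStart; fun_prop

@[fun_prop]
theorem primrecPred_canOccur :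
    PrimrecPred fun p : ℕ × ℕ × List (Event β) × Event β =>
      D.CanOccur p.1 p.2.1 p.2.2.1 p.2.2.2 := by
  unfold CanOccur CanHalt; fun_prop

@[fun_prop]
theorem primrec_advance :
    Primrec fun p : ℕ × ℕ × List (Event β) => D.advance p.1 p.2.1 p.2.2 := by
  unfold advance; fun_prop

@[fun_prop]
theorem primrec_stage : Primrec fun p : ℕ × ℕ => D.stage p.1 p.2 := by
  unfold stage; fun_prop

end Primrec

section Stage

variable {D b}

theorem stage_succ (s : ℕ) : D.stage b (s + 1) = D.advance b s (D.stage b s) := rfl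

theorem advance_of_canOccur {s : ℕ} {Z : List (Event β)} {ev : Event β}
    (hev : Encodable.decode s.unpair.1 = some ev) (hocc : D.CanOccur b s Z ev) :
    D.advance b s Z = ev :: Z := by
  rw [advance, hev, Option.map_some, Option.getD_some, if_pos hocc]

variable (D b) in
theorem advance_eq (s : ℕ) (Z : List (Event β)) : D.advance b s Z = Z ∨
    ∃ ev, Encodable.decode s.unpair.1 = some ev ∧ D.CanOccur b s Z ev ∧
      D.advance b s Z = ev :: Z := by
  classical
  cases hev : (Encodable.decode s.unpair.1 : Option (Event β)) with
  | none => exact Or.inl (by rw [advance, hev, Option.map_none, Option.getD_none])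
  | some ev =>
    by_cases hocc : D.CanOccur b s Z ev
    · exact Or.inr ⟨ev, rfl, hocc, advance_of_canOccur hev hocc⟩
    · exact Or.inl (by rw [advance, hev, Option.map_some, Option.getD_some, if_neg hocc])

theorem stage_subset {s t : ℕ} (hst : s ≤ t) : D.stage b s ⊆ D.stage b t := by
  induction hst with
  | refl => exact List.Subset.refl _
  | step _ ih =>
    refine List.Subset.trans ih ?_
    rw [stage_succ]
    obtain h | ⟨ev, -, -, h⟩ := D.advance_eq b _ _ <;> rw [h]
    · exact List.Subset.refl _
    · exact List.subset_cons_self ev _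

theorem exists_canOccur_of_mem_stage {ev : Event β} {s : ℕ} (h : ev ∈ D.stage b s) :
    ∃ r < s, Encodable.decode r.unpair.1 = some ev ∧ D.CanOccur b r (D.stage b r) ev := by
  induction s with
  | zero => exact absurd h List.not_mem_nil
  | succ s ih =>
    by_cases hs : ev ∈ D.stage b s
    · obtain ⟨r, hr, hocc⟩ := ih hs
      exact ⟨r, hr.trans (Nat.lt_succ_self s), hocc⟩
    · rw [stage_succ] at h
      obtain h' | ⟨ev', hev, hocc, h'⟩ := D.advance_eq b _ _ <;> rw [h'] at h
      · exact absurd h hs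
      · obtain rfl | h := List.mem_cons.1 h
        · exact ⟨s, Nat.lt_succ_self s, hev, hocc⟩
        · exact absurd h hs

theorem exists_mem_stage {ev : Event β} {s₀ : ℕ}
    (h : ∀ s ≥ s₀, ev ∉ D.stage b s → D.CanOccur b s (D.stage b s) ev) : ∃ s, ev ∈ D.stage b s := by
  by_contra! hnot
  set s := Nat.pair (Encodable.encode ev) s₀
  have hev : Encodable.decode s.unpair.1 = some ev := by simp [s]
  refine hnot (s + 1) ?_
  rw [stage_succ, advance_of_canOccur hev (h s (Nat.right_le_pair _ _) (hnot s))]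
  exact List.mem_cons_self

omit [Primcodable β] in
theorem Started.mono {Z Z' : List (Event β)} {ν : Node β} (h : Started Z ν) (hZ : Z ⊆ Z') :
    Started Z' ν :=
  h.imp id fun h => hZ h

theorem IsChild.mono {Z Z' : List (Event β)} {ν : Node β} {x : β} {t : ℕ}
    (h : D.IsChild b Z ν x t) (hZ : Z ⊆ Z') : D.IsChild b Z' ν x t :=
  { h with started := h.started.mono hZ, halted_of_lt := fun t' ht => hZ (h.halted_of_lt t' ht) }

theorem CanOccur.notMem {s : ℕ} {Z : List (Event β)} {ev : Event β} (h : D.CanOccur b s Z ev) :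
    ev ∉ Z := by
  obtain ⟨ν, c⟩ := ev
  obtain ⟨rfl, h⟩ | ⟨rfl, h⟩ := h
  exacts [h.1, h.1]

omit [Primcodable β] in
theorem mem_children {Z : List (Event β)} {c : Bool} {ν : Node β} {p : β × ℕ} :
    p ∈ children Z c ν ↔ (p :: ν, c) ∈ Z := by
  simp only [children, List.mem_filterMap, Option.ite_none_right_eq_some]
  constructor
  · rintro ⟨⟨κ, c'⟩, hκ, ⟨rfl, rfl⟩, hp⟩
    rwa [← List.eq_cons_of_mem_head? hp]
  · exact fun h => ⟨_, h, ⟨rfl, rfl⟩, rfl⟩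

omit [Primcodable β] in
theorem mem_leaves {Z : List (Event β)} {ν κ : Node β} :
    κ ∈ leaves b Z ν ↔ (κ, false) ∈ Z ∧ κ.length = depth b ∧ ν <:+ κ := by
  simp only [leaves, List.mem_filterMap, Option.ite_none_right_eq_some, Option.some.injEq]
  constructor
  · rintro ⟨⟨κ', c⟩, hκ, ⟨rfl, h⟩, rfl⟩
    exact ⟨hκ, h⟩
  · exact fun ⟨hκ, h⟩ => ⟨_, hκ, ⟨rfl, h⟩, rfl⟩

omit [Primcodable β] in
theorem nodup_children {Z : List (Event β)} (hZ : Z.Nodup) (c : Bool) (ν : Node β) :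
    (children Z c ν).Nodup := by
  refine hZ.filterMap ?_
  rintro ⟨κ, c₁⟩ ⟨κ', c₂⟩ p h h'
  rw [Option.mem_def, Option.ite_none_right_eq_some] at h h'
  obtain ⟨⟨rfl, rfl⟩, hp⟩ := h
  obtain ⟨⟨rfl, hκ⟩, hp'⟩ := h'
  dsimp only at hp hp' hκ
  rw [List.eq_cons_of_mem_head? hp, List.eq_cons_of_mem_head? hp', hκ]

omit [Primcodable β] in
theorem nodup_leaves {Z : List (Event β)} (hZ : Z.Nodup) (ν : Node β) :
    (leaves b Z ν).Nodup := by
  refine hZ.filterMap ?_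
  rintro ⟨κ, c₁⟩ ⟨κ', c₂⟩ p h h'
  rw [Option.mem_def, Option.ite_none_right_eq_some, Option.some.injEq] at h h'
  obtain ⟨⟨rfl, -⟩, rfl⟩ := h
  obtain ⟨⟨rfl, -⟩, rfl⟩ := h'
  rfl

open Classical in
/-- The total amount of the children of `ν` that have started (`c = false`) or halted
(`c = true`). -/
noncomputable def childWeight (D : OracleItems β) (b : ℕ) (Z : List (Event β)) (c : Bool)
    (ν : Node β) : ℝ :=
  ∑ p ∈ (children Z c ν).toFinset, wt (D.cost b (p :: ν))

open Classical in
/-- The total amount of the started leaves below `ν`. -/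
noncomputable def leafWeight (D : OracleItems β) (b : ℕ) (Z : List (Event β)) (ν : Node β) : ℝ :=
  ∑ κ ∈ (leaves b Z ν).toFinset, wt (D.cost b κ)

open Classical in
/-- `2 ^ b` times the weight of the descriptions of strings that extend the base of `ν`. -/
noncomputable def payoff (D : OracleItems β) (b s : ℕ) (Z : List (Event β)) (ν : Node β) : ℝ :=
  ∑ κ ∈ (leaves b Z ν).toFinset, (D.paidStrings b s ν κ).length * wt (D.cost b κ)

theorem active_iff {Z : List (Event β)} (hZ : Z.Nodup) {ν : Node β} : D.Active b Z ν ↔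
    D.childWeight b Z true ν + wt (D.cost b ν) * wt (2 * b + 7) < wt (D.cost b ν) := by
  classical
  rw [Active, not_le, wtSum_cons, wtSum_cons, wtSum_nil, add_zero, wtSum, List.map_map,
    childWeight, List.sum_toFinset _ (nodup_children hZ true ν), wt_add, add_comm]
  rfl

theorem hasPayoff_iff {Z : List (Event β)} (hZ : Z.Nodup) {s : ℕ} {ν : Node β} :
    D.HasPayoff b s Z ν ↔
      (depth b - ν.length + 1 : ℕ) * wt (D.cost b ν + 2) ≤ D.payoff b s Z ν := by
  classical
  simp only [HasPayoff, wtSum_replicate, wtSum_flatMap, payoff,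
    List.sum_toFinset _ (nodup_leaves hZ ν)]

theorem childWeight_mono {Z Z' : List (Event β)} (hZ : Z ⊆ Z') (c : Bool) (ν : Node β) :
    D.childWeight b Z c ν ≤ D.childWeight b Z' c ν := by
  classical
  refine Finset.sum_le_sum_of_subset_of_nonneg (fun p hp => ?_) fun _ _ _ => wt_nonneg _
  rw [List.mem_toFinset, mem_children] at hp ⊢
  exact hZ hp

theorem not_active_mono {Z Z' : List (Event β)} (hZ : Z ⊆ Z') (hnd : Z.Nodup) (hnd' : Z'.Nodup)
    {ν : Node β} (h : ¬ D.Active b Z ν) : ¬ D.Active b Z' ν := by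
  rw [active_iff hnd, not_lt] at h
  rw [active_iff hnd', not_lt]
  exact h.trans (add_le_add_left (childWeight_mono hZ true ν) _)

theorem paidStrings_sublist {s t : ℕ} (hst : s ≤ t) {μ ν : Node β} (hbase : D.base ν <+: D.base μ)
    (κ : Node β) : (D.paidStrings b s μ κ).Sublist (D.paidStrings b t ν κ) :=
  List.monotone_filter_right _ fun σ hσ => by
    simp only [decide_eq_true_eq] at hσ ⊢
    exact ⟨hbase.trans hσ.1, hσ.2.mono hst⟩

theorem payoff_mono {s t : ℕ} (hst : s ≤ t) {Z Z' : List (Event β)} (hZ : Z ⊆ Z') (ν : Node β) :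
    D.payoff b s Z ν ≤ D.payoff b t Z' ν := by
  classical
  have leaves_subset : (leaves b Z ν).toFinset ⊆ (leaves b Z' ν).toFinset := fun κ hκ => by
    rw [List.mem_toFinset, mem_leaves] at hκ ⊢
    exact ⟨hZ hκ.1, hκ.2⟩
  have length_le (κ : Node β) :=
    (paidStrings_sublist (D := D) (b := b) hst (List.prefix_refl (D.base ν)) κ).length_le
  refine (Finset.sum_le_sum fun κ _ => ?_).trans
    (Finset.sum_le_sum_of_subset_of_nonneg leaves_subset fun κ _ _ => ?_)
  · exact mul_le_mul_of_nonneg_right (mod_cast length_le κ) (wt_nonneg _)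
  · exact mul_nonneg (Nat.cast_nonneg _) (wt_nonneg _)

theorem cost_cons (p : β × ℕ) (ν : Node β) : D.cost b (p :: ν) =
    D.cost b ν + (2 * b + 7) + (Encodable.encode p.1 + 1) + D.size p.1 := by
  simp only [cost, List.map_cons, List.sum_cons]; ring

variable (D b) in
/-- What the construction guarantees about the events `Z` that have happened before stage `s`. -/
structure Invariant (s : ℕ) (Z : List (Event β)) : Prop where
  nodup : Z.Nodup
  root_notMem : ([], false) ∉ Z
  isChild : ∀ x t ν, ((x, t) :: ν, false) ∈ Z → D.IsChild b Z ν x t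
  started : ∀ ν, (ν, true) ∈ Z → Started Z ν
  not_active : ∀ ν, (ν, true) ∈ Z → ν.length = depth b ∨ ¬ D.Active b Z ν
  le_payoff : ∀ ν, (ν, true) ∈ Z →
    (depth b - ν.length + 1 : ℕ) * wt (D.cost b ν + 2) ≤ D.payoff b s Z ν
  childWeight_le : ∀ ν, D.childWeight b Z false ν ≤ wt (D.cost b ν)

theorem Invariant.advance_same {s : ℕ} {Z : List (Event β)} (h : D.Invariant b s Z) :
    D.Invariant b (s + 1) Z :=
  { h with
    le_payoff := fun ν hν => (h.le_payoff ν hν).trans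
      (payoff_mono s.le_succ (List.Subset.refl _) ν) }

theorem Invariant.halt {s : ℕ} {Z : List (Event β)} {ν : Node β} (h : D.Invariant b s Z)
    (hν : D.CanHalt b s Z ν) : D.Invariant b (s + 1) ((ν, true) :: Z) := by
  obtain ⟨hnew, hstart, hact, hpay⟩ := hν
  have hsub : Z ⊆ (ν, true) :: Z := List.subset_cons_self _ _
  have hnd := List.nodup_cons.2 ⟨hnew, h.nodup⟩
  have old_or_new {μ : Node β} (hμ : (μ, true) ∈ (ν, true) :: Z) : μ = ν ∨ (μ, true) ∈ Z := by
    simpa using hμ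
  refine ⟨hnd, by simpa using h.root_notMem, fun x t μ hμ => ?_, fun μ hμ => ?_, fun μ hμ => ?_,
    fun μ hμ => ?_, fun μ => ?_⟩
  · exact (h.isChild x t μ (by simpa using hμ)).mono hsub
  · obtain rfl | hμ := old_or_new hμ
    exacts [hstart.mono hsub, (h.started μ hμ).mono hsub]
  · obtain rfl | hμ := old_or_new hμ
    exacts [hact.imp_right (not_active_mono hsub h.nodup hnd),
      (h.not_active μ hμ).imp_right (not_active_mono hsub h.nodup hnd)]
  · refine le_trans ?_ (payoff_mono s.le_succ hsub μ)
    obtain rfl | hμ := old_or_new hμ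
    exacts [(hasPayoff_iff h.nodup).1 hpay, h.le_payoff μ hμ]
  · convert h.childWeight_le μ using 1
    refine Finset.sum_congr (Finset.ext fun p => ?_) fun _ _ => rfl
    simp only [List.mem_toFinset, mem_children, List.mem_cons, Prod.mk.injEq, Bool.false_eq_true,
      and_false, false_or]

/-- The started children of `ν` that have not halted carry distinct items, so that they bind only
a small part of the amount of `ν`. -/
theorem childWeight_false_le {Z : List (Event β)} {ν : Node β}
    (hZ : ∀ x t, ((x, t) :: ν, false) ∈ Z → D.IsChild b Z ν x t) :
    D.childWeight b Z false ν ≤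
      D.childWeight b Z true ν + wt (D.cost b ν) * wt (2 * b + 7) := by
  classical
  set started := (children Z false ν).toFinset
  set halted := (children Z true ν).toFinset
  have item_inj : Set.InjOn (fun p : β × ℕ => Encodable.encode p.1) ↑(started \ halted) := by
    rintro ⟨x, t⟩ h ⟨x', t'⟩ h' hx
    obtain rfl : x = x' := Encodable.encode_injective hx
    simp only [started, halted, Finset.coe_sdiff, Set.mem_sdiff, Finset.mem_coe, List.mem_toFinset,
      mem_children] at h h'
    rcases lt_trichotomy t t' with hlt | rfl | hlt
    · exact absurd ((hZ x t' h'.1).halted_of_lt t hlt) h.2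
    · rfl
    · exact absurd ((hZ x t h.1).halted_of_lt t' hlt) h'.2
  have unhalted : ∑ p ∈ started \ halted, wt (D.cost b (p :: ν)) ≤
      wt (D.cost b ν) * wt (2 * b + 7) := calc
    _ ≤ ∑ p ∈ started \ halted, wt (D.cost b ν + (2 * b + 7)) * wt (Encodable.encode p.1 + 1) := by
      refine Finset.sum_le_sum fun p _ => ?_
      rw [← wt_add, cost_cons]
      exact wt_anti (Nat.le_add_right _ _)
    _ = wt (D.cost b ν + (2 * b + 7)) *
        ∑ i ∈ (started \ halted).image (fun p => Encodable.encode p.1), wt (i + 1) := by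
      rw [Finset.sum_image item_inj, Finset.mul_sum]
    _ ≤ wt (D.cost b ν + (2 * b + 7)) :=
      mul_le_of_le_one_right (wt_nonneg _) (sum_wt_succ_le_one _)
    _ = wt (D.cost b ν) * wt (2 * b + 7) := wt_add _ _
  calc D.childWeight b Z false ν ≤ ∑ p ∈ halted ∪ (started \ halted), wt (D.cost b (p :: ν)) :=
      Finset.sum_le_sum_of_subset_of_nonneg
        (by rw [Finset.union_sdiff_self_eq_union]; exact Finset.subset_union_right)
        fun _ _ _ => wt_nonneg _
    _ = D.childWeight b Z true ν + ∑ p ∈ started \ halted, wt (D.cost b (p :: ν)) :=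
      Finset.sum_union Finset.disjoint_sdiff
    _ ≤ _ := by gcongr

theorem Invariant.start {s : ℕ} {Z : List (Event β)} {κ : Node β} (h : D.Invariant b s Z)
    (hκ : D.CanStart b Z κ) : D.Invariant b (s + 1) ((κ, false) :: Z) := by
  classical
  obtain ⟨hnew, hact, ⟨x, t⟩, hhead, hchild⟩ := hκ
  obtain ⟨ν, rfl⟩ : ∃ ν, κ = (x, t) :: ν := ⟨_, List.eq_cons_of_mem_head? hhead⟩
  rw [List.tail_cons] at hact hchild
  set Z' := ((x, t) :: ν, false) :: Z
  have hsub : Z ⊆ Z' := List.subset_cons_self _ _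
  have hnd : Z'.Nodup := List.nodup_cons.2 ⟨hnew, h.nodup⟩
  have isChild : ∀ x t μ, ((x, t) :: μ, false) ∈ Z' → D.IsChild b Z' μ x t := by
    intro x' t' μ hμ
    obtain heq | hμ := List.mem_cons.1 hμ
    · obtain ⟨⟨⟨rfl, rfl⟩, rfl⟩, -⟩ : ((x' = x ∧ t' = t) ∧ μ = ν) ∧ True := by simpa using heq
      exact hchild.mono hsub
    · exact (h.isChild x' t' μ hμ).mono hsub
  have old {μ : Node β} (hμ : (μ, true) ∈ Z') : (μ, true) ∈ Z := by simpa [Z'] using hμ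
  refine ⟨hnd, by simpa [Z'] using h.root_notMem, isChild, fun μ hμ => ?_, fun μ hμ => ?_,
    fun μ hμ => ?_, fun μ => ?_⟩
  · exact (h.started μ (old hμ)).mono hsub
  · exact (h.not_active μ (old hμ)).imp_right (not_active_mono hsub h.nodup hnd)
  · exact (h.le_payoff μ (old hμ)).trans (payoff_mono s.le_succ hsub μ)
  · by_cases hμ : μ = ν
    · subst hμ
      have halted_eq : D.childWeight b Z' true μ = D.childWeight b Z true μ :=
        Finset.sum_congr (Finset.ext fun p => by simp [Z', mem_children]) fun _ _ => rfl
      refine (childWeight_false_le fun x t => isChild x t μ).trans ?_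
      rw [halted_eq]
      exact ((active_iff h.nodup).1 hact).le
    · refine le_of_eq_of_le (Finset.sum_congr (Finset.ext fun p => ?_) fun _ _ => rfl)
        (h.childWeight_le μ)
      simp [Z', mem_children, hμ]

variable (D b) in
theorem invariant_stage (s : ℕ) : D.Invariant b s (D.stage b s) := by
  induction s with
  | zero =>
    refine ⟨List.nodup_nil, List.not_mem_nil, ?_, ?_, ?_, ?_, fun ν => ?_⟩
    iterate 4 exact fun _ => by simp [stage]
    simp [childWeight, children, stage, wt_nonneg]
  | succ s ih =>
    rw [stage_succ]
    obtain h | ⟨⟨ν, c⟩, -, ⟨rfl, hocc⟩ | ⟨rfl, hocc⟩, h⟩ := D.advance_eq b s (D.stage b s) <;>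
      rw [h]
    exacts [ih.advance_same, ih.start hocc, ih.halt hocc]

end Stage

section Tree

variable {D : OracleItems β} {b s : ℕ} {Z : List (Event β)}

theorem one_le_depth (b : ℕ) : 1 ≤ depth b := Nat.one_le_two_pow

theorem wt_overhead (b : ℕ) : (depth b : ℝ) * wt (2 * b + 7) = 1 / 16 := by
  rw [depth, show 2 * b + 7 = 2 * b + 3 + 4 from rfl, wt_add, Nat.cast_pow, Nat.cast_ofNat]
  linear_combination (norm := (rw [wt_eq_one_div 4]; ring)) wt 4 * wt_mul_two_pow (2 * b + 3)

theorem mul_wt_overhead_le {i : ℕ} (hi : i ≤ depth b) : (i : ℝ) * wt (2 * b + 7) ≤ 1 / 16 := by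
  rw [← wt_overhead b]
  exact mul_le_mul_of_nonneg_right (mod_cast hi) (wt_nonneg _)

theorem IsChild.base_isPrefix {ν : Node β} {x : β} {t : ℕ} (h : D.IsChild b Z ν x t) :
    D.base ν <+: D.base ((x, t) :: ν) := by
  change D.base ν <+: if (D.base ν).length ≤ (D.use x).length then D.use x else D.base ν
  split_ifs with hlen
  · obtain hpre | hpre := h.compatible
    · exact (hpre.eq_of_length_le hlen).symm ▸ List.prefix_refl _
    · exact hpre
  · exact List.prefix_refl _

theorem isPrefixOf_base_cons {A : ℕ → Bool} {x : β} {t : ℕ} {ν : Node β}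
    (hx : IsPrefixOf (D.use x) A) (hν : IsPrefixOf (D.base ν) A) :
    IsPrefixOf (D.base ((x, t) :: ν)) A := by
  change IsPrefixOf (if (D.base ν).length ≤ (D.use x).length then D.use x else D.base ν) A
  split_ifs <;> assumption

theorem IsChild.isPrefixOf_use {A : ℕ → Bool} {ν : Node β} {x : β} {t : ℕ}
    (h : D.IsChild b Z ν x t) (hA : IsPrefixOf (D.base ((x, t) :: ν)) A) :
    IsPrefixOf (D.use x) A := by
  change IsPrefixOf (if (D.base ν).length ≤ (D.use x).length then D.use x else D.base ν) A at hA
  split_ifs at hA with hlen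
  · exact hA
  · exact hA.of_isPrefix (h.compatible.resolve_right fun hpre => hlen hpre.length_le)

theorem length_base_le_reqLength (b : ℕ) (κ : Node β) :
    (D.base κ).length ≤ D.reqLength b κ := Nat.right_le_pair _ _

theorem reqLength_inj {b' : ℕ} {κ κ' : Node β} :
    D.reqLength b κ = D.reqLength b' κ' ↔ b = b' ∧ κ = κ' := by
  refine ⟨fun h => ?_, fun ⟨hb, hκ⟩ => by rw [hb, hκ]⟩
  obtain ⟨h, -⟩ := Nat.pair_eq_pair.1 h
  exact (Nat.pair_eq_pair.1 h).imp_right fun h => Encodable.encode_injective h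

theorem mem_paidStrings {ν κ : Node β} {σ : List Bool} :
    σ ∈ D.paidStrings b s ν κ ↔ σ.length = D.reqLength b κ ∧ D.base ν <+: σ ∧
      KcpxLeStage s (Encodable.encode σ) (D.cost b κ + b) := by
  simp only [paidStrings, List.mem_filter, mem_strs, decide_eq_true_eq]

theorem nodup_paidStrings (ν κ : Node β) : (D.paidStrings b s ν κ).Nodup :=
  (nodup_strs _).filter _

namespace Invariant

theorem started_of_halted (h : D.Invariant b s Z) {p : β × ℕ} {ν : Node β}
    (hp : (p :: ν, true) ∈ Z) : (p :: ν, false) ∈ Z :=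
  (h.started _ hp).resolve_left (List.cons_ne_nil _ _)

open Classical in
theorem children_subset (h : D.Invariant b s Z) (ν : Node β) :
    (children Z true ν).toFinset ⊆ (children Z false ν).toFinset := fun p hp => by
  rw [List.mem_toFinset, mem_children] at hp ⊢
  exact h.started_of_halted hp

theorem base_mono (h : D.Invariant b s Z) {κ ν : Node β} (hκ : Started Z κ) (hν : ν <:+ κ) :
    D.base ν <+: D.base κ ∧ Started Z ν := by
  induction κ with
  | nil =>
    obtain rfl := List.suffix_nil.1 hν
    exact ⟨List.prefix_refl _, hκ⟩
  | cons p κ ih =>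
    obtain rfl | hν := List.suffix_cons_iff.1 hν
    · exact ⟨List.prefix_refl _, hκ⟩
    · have hchild := h.isChild _ _ _ (hκ.resolve_left (List.cons_ne_nil _ _))
      exact (ih hchild.started hν).imp_left fun hpre => hpre.trans hchild.base_isPrefix

theorem length_le_depth (h : D.Invariant b s Z) {κ : Node β} (hκ : Started Z κ) :
    κ.length ≤ depth b := by
  cases κ with
  | nil => exact Nat.zero_le _
  | cons p κ => exact (h.isChild _ _ _ (hκ.resolve_left (List.cons_ne_nil _ _))).length_lt

theorem mem_leaves_iff (h : D.Invariant b s Z) {ν κ : Node β} (hν : ν.length < depth b) :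
    κ ∈ leaves b Z ν ↔ ∃ p ∈ children Z false ν, κ ∈ leaves b Z (p :: ν) := by
  simp only [mem_leaves, mem_children]
  constructor
  · rintro ⟨hκ, hlen, μ, rfl⟩
    obtain rfl | ⟨μ, p, rfl⟩ := μ.eq_nil_or_concat'
    · exact absurd hlen hν.ne
    · have hsuf : p :: ν <:+ μ ++ [p] ++ ν := ⟨μ, by simp⟩
      exact ⟨p, (h.base_mono (Or.inr hκ) hsuf).2.resolve_left (List.cons_ne_nil _ _),
        hκ, hlen, hsuf⟩
  · rintro ⟨p, -, hκ, hlen, hsuf⟩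
    exact ⟨hκ, hlen, (List.suffix_cons _ _).trans hsuf⟩

open Classical in
theorem sum_leaves (h : D.Invariant b s Z) {ν : Node β} (hν : ν.length < depth b)
    (f : Node β → ℝ) : ∑ κ ∈ (leaves b Z ν).toFinset, f κ =
      ∑ p ∈ (children Z false ν).toFinset, ∑ κ ∈ (leaves b Z (p :: ν)).toFinset, f κ := by
  rw [← Finset.sum_biUnion]
  · congr 1
    ext κ
    simpa only [List.mem_toFinset, Finset.mem_biUnion] using h.mem_leaves_iff hν
  · rintro p - q - hpq
    refine Finset.disjoint_left.2 fun κ hp hq => hpq ?_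
    rw [List.mem_toFinset, mem_leaves] at hp hq
    have hsuf : p :: ν <:+ q :: ν := List.suffix_of_suffix_length_le hp.2.2 hq.2.2 le_rfl
    exact (List.cons.inj (hsuf.eq_of_length rfl)).1

theorem leafWeight_eq (h : D.Invariant b s Z) {ν : Node β} (hν : ν.length < depth b) :
    D.leafWeight b Z ν =
      ∑ p ∈ (open Classical in (children Z false ν).toFinset), D.leafWeight b Z (p :: ν) :=
  h.sum_leaves hν _

theorem leafWeight_le (h : D.Invariant b s Z) (ν : Node β) :
    D.leafWeight b Z ν ≤ wt (D.cost b ν) := by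
  classical
  induction hn : depth b - ν.length generalizing ν with
  | zero =>
    have leaves_subset : (leaves b Z ν).toFinset ⊆ {ν} := fun κ hκ => by
      obtain ⟨-, hlen, hsuf⟩ := mem_leaves.1 (List.mem_toFinset.1 hκ)
      rw [Finset.mem_singleton]
      exact (hsuf.eq_of_length_le (by omega)).symm
    exact (Finset.sum_le_sum_of_subset_of_nonneg leaves_subset fun _ _ _ => wt_nonneg _).trans_eq
      (Finset.sum_singleton _ _)
  | succ n ih =>
    rw [h.leafWeight_eq (by omega)]
    refine (Finset.sum_le_sum fun p _ => ih (p :: ν) ?_).trans (h.childWeight_le ν)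
    rw [List.length_cons]; omega

theorem le_leafWeight (h : D.Invariant b s Z) {ν : Node β} (hν : (ν, true) ∈ Z) :
    (1 - (depth b - ν.length : ℕ) * wt (2 * b + 7)) * wt (D.cost b ν) ≤ D.leafWeight b Z ν := by
  classical
  induction hn : depth b - ν.length generalizing ν with
  | zero =>
    have hlen : ν.length = depth b :=
      (h.length_le_depth (h.started ν hν)).antisymm (Nat.le_of_sub_eq_zero hn)
    have hdepth := one_le_depth b
    have hne : ν ≠ [] := fun hnil => by
      rw [← hlen, hnil] at hdepth
      exact Nat.not_succ_le_zero 0 hdepth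
    have hleaf : ν ∈ (leaves b Z ν).toFinset := List.mem_toFinset.2 <|
      mem_leaves.2 ⟨(h.started ν hν).resolve_left hne, hlen, List.suffix_refl _⟩
    rw [Nat.cast_zero, zero_mul, sub_zero, one_mul]
    exact Finset.single_le_sum (f := fun κ => wt (D.cost b κ)) (fun _ _ => wt_nonneg _) hleaf
  | succ n ih =>
    have hfull := (h.not_active ν hν).resolve_left (by omega)
    rw [active_iff h.nodup, not_lt] at hfull
    set ε := wt (2 * b + 7)
    set W := wt (D.cost b ν)
    have hε : 0 ≤ ε := wt_nonneg _
    have hW : 0 ≤ W := wt_nonneg _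
    have hnε : n * ε ≤ 1 / 16 := mul_wt_overhead_le (by omega)
    calc (1 - (n + 1 : ℕ) * ε) * W ≤ (1 - n * ε) * (W - W * ε) := by
          have : 0 ≤ n * ε * (W * ε) := by positivity
          push_cast; linarith
      _ ≤ (1 - n * ε) * D.childWeight b Z true ν :=
        mul_le_mul_of_nonneg_left (by linarith) (by linarith)
      _ = ∑ p ∈ (children Z true ν).toFinset, (1 - n * ε) * wt (D.cost b (p :: ν)) :=
        Finset.mul_sum _ _ _
      _ ≤ ∑ p ∈ (children Z true ν).toFinset, D.leafWeight b Z (p :: ν) :=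
        Finset.sum_le_sum fun p hp =>
          ih (mem_children.1 (List.mem_toFinset.1 hp)) (by rw [List.length_cons]; omega)
      _ ≤ ∑ p ∈ (children Z false ν).toFinset, D.leafWeight b Z (p :: ν) :=
        Finset.sum_le_sum_of_subset_of_nonneg
          (h.children_subset ν) fun _ _ _ => Finset.sum_nonneg fun _ _ => wt_nonneg _
      _ = D.leafWeight b Z ν := (h.leafWeight_eq (by omega)).symm

end Invariant

theorem payoff_le (ν : Node β) : D.payoff b s Z ν ≤ 2 ^ b := by
  classical
  set T := (leaves b Z ν).toFinset.sigma fun κ => (D.paidStrings b s ν κ).toFinset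
  have paid {κ : Node β} {σ : List Bool} (h : (⟨κ, σ⟩ : Σ _, _) ∈ T) :=
    mem_paidStrings.1 (List.mem_toFinset.1 (Finset.mem_sigma.1 h).2)
  have string_inj : Set.InjOn (fun p : Σ _ : Node β, List Bool => Encodable.encode p.2) T := by
    rintro ⟨κ, σ⟩ hσ ⟨κ', σ'⟩ hσ' heq
    obtain rfl : σ = σ' := Encodable.encode_injective heq
    obtain ⟨-, rfl⟩ := reqLength_inj.1 ((paid hσ).1.symm.trans (paid hσ').1)
    rfl
  have total : D.payoff b s Z ν * wt b ≤ 1 := by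
    refine le_of_eq_of_le ?_ (sum_wt_le_one_of_kcpxLeStage (k := fun p => D.cost b p.1 + b)
      string_inj fun p hp => (paid hp).2.2)
    rw [Finset.sum_sigma, payoff, Finset.sum_mul]
    refine Finset.sum_congr rfl fun κ _ => ?_
    dsimp only
    rw [Finset.sum_const, List.toFinset_card_of_nodup (nodup_paidStrings ν κ), nsmul_eq_mul,
      wt_add, mul_assoc]
  calc D.payoff b s Z ν = D.payoff b s Z ν * wt b * 2 ^ b := by
        rw [mul_assoc, wt_mul_two_pow, mul_one]
    _ ≤ 2 ^ b := mul_le_of_le_one_left (by positivity) total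

theorem Invariant.root_not_halted (h : D.Invariant b s Z) : ([], true) ∉ Z := fun hroot => by
  have hpay := (h.le_payoff [] hroot).trans (payoff_le [])
  have hdepth : (depth b : ℝ) * wt (b + 3) = 2 ^ b := by
    rw [depth, show 2 * b + 3 = b + 3 + b by ring, pow_add]
    push_cast
    linear_combination 2 ^ b * wt_mul_two_pow (b + 3)
  have hcost : D.cost b ([] : Node β) + 2 = b + 3 := rfl
  rw [hcost, List.length_nil, Nat.sub_zero, Nat.cast_add_one, add_mul, hdepth, one_mul] at hpay
  linarith [wt_pos (b + 3)]

end Tree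

section Requests

variable (D : OracleItems β)

open Classical in
/-- The pair `(b, κ)` if `n` codes the parameter `b` and a stage at which the leaf `κ` starts. -/
noncomputable def newLeaf (n : ℕ) : Option (ℕ × Node β) :=
  (Encodable.decode n.unpair.2.unpair.1 : Option (Event β)).bind fun ev =>
    if ev.2 = false ∧ ev.1.length = depth n.unpair.1 ∧
        D.CanOccur n.unpair.1 n.unpair.2 (D.stage n.unpair.1 n.unpair.2) ev then
      some (n.unpair.1, ev.1)
    else none

/-- The Kraft–Chaitin request on behalf of a new leaf `κ`: a description of `reqLength b κ`, coded
as a string of that length, by a program of length about `cost b κ`. -/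
noncomputable def request (n : ℕ) : Option (ℕ × ℕ) :=
  (D.newLeaf n).map fun q =>
    (Encodable.encode (List.replicate (D.reqLength q.1 q.2) true), D.cost q.1 q.2)

@[fun_prop]
theorem primrec_newLeaf : Primrec D.newLeaf := by
  unfold newLeaf; fun_prop

theorem primrec_request : Primrec D.request := by
  unfold request; fun_prop

variable {D}

theorem newLeaf_eq_some_iff {n b : ℕ} {κ : Node β} : D.newLeaf n = some (b, κ) ↔
    n.unpair.1 = b ∧ Encodable.decode n.unpair.2.unpair.1 = some (κ, false) ∧
      κ.length = depth b ∧ D.CanOccur b n.unpair.2 (D.stage b n.unpair.2) (κ, false) := by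
  simp only [newLeaf, Option.bind_eq_some_iff, Option.ite_none_right_eq_some, Option.some.injEq,
    Prod.mk.injEq]
  constructor
  · rintro ⟨⟨κ, c⟩, hev, ⟨rfl, hlen, hocc⟩, rfl, rfl⟩
    exact ⟨rfl, hev, hlen, hocc⟩
  · rintro ⟨rfl, hev, hlen, hocc⟩
    exact ⟨_, hev, ⟨rfl, hlen, hocc⟩, rfl, rfl⟩

theorem mem_stage_of_canOccur {b r s : ℕ} {ev : Event β} (hrs : r < s)
    (hev : Encodable.decode r.unpair.1 = some ev) (hocc : D.CanOccur b r (D.stage b r) ev) :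
    ev ∈ D.stage b s := by
  refine stage_subset (Nat.succ_le_of_lt hrs) ?_
  rw [stage_succ, advance_of_canOccur hev hocc]
  exact List.mem_cons_self

theorem newLeaf_inj {m n : ℕ} {q : ℕ × Node β} (hm : D.newLeaf m = some q)
    (hn : D.newLeaf n = some q) : m = n := by
  obtain ⟨hm₁, hev, -, hocc⟩ := newLeaf_eq_some_iff.1 hm
  obtain ⟨hn₁, hev', -, hocc'⟩ := newLeaf_eq_some_iff.1 hn
  obtain hlt | heq | hlt := lt_trichotomy m.unpair.2 n.unpair.2
  · exact absurd (mem_stage_of_canOccur hlt hev hocc) hocc'.notMem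
  · rw [← Nat.pair_unpair m, ← Nat.pair_unpair n, hm₁, hn₁, heq]
  · exact absurd (mem_stage_of_canOccur hlt hev' hocc') hocc.notMem

theorem requestLengths_request (N : ℕ) : requestLengths D.request N =
    ((List.range N).filterMap D.newLeaf).map fun q => D.cost q.1 q.2 := by
  induction N with
  | zero => rfl
  | succ N ih =>
    rw [requestLengths_succ, ih, List.range_succ, List.filterMap_append, List.map_append,
      request]
    cases h : D.newLeaf N <;> simp [h]

theorem wtSum_requestLengths_request_le (N : ℕ) : wtSum (requestLengths D.request N) ≤ 1 := by
  classical
  set L := (List.range N).filterMap D.newLeaf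
  have mem_L {q : ℕ × Node β} (hq : q ∈ L) : ∃ n < N, D.newLeaf n = some q := by
    simpa [L] using hq
  have nodup_L : L.Nodup := List.nodup_range.filterMap fun m n q hm hn => newLeaf_inj hm hn
  let leavesAt (b : ℕ) : Finset (Node β) := (leaves b (D.stage b N) []).toFinset
  have mem_leavesAt {b : ℕ} {κ : Node β} (hκ : (b, κ) ∈ L) : b < N ∧ κ ∈ leavesAt b := by
    obtain ⟨n, hn, hleaf⟩ := mem_L hκ
    obtain ⟨rfl, hev, hlen, hocc⟩ := newLeaf_eq_some_iff.1 hleaf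
    have hmem := mem_stage_of_canOccur ((Nat.unpair_right_le n).trans_lt hn) hev hocc
    exact ⟨(Nat.unpair_left_le n).trans_lt hn,
      List.mem_toFinset.2 (mem_leaves.2 ⟨hmem, hlen, List.nil_suffix⟩)⟩
  have hL (q : ℕ × Node β) : q ∈ L.toFinset ↔
      q.1 ∈ Finset.range N ∧ q.2 ∈ (leavesAt q.1).filter fun κ => (q.1, κ) ∈ L := by
    rw [List.mem_toFinset, Finset.mem_range, Finset.mem_filter]
    exact ⟨fun hq => ⟨(mem_leavesAt hq).1, (mem_leavesAt hq).2, hq⟩, fun hq => hq.2.2⟩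
  calc wtSum (requestLengths D.request N)
      = ∑ q ∈ L.toFinset, wt (D.cost q.1 q.2) := by
        rw [requestLengths_request, wtSum, List.map_map, List.sum_toFinset _ nodup_L]
        rfl
    _ = ∑ b ∈ Finset.range N, ∑ κ ∈ leavesAt b with (b, κ) ∈ L, wt (D.cost b κ) :=
        Finset.sum_finset_product _ _ _ hL
    _ ≤ ∑ b ∈ Finset.range N, D.leafWeight b (D.stage b N) [] :=
        Finset.sum_le_sum fun b _ => Finset.sum_le_sum_of_subset_of_nonneg
          (Finset.filter_subset _ _) fun _ _ _ => wt_nonneg _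
    _ ≤ ∑ b ∈ Finset.range N, wt (b + 1) :=
        Finset.sum_le_sum fun b _ => (D.invariant_stage b N).leafWeight_le []
    _ ≤ 1 := sum_wt_succ_le_one _

variable (D) in
theorem exists_KofNat_reqLength_le : ∃ C, ∀ b s κ, (κ, false) ∈ D.stage b s →
    κ.length = depth b → KofNat (D.reqLength b κ) ≤ D.cost b κ + C := by
  obtain ⟨e, hpf, hprog⟩ := kraft_chaitin D.primrec_request wtSum_requestLengths_request_le
  refine ⟨1 + 2 * e + 2, fun b s κ hκ hlen => ?_⟩
  obtain ⟨r, -, hev, hocc⟩ := exists_canOccur_of_mem_stage hκ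
  have hleaf : D.newLeaf (Nat.pair b r) = some (b, κ) := by
    rw [newLeaf_eq_some_iff, Nat.unpair_pair]
    exact ⟨rfl, hev, hlen, hocc⟩
  obtain ⟨σ, hσ, hx⟩ := hprog (Nat.pair b r) _ _ (by rw [request, hleaf, Option.map_some])
  calc KofNat (D.reqLength b κ) ≤ σ.length + 2 * e + 2 := Kcpx_le hpf hx
    _ = D.cost b κ + (1 + 2 * e + 2) := by rw [hσ]; ring

variable (D) in
/-- Every started leaf of the tree with parameter `b` is eventually rewarded by a description of
the initial segment of `A` of its length. -/
def PaysFor (A : ℕ → Bool) (b : ℕ) : Prop :=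
  ∀ s κ, (κ, false) ∈ D.stage b s → κ.length = depth b →
    ∃ t, KcpxLeStage t (Encodable.encode (strPrefix A (D.reqLength b κ))) (D.cost b κ + b)

variable (D) in
theorem exists_paysFor {A : ℕ → Bool} (hA : KTrivial A) : ∃ b, D.PaysFor A b := by
  obtain ⟨c, hc⟩ := hA
  obtain ⟨C, hC⟩ := D.exists_KofNat_reqLength_le
  refine ⟨C + c, fun s κ hκ hlen => exists_kcpxLeStage ?_⟩
  have hreq := hC _ s κ hκ hlen
  have htriv := hc (D.reqLength (C + c) κ)
  omega

end Requests

section Golden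

variable {D : OracleItems β} {A : ℕ → Bool} {b : ℕ}

variable (D A b) in
/-- The procedure at `ν` has started and never halts, and it bets rightly on `A`. -/
structure Pending (ν : Node β) : Prop where
  started : ∃ s, Started (D.stage b s) ν
  not_halted : ∀ s, (ν, true) ∉ D.stage b s
  isPrefixOf_base : IsPrefixOf (D.base ν) A

variable (D A b) in
/-- The procedure at `ν` is pending, but no child of it is. -/
structure IsGolden (ν : Node β) : Prop where
  pending : D.Pending A b ν
  not_pending_child : ∀ p, ¬ D.Pending A b (p :: ν)

theorem Pending.length_le {ν : Node β} (h : D.Pending A b ν) : ν.length ≤ depth b := by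
  obtain ⟨s, hs⟩ := h.started
  exact (D.invariant_stage b s).length_le_depth hs

variable (D A b) in
theorem exists_isGolden : ∃ ν, D.IsGolden A b ν := by
  by_contra! hnone
  have pending_of_length (n : ℕ) : ∃ ν : Node β, ν.length = n ∧ D.Pending A b ν := by
    induction n with
    | zero => exact ⟨[], rfl, ⟨0, Or.inl rfl⟩, fun s => (D.invariant_stage b s).root_not_halted,
        fun i => i.elim0⟩
    | succ n ih =>
      obtain ⟨ν, hlen, hν⟩ := ih
      by_contra! hno
      exact hnone ν ⟨hν, fun p hp => hno (p :: ν) (by rw [List.length_cons, hlen]) hp⟩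
  obtain ⟨ν, hlen, hν⟩ := pending_of_length (depth b + 1)
  exact absurd hν.length_le (by omega)

theorem strPrefix_mem_paidStrings {s : ℕ} {ν κ : Node β} (hν : IsPrefixOf (D.base ν) A)
    (hlen : (D.base ν).length ≤ D.reqLength b κ)
    (hpaid : KcpxLeStage s (Encodable.encode (strPrefix A (D.reqLength b κ))) (D.cost b κ + b)) :
    strPrefix A (D.reqLength b κ) ∈ D.paidStrings b s ν κ :=
  mem_paidStrings.2 ⟨length_strPrefix _ _, isPrefix_strPrefix_iff.2 ⟨hν, hlen⟩, hpaid⟩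

theorem Pending.not_ready {ν : Node β} (h : D.Pending A b ν) {s₀ : ℕ}
    (hstart : Started (D.stage b s₀) ν)
    (hfull : ν.length = depth b ∨ ¬ D.Active b (D.stage b s₀) ν) {t : ℕ} :
    D.payoff b t (D.stage b s₀) ν <
      (depth b - ν.length + 1 : ℕ) * wt (D.cost b ν + 2) := by
  by_contra! hpay
  obtain ⟨s, hs⟩ := D.exists_mem_stage (b := b) (ev := (ν, true)) (s₀ := max s₀ t)
      fun s hs hnew => by
    have hsub := D.stage_subset (b := b) ((le_max_left s₀ t).trans hs)
    have hnd := (D.invariant_stage b s).nodup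
    refine Or.inr ⟨rfl, hnew, hstart.mono hsub, hfull.imp_right
      (not_active_mono hsub (D.invariant_stage b s₀).nodup hnd), ?_⟩
    exact (hasPayoff_iff hnd).2
      (hpay.trans (payoff_mono ((le_max_right s₀ t).trans hs) hsub ν))
  exact h.not_halted s hs

theorem Pending.length_lt {ν : Node β} (h : D.Pending A b ν) (hpays : D.PaysFor A b) :
    ν.length < depth b := by
  classical
  refine h.length_le.lt_of_ne fun hlen => ?_
  have hne : ν ≠ [] := by
    rintro rfl
    exact (one_le_depth b).not_gt (by rw [← hlen]; exact Nat.zero_lt_one)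
  obtain ⟨s, hs⟩ := h.started
  have hleaf := hs.resolve_left hne
  obtain ⟨t, ht⟩ := hpays s ν hleaf hlen
  have hmem := strPrefix_mem_paidStrings h.isPrefixOf_base (length_base_le_reqLength b ν) ht
  have one_le : (1 : ℝ) ≤ (D.paidStrings b t ν ν).length :=
    mod_cast List.length_pos_of_mem hmem
  refine (h.not_ready hs (Or.inl hlen) (t := t)).not_ge ?_
  calc ((depth b - ν.length + 1 : ℕ) : ℝ) * wt (D.cost b ν + 2) = wt (D.cost b ν + 2) := by
        rw [hlen, Nat.sub_self, zero_add, Nat.cast_one, one_mul]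
    _ ≤ wt (D.cost b ν) := wt_anti (Nat.le_add_right _ _)
    _ ≤ (D.paidStrings b t ν ν).length * wt (D.cost b ν) :=
        le_mul_of_one_le_left (wt_nonneg _) one_le
    _ ≤ D.payoff b t (D.stage b s) ν :=
        Finset.single_le_sum (f := fun κ => (D.paidStrings b t ν κ).length * wt (D.cost b κ))
          (fun κ _ => mul_nonneg (Nat.cast_nonneg _) (wt_nonneg _))
          (List.mem_toFinset.2 (mem_leaves.2 ⟨hleaf, hlen, List.suffix_refl _⟩))

open Classical in
/-- All copies of the items in `F`. -/
noncomputable def copies (F : Finset β) : Finset (β × ℕ) :=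
  F.biUnion fun x => (Finset.range (2 ^ (Encodable.encode x + 1))).image (Prod.mk x)

theorem mem_copies {F : Finset β} {p : β × ℕ} :
    p ∈ copies F ↔ p.1 ∈ F ∧ p.2 ∈ Finset.range (2 ^ (Encodable.encode p.1 + 1)) := by
  simp only [copies, Finset.mem_biUnion, Finset.mem_image]
  constructor
  · rintro ⟨x, hx, t, ht, rfl⟩
    exact ⟨hx, ht⟩
  · exact fun ⟨hx, ht⟩ => ⟨p.1, hx, p.2, ht, rfl⟩

theorem sum_copies (F : Finset β) (ν : Node β) : ∑ p ∈ copies F, wt (D.cost b (p :: ν)) =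
    wt (D.cost b ν) * wt (2 * b + 7) * ∑ x ∈ F, wt (D.size x) := by
  rw [Finset.sum_finset_product (copies F) F (fun x => Finset.range (2 ^ (Encodable.encode x + 1)))
    fun _ => mem_copies, Finset.mul_sum]
  refine Finset.sum_congr rfl fun x _ => ?_
  simp only [cost_cons, Finset.sum_const, Finset.card_range, nsmul_eq_mul, wt_add _ (D.size x),
    wt_add _ (Encodable.encode x + 1), wt_add _ (2 * b + 7), Nat.cast_pow, Nat.cast_ofNat]
  linear_combination
    wt (D.cost b ν) * wt (2 * b + 7) * wt (D.size x) * wt_mul_two_pow (Encodable.encode x + 1)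

open Classical in
theorem sum_halted_compatible_le (hD : WeightLE D.size (D.Enumerated A) 1) {s : ℕ}
    {Z : List (Event β)} (hZ : D.Invariant b s Z) (ν : Node β) :
    ∑ p ∈ (children Z true ν).toFinset with IsPrefixOf (D.base (p :: ν)) A,
      wt (D.cost b (p :: ν)) ≤ wt (D.cost b ν) * wt (2 * b + 7) := by
  set T := (children Z true ν).toFinset.filter fun p => IsPrefixOf (D.base (p :: ν)) A
  have child {p : β × ℕ} (hp : p ∈ T) :
      D.IsChild b Z ν p.1 p.2 ∧ IsPrefixOf (D.base (p :: ν)) A := by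
    rw [Finset.mem_filter, List.mem_toFinset, mem_children] at hp
    exact hp.imp_left fun h => hZ.isChild _ _ _ (hZ.started_of_halted h)
  have subset_copies : T ⊆ copies (T.image Prod.fst) := fun p hp =>
    mem_copies.2 ⟨Finset.mem_image_of_mem _ hp, Finset.mem_range.2 (child hp).1.copy_lt⟩
  have weight_le : ∑ x ∈ T.image Prod.fst, wt (D.size x) ≤ 1 := hD _ fun x hx => by
    obtain ⟨p, hp, rfl⟩ := Finset.mem_image.1 hx
    exact ⟨(child hp).1.valid, (child hp).1.isPrefixOf_use (child hp).2⟩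
  calc ∑ p ∈ T, wt (D.cost b (p :: ν)) ≤ ∑ p ∈ copies (T.image Prod.fst), wt (D.cost b (p :: ν)) :=
        Finset.sum_le_sum_of_subset_of_nonneg subset_copies fun _ _ _ => wt_nonneg _
    _ = wt (D.cost b ν) * wt (2 * b + 7) * ∑ x ∈ T.image Prod.fst, wt (D.size x) :=
        sum_copies _ _
    _ ≤ wt (D.cost b ν) * wt (2 * b + 7) :=
        mul_le_of_le_one_right (mul_nonneg (wt_nonneg _) (wt_nonneg _)) weight_le

open Classical in
/-- The part of the payoff of `ν` that comes from the leaves below its child `p :: ν`. -/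
noncomputable def childPayoff (D : OracleItems β) (b t : ℕ) (Z : List (Event β)) (ν : Node β)
    (p : β × ℕ) : ℝ :=
  ∑ κ ∈ (leaves b Z (p :: ν)).toFinset, (D.paidStrings b t ν κ).length * wt (D.cost b κ)

theorem payoff_le_childPayoff {s t : ℕ} (hst : s ≤ t) {Z : List (Event β)} {p : β × ℕ}
    {ν : Node β} (hbase : D.base ν <+: D.base (p :: ν)) :
    D.payoff b s Z (p :: ν) ≤ D.childPayoff b t Z ν p :=
  Finset.sum_le_sum fun κ _ => mul_le_mul_of_nonneg_right
    (mod_cast (paidStrings_sublist hst hbase κ).length_le) (wt_nonneg _)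

/-- If the child bets wrongly on `A`, the descriptions of initial segments of `A` count for `ν` on
top of those that the child has collected. -/
theorem payoff_add_leafWeight_le_childPayoff {s t : ℕ} (hst : s ≤ t) {Z : List (Event β)}
    (hZ : D.Invariant b s Z) {p : β × ℕ} {ν : Node β} (hν : IsPrefixOf (D.base ν) A)
    (hbase : D.base ν <+: D.base (p :: ν)) (hwrong : ¬ IsPrefixOf (D.base (p :: ν)) A)
    (hpaid : ∀ κ ∈ leaves b Z ν,
      KcpxLeStage t (Encodable.encode (strPrefix A (D.reqLength b κ))) (D.cost b κ + b)) :
    D.payoff b s Z (p :: ν) + D.leafWeight b Z (p :: ν) ≤ D.childPayoff b t Z ν p := by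
  classical
  rw [payoff, leafWeight, childPayoff, ← Finset.sum_add_distrib]
  refine Finset.sum_le_sum fun κ hκ => ?_
  obtain ⟨hstart, hlen, hsuf⟩ := mem_leaves.1 (List.mem_toFinset.1 hκ)
  have hκν : κ ∈ leaves b Z ν := mem_leaves.2 ⟨hstart, hlen, (List.suffix_cons _ _).trans hsuf⟩
  have base_le := (hbase.trans (hZ.base_mono (Or.inr hstart) hsuf).1).length_le.trans
    (length_base_le_reqLength b κ)
  have new := strPrefix_mem_paidStrings hν base_le (hpaid κ hκν)
  have not_old : strPrefix A (D.reqLength b κ) ∉ D.paidStrings b s (p :: ν) κ := fun hold =>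
    hwrong (isPrefix_strPrefix_iff.1 (mem_paidStrings.1 hold).2.1).1
  have sub := paidStrings_sublist (b := b) hst hbase κ
  have length_lt : (D.paidStrings b s (p :: ν) κ).length < (D.paidStrings b t ν κ).length :=
    sub.length_le.lt_of_ne fun heq => not_old (sub.eq_of_length heq ▸ new)
  rw [← add_one_mul]
  exact mul_le_mul_of_nonneg_right (mod_cast length_lt) (wt_nonneg _)

/-- Here `W` is the amount of a node that is `i` levels above the leaves, `S` and `V` are the
amounts of its halted children and of those among them that bet rightly. -/
theorem payoff_arithmetic {i : ℕ} (hi : i ≤ depth b) {W S V : ℝ} (hW : 0 ≤ W)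
    (hS : W ≤ S + W * wt (2 * b + 7)) (hV : V ≤ W * wt (2 * b + 7)) :
    (i + 1) * (W / 4) ≤ (i / 4 + 15 / 16) * S - 15 / 16 * V := by
  have hε : wt (2 * b + 7) ≤ 1 / 16 := by
    simpa using mul_wt_overhead_le (one_le_depth b)
  have hiε := mul_wt_overhead_le hi
  set ε := wt (2 * b + 7)
  have hiεW : i * ε * W ≤ 1 / 16 * W := mul_le_mul_of_nonneg_right hiε hW
  have hεW : ε * W ≤ 1 / 16 * W := mul_le_mul_of_nonneg_right hε hW
  calc (i + 1) * (W / 4) ≤ (i / 4 + 15 / 16) * (W - W * ε) - 15 / 16 * (W * ε) := by linarith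
    _ ≤ (i / 4 + 15 / 16) * S - 15 / 16 * V := by gcongr; linarith

theorem le_childPayoff {s t : ℕ} (hst : s ≤ t) {Z : List (Event β)} (hZ : D.Invariant b s Z)
    {p : β × ℕ} {ν : Node β} (hp : (p :: ν, true) ∈ Z) (hν : IsPrefixOf (D.base ν) A)
    (hpaid : ∀ κ ∈ leaves b Z ν,
      KcpxLeStage t (Encodable.encode (strPrefix A (D.reqLength b κ))) (D.cost b κ + b)) :
    ((depth b - ν.length : ℕ) / 4 + 15 / 16) * wt (D.cost b (p :: ν)) -
      (open Classical in
        if IsPrefixOf (D.base (p :: ν)) A then 15 / 16 * wt (D.cost b (p :: ν)) else 0) ≤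
      D.childPayoff b t Z ν p := by
  have hchild := hZ.isChild _ _ _ (hZ.started_of_halted hp)
  have hbase := hchild.base_isPrefix
  have hlevel : depth b - (p :: ν).length + 1 = depth b - ν.length := by
    have := hchild.length_lt
    rw [List.length_cons]; omega
  have hpay := hZ.le_payoff _ hp
  rw [hlevel, wt_add, show wt 2 = 1 / 4 by rw [wt_eq_one_div]; norm_num] at hpay
  split_ifs with hright
  · linarith [payoff_le_childPayoff (b := b) (Z := Z) hst hbase]
  · have hsum := payoff_add_leafWeight_le_childPayoff hst hZ hν hbase hright hpaid
    have hused : 15 / 16 * wt (D.cost b (p :: ν)) ≤ D.leafWeight b Z (p :: ν) :=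
      (mul_le_mul_of_nonneg_right
        (by linarith [mul_wt_overhead_le (Nat.sub_le (depth b) (p :: ν).length)])
        (wt_nonneg _)).trans (hZ.le_leafWeight hp)
    linarith

theorem le_payoff_of_not_active (hD : WeightLE D.size (D.Enumerated A) 1) {s t : ℕ} (hst : s ≤ t)
    {Z : List (Event β)} (hZ : D.Invariant b s Z) {ν : Node β} (hlen : ν.length < depth b)
    (hν : IsPrefixOf (D.base ν) A) (hfull : ¬ D.Active b Z ν)
    (hpaid : ∀ κ ∈ leaves b Z ν,
      KcpxLeStage t (Encodable.encode (strPrefix A (D.reqLength b κ))) (D.cost b κ + b)) :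
    (depth b - ν.length + 1 : ℕ) * wt (D.cost b ν + 2) ≤ D.payoff b t Z ν := by
  classical
  rw [active_iff hZ.nodup, not_lt] at hfull
  set halted := (children Z true ν).toFinset
  set i := depth b - ν.length
  calc ((i + 1 : ℕ) : ℝ) * wt (D.cost b ν + 2) = (i + 1) * (wt (D.cost b ν) / 4) := by
        rw [wt_add, show wt 2 = 1 / 4 by rw [wt_eq_one_div]; norm_num]
        push_cast; ring
    _ ≤ (i / 4 + 15 / 16) * D.childWeight b Z true ν -
          15 / 16 * ∑ p ∈ halted with IsPrefixOf (D.base (p :: ν)) A, wt (D.cost b (p :: ν)) :=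
        payoff_arithmetic (Nat.sub_le _ _) (wt_nonneg _) hfull (sum_halted_compatible_le hD hZ ν)
    _ = ∑ p ∈ halted, ((i / 4 + 15 / 16) * wt (D.cost b (p :: ν)) -
          if IsPrefixOf (D.base (p :: ν)) A then 15 / 16 * wt (D.cost b (p :: ν)) else 0) := by
        rw [Finset.sum_sub_distrib, ← Finset.sum_filter, ← Finset.mul_sum, ← Finset.mul_sum]
        rfl
    _ ≤ ∑ p ∈ halted, D.childPayoff b t Z ν p := Finset.sum_le_sum fun p hp =>
        le_childPayoff hst hZ (mem_children.1 (List.mem_toFinset.1 hp)) hν hpaid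
    _ ≤ ∑ p ∈ (children Z false ν).toFinset, D.childPayoff b t Z ν p :=
        Finset.sum_le_sum_of_subset_of_nonneg (hZ.children_subset ν) fun _ _ _ =>
          Finset.sum_nonneg fun _ _ => mul_nonneg (Nat.cast_nonneg _) (wt_nonneg _)
    _ = D.payoff b t Z ν := (hZ.sum_leaves hlen _).symm

theorem Pending.active {ν : Node β} (h : D.Pending A b ν) (hpays : D.PaysFor A b)
    (hD : WeightLE D.size (D.Enumerated A) 1) {s : ℕ} (hs : Started (D.stage b s) ν) :
    D.Active b (D.stage b s) ν := by
  classical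
  by_contra hfull
  have paid (κ : Node β) (hκ : κ ∈ leaves b (D.stage b s) ν) :
      ∃ t, KcpxLeStage t (Encodable.encode (strPrefix A (D.reqLength b κ))) (D.cost b κ + b) :=
    hpays s κ (mem_leaves.1 hκ).1 (mem_leaves.1 hκ).2.1
  choose! t ht using paid
  set r := max s ((leaves b (D.stage b s) ν).toFinset.sup t)
  refine (h.not_ready hs (Or.inr hfull) (t := r)).not_ge <|
    le_payoff_of_not_active hD (le_max_left _ _) (D.invariant_stage b s) (h.length_lt hpays)
      h.isPrefixOf_base hfull fun κ hκ => (ht κ hκ).mono ?_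
  exact (Finset.le_sup (List.mem_toFinset.2 hκ)).trans (le_max_right _ _)

theorem IsGolden.exists_halted {ν : Node β} (h : D.IsGolden A b ν) (hpays : D.PaysFor A b)
    (hD : WeightLE D.size (D.Enumerated A) 1) {x : β} (hx : D.Enumerated A x) (t : ℕ)
    (ht : t < 2 ^ (Encodable.encode x + 1)) : ∃ s, ((x, t) :: ν, true) ∈ D.stage b s := by
  induction t using Nat.strong_induction_on with
  | _ t ih =>
    choose! r hr using fun t' ht' => ih t' ht' (ht'.trans ht)
    obtain ⟨s₀, hs₀⟩ := h.pending.started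
    set s₁ := max s₀ ((Finset.range t).sup r)
    obtain ⟨s, hs⟩ := D.exists_mem_stage (b := b) (ev := ((x, t) :: ν, false)) (s₀ := s₁)
        fun s hs hnew => by
      have hstart := hs₀.mono (D.stage_subset (b := b) ((le_max_left _ _).trans hs))
      refine Or.inl ⟨rfl, hnew, h.pending.active hpays hD hstart, (x, t), rfl, hstart,
        h.pending.length_lt hpays, hx.1, hx.2.isPrefix_or_isPrefix h.pending.isPrefixOf_base, ht,
        fun t' ht' => D.stage_subset (b := b) ?_ (hr t' ht')⟩
      exact ((Finset.le_sup (Finset.mem_range.2 ht')).trans (le_max_right _ _)).trans hs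
    by_contra! hnever
    exact h.not_pending_child (x, t)
      ⟨⟨s, Or.inr hs⟩, hnever, isPrefixOf_base_cons hx.2 h.pending.isPrefixOf_base⟩

theorem Invariant.weightLE_covered {s : ℕ} {Z : List (Event β)} (hZ : D.Invariant b s Z)
    (ν : Node β) : WeightLE D.size
      (fun x => ((x, 2 ^ (Encodable.encode x + 1) - 1) :: ν, true) ∈ Z) (2 ^ (2 * b + 7)) := by
  classical
  intro F hF
  have copies_subset : copies F ⊆ (children Z false ν).toFinset := fun p hp => by
    obtain ⟨hx, ht⟩ := mem_copies.1 hp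
    rw [List.mem_toFinset, mem_children]
    have hlast := hZ.started_of_halted (hF _ hx)
    obtain hlt | hle := lt_or_ge p.2 (2 ^ (Encodable.encode p.1 + 1) - 1)
    · exact hZ.started_of_halted ((hZ.isChild _ _ _ hlast).halted_of_lt _ hlt)
    · rwa [show 2 ^ (Encodable.encode p.1 + 1) - 1 = p.2 by rw [Finset.mem_range] at ht; omega]
        at hlast
  have hsum : wt (D.cost b ν) * (wt (2 * b + 7) * ∑ x ∈ F, wt (D.size x)) ≤
      wt (D.cost b ν) * 1 := calc
    _ = ∑ p ∈ copies F, wt (D.cost b (p :: ν)) := by rw [sum_copies, mul_assoc]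
    _ ≤ D.childWeight b Z false ν :=
      Finset.sum_le_sum_of_subset_of_nonneg copies_subset fun _ _ _ => wt_nonneg _
    _ ≤ wt (D.cost b ν) * 1 := (hZ.childWeight_le ν).trans_eq (mul_one _).symm
  calc ∑ x ∈ F, wt (D.size x)
      = wt (2 * b + 7) * (∑ x ∈ F, wt (D.size x)) * 2 ^ (2 * b + 7) := by
        linear_combination -(∑ x ∈ F, wt (D.size x)) * wt_mul_two_pow (2 * b + 7)
    _ ≤ 2 ^ (2 * b + 7) := mul_le_of_le_one_left (by positivity)
        (le_of_mul_le_mul_left hsum (wt_pos _))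

end Golden

theorem exists_cover (D : OracleItems β) {A : ℕ → Bool} (hA : KTrivial A)
    (hD : WeightLE D.size (D.Enumerated A) 1) :
    ∃ W : ℕ → β → Prop, IsEnumeration W ∧ (∃ C, ∀ s, WeightLE D.size (W s) C) ∧
      (∀ x, D.Enumerated A x → ∃ s, W s x) ∧ ∀ s x, W s x → D.Valid x := by
  obtain ⟨b, hpays⟩ := D.exists_paysFor hA
  obtain ⟨ν, hν⟩ := D.exists_isGolden A b
  have hprim : PrimrecPred fun q : ℕ × β =>
      ((q.2, 2 ^ (Encodable.encode q.2 + 1) - 1) :: ν, true) ∈ D.stage b q.1 := by fun_prop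
  refine ⟨fun s x => ((x, 2 ^ (Encodable.encode x + 1) - 1) :: ν, true) ∈ D.stage b s, ⟨?_, ?_⟩,
    ⟨_, fun s => (D.invariant_stage b s).weightLE_covered ν⟩, fun x hx => ?_, fun s x hx => ?_⟩
  · exact hprim.primrecRel
  · exact fun s t hst x hx => stage_subset hst hx
  · exact hν.exists_halted hpays hD hx _ (Nat.sub_lt (by positivity) one_pos)
  · have hZ := D.invariant_stage b s
    exact (hZ.isChild _ _ _ (hZ.started_of_halted hx)).valid

end OracleItems

/-! ### Counting strings -/

section Density

open Classical in
/-- The number of binary strings of length `n` satisfying `p`. -/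
noncomputable def strCount (p : List Bool → Prop) (n : ℕ) : ℕ := ((strs n).filter (p ·)).length

theorem strCount_eq_card (p : List Bool → Prop) [DecidablePred p] (n : ℕ) :
    strCount p n = ((strFinset n).filter p).card := by
  rw [strCount, ← List.toFinset_card_of_nodup ((nodup_strs n).filter _)]
  congr 1
  ext σ
  simp [strFinset]

@[fun_prop]
theorem primrec_strCount {α : Type*} [Primcodable α] {p : α → List Bool → Prop} {n : α → ℕ}
    (hp : PrimrecPred fun q : α × List Bool => p q.1 q.2) (hn : Primrec n) :
    Primrec fun a => strCount (p a) (n a) := by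
  classical
  unfold strCount
  fun_prop

theorem strCount_le_mul {p q : List Bool → Prop} {s t : ℕ} (hst : s ≤ t)
    (hqp : ∀ τ, τ.length = t → q τ → p (τ.take s)) :
    strCount q t ≤ 2 ^ (t - s) * strCount p s := by
  classical
  rw [strCount_eq_card, strCount_eq_card]
  refine Finset.card_le_mul_card_image_of_maps_to (f := List.take s) (fun τ hτ => ?_) _
    fun ρ hρ => ?_
  · obtain ⟨hlen, hq⟩ := Finset.mem_filter.1 hτ
    rw [mem_strFinset] at hlen
    exact Finset.mem_filter.2 ⟨by simp [hlen, hst], hqp τ hlen hq⟩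
  · have hlen := mem_strFinset.1 (Finset.mem_filter.1 hρ).1
    rw [← hlen, ← card_filter_isPrefix_strFinset (hlen.trans_le hst)]
    refine Finset.card_le_card fun τ hτ => ?_
    obtain ⟨hτmem, htake⟩ := Finset.mem_filter.1 hτ
    exact Finset.mem_filter.2 ⟨(Finset.mem_filter.1 hτmem).1, htake ▸ List.take_prefix _ _⟩

/-- Fewer than a fraction `2 ^ (-j)` of the extensions of `σ` of length `s` satisfy `p`. -/
def LowDensity (p : List Bool → Prop) (j s : ℕ) (σ : List Bool) : Prop :=
  σ.length ≤ s ∧ 2 ^ j * strCount (fun ρ => σ <+: ρ ∧ p ρ) s < 2 ^ (s - σ.length)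

variable {p q : List Bool → Prop} {j s t : ℕ} {σ : List Bool}

@[fun_prop]
theorem primrecPred_lowDensity {α : Type*} [Primcodable α] {p : α → List Bool → Prop}
    {j s : α → ℕ} {σ : α → List Bool} (hp : PrimrecPred fun q : α × List Bool => p q.1 q.2)
    (hj : Primrec j) (hs : Primrec s) (hσ : Primrec σ) :
    PrimrecPred fun a => LowDensity (p a) (j a) (s a) (σ a) := by
  unfold LowDensity; fun_prop

theorem LowDensity.refine (h : LowDensity p j s σ) (hst : s ≤ t)
    (hqp : ∀ τ, τ.length = t → σ <+: τ → q τ → p (τ.take s)) : LowDensity q j t σ := by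
  obtain ⟨hσ, hlt⟩ := h
  refine ⟨hσ.trans hst, ?_⟩
  have hcount : strCount (fun ρ => σ <+: ρ ∧ q ρ) t ≤
      2 ^ (t - s) * strCount (fun ρ => σ <+: ρ ∧ p ρ) s :=
    strCount_le_mul hst fun τ hτ ⟨hpre, hq⟩ =>
      ⟨List.prefix_take_iff.2 ⟨hpre, hσ⟩, hqp τ hτ hpre hq⟩
  calc 2 ^ j * strCount (fun ρ => σ <+: ρ ∧ q ρ) t
      ≤ 2 ^ j * (2 ^ (t - s) * strCount (fun ρ => σ <+: ρ ∧ p ρ) s) := by gcongr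
    _ = 2 ^ (t - s) * (2 ^ j * strCount (fun ρ => σ <+: ρ ∧ p ρ) s) := by ring
    _ < 2 ^ (t - s) * 2 ^ (s - σ.length) := by gcongr
    _ = 2 ^ (t - σ.length) := by rw [← pow_add]; congr 1; omega

theorem LowDensity.lt_sub {ρ : List Bool} (h : LowDensity p j s σ) (hlen : ρ.length = s)
    (hσ : σ <+: ρ) (hp : p ρ) : j < s - σ.length := by
  classical
  have hpos : 0 < strCount (fun ρ => σ <+: ρ ∧ p ρ) s := by
    rw [strCount_eq_card]
    exact Finset.card_pos.2 ⟨ρ, Finset.mem_filter.2 ⟨mem_strFinset.2 hlen, hσ, hp⟩⟩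
  exact (Nat.pow_lt_pow_iff_right one_lt_two).1
    ((Nat.le_mul_of_pos_right _ hpos).trans_lt h.2)

theorem sum_wt_length_le_of_not_lowDensity {G : Finset (List Bool)}
    (hfree : PrefixFreeSet (G : Set (List Bool))) (hσs : σ.length ≤ s)
    (hG : ∀ ρ ∈ G, σ <+: ρ ∧ ρ.length ≤ s)
    (hdisj : ∀ ρ ∈ G, ∀ τ, τ.length = s → ρ <+: τ → ¬ p τ) (hp : ¬ LowDensity p j s σ) :
    ∑ ρ ∈ G, wt ρ.length ≤ (1 - wt j) * wt σ.length := by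
  classical
  set V := (strFinset s).filter fun τ => ∃ ρ ∈ G, ρ <+: τ
  set U := (strFinset s).filter fun τ => σ <+: τ ∧ p τ
  have hU : 2 ^ s * wt σ.length ≤ 2 ^ j * (U.card : ℝ) := by
    have := not_lt.1 fun hlt => hp ⟨hσs, hlt⟩
    rw [strCount_eq_card] at this
    rw [← two_pow_sub_eq hσs]
    exact_mod_cast this
  have hdisjoint : Disjoint V U := by
    refine Finset.disjoint_filter.2 fun τ hτ ⟨ρ, hρ, hpre⟩ hpτ => ?_
    exact hdisj ρ hρ τ (mem_strFinset.1 hτ) hpre hpτ.2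
  have hVU : (V.card : ℝ) + U.card ≤ 2 ^ s * wt σ.length := by
    rw [← two_pow_sub_eq hσs]
    have hsub : V ∪ U ⊆ (strFinset s).filter fun τ => σ <+: τ := by
      rw [← Finset.filter_or]
      refine Finset.monotone_filter_right _ fun τ _ hτ => ?_
      obtain ⟨ρ, hρ, hpre⟩ | hτ := hτ
      exacts [(hG ρ hρ).1.trans hpre, hτ.1]
    have hcard := Finset.card_le_card hsub
    rw [Finset.card_union_of_disjoint hdisjoint, card_filter_isPrefix_strFinset hσs] at hcard
    exact_mod_cast hcard
  rw [sum_wt_length_eq (fun ρ hρ => (hG ρ hρ).2) hfree]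
  have hUj : wt j * (2 ^ s * wt σ.length) ≤ U.card := by
    have := mul_le_mul_of_nonneg_left hU (wt_nonneg j)
    rwa [← mul_assoc (wt j) (2 ^ j), wt_mul_two_pow, one_mul] at this
  calc wt s * (V.card : ℝ) ≤ wt s * (2 ^ s * wt σ.length * (1 - wt j)) :=
        mul_le_mul_of_nonneg_left (by linarith) (wt_nonneg s)
    _ = (1 - wt j) * wt σ.length := by
        linear_combination (1 - wt j) * wt σ.length * wt_mul_two_pow s

end Density

section Shortest

variable {α : Type*} [Primcodable α] {p q : List Bool → Prop} {σ τ : List Bool}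

/-- `σ` satisfies `p` and no proper initial segment of `σ` does. -/
def IsShortest (p : List Bool → Prop) (σ : List Bool) : Prop :=
  p σ ∧ ∀ k < σ.length, ¬ p (σ.take k)

@[fun_prop]
theorem primrecPred_isShortest {p : α → List Bool → Prop} {σ : α → List Bool}
    (hp : PrimrecPred fun q : α × List Bool => p q.1 q.2) (hσ : Primrec σ) :
    PrimrecPred fun a => IsShortest (p a) (σ a) := by
  have hshorter : PrimrecPred fun a => ∀ k < (σ a).length, ¬ p a ((σ a).take k) :=
    primrecPred_forall_lt (by fun_prop)
      (hp.comp (f := fun q : α × ℕ => (q.1, (σ q.1).take q.2)) (by fun_prop)).not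
  exact (hp.comp (f := fun a => (a, σ a)) (by fun_prop)).and hshorter

theorem IsShortest.eq_of_isPrefix (hσ : p σ) (hτ : IsShortest p τ) (h : σ <+: τ) : σ = τ := by
  refine h.eq_of_length_le (not_lt.1 fun hlt => hτ.2 _ hlt ?_)
  rwa [← List.prefix_iff_eq_take.1 h]

theorem exists_isShortest (h : p σ) : ∃ τ, τ <+: σ ∧ IsShortest p τ := by
  classical
  have hex : ∃ k, p (σ.take k) := ⟨σ.length, by rwa [List.take_length]⟩
  refine ⟨_, List.take_prefix _ _, Nat.find_spec hex, fun k hk => ?_⟩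
  rw [List.length_take, lt_min_iff] at hk
  rw [List.take_take, min_eq_left hk.1.le]
  exact Nat.find_min hex hk.1

theorem isShortest_congr (h : ∀ τ, τ <+: σ → (p τ ↔ q τ)) : IsShortest p σ ↔ IsShortest q σ := by
  unfold IsShortest
  rw [h σ List.prefix_rfl]
  exact and_congr_right' (forall₂_congr fun k _ => not_congr (h _ (List.take_prefix _ _)))

end Shortest

/-! ### Martin-Löf tests -/

section Measure

theorem measurable_binaryDigits : Measurable binaryDigits := by
  refine measurable_pi_iff.2 fun n => ?_
  have hfloor : Measurable fun x : ℝ => ⌊x * 2 ^ (n + 1)⌋ :=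
    Int.measurable_floor.comp (measurable_id.mul_const _)
  exact (Measurable.of_discrete (f := fun z : ℤ => decide (z % 2 = 1))).comp hfloor

theorem floor_mul_two_pow_eq_binVal {σ : List Bool} {x : ℝ} (hx : x ∈ Set.Ico (0 : ℝ) 1)
    (h : IsPrefixOf σ (binaryDigits x)) : ⌊x * 2 ^ σ.length⌋ = binVal σ := by
  induction σ using List.reverseRecOn with
  | nil => simp [binVal, hx.1, hx.2]
  | append_singleton σ b ih =>
    have hσ := ih (h.of_isPrefix (List.prefix_append _ _))
    have hdiv : ⌊x * 2 ^ (σ.length + 1)⌋ / 2 = ⌊x * 2 ^ σ.length⌋ := by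
      have := Int.floor_div_natCast (x * 2 ^ (σ.length + 1)) 2
      rw [Nat.cast_ofNat, pow_succ, ← mul_assoc, mul_div_cancel_right₀ _ two_ne_zero] at this
      rw [pow_succ, ← mul_assoc, this, Nat.cast_ofNat]
    have hmod : ⌊x * 2 ^ (σ.length + 1)⌋ % 2 = b.toNat := by
      have hdigit : binaryDigits x σ.length = b := by simpa using h ⟨σ.length, by simp⟩
      rw [← hdigit, binaryDigits]
      obtain h0 | h1 := Int.emod_two_eq_zero_or_one ⌊x * 2 ^ (σ.length + 1)⌋
      · rw [h0]; rfl
      · rw [h1]; rfl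
    rw [binVal_concat, List.length_append, List.length_singleton]
    push_cast
    omega

theorem measurableSet_cylinder (σ : List Bool) : MeasurableSet (cylinder σ) := by
  have : cylinder σ = ⋂ i : Fin σ.length, (fun X : ℕ → Bool => X i) ⁻¹' {σ.get i} := by
    ext X; simp [_root_.cylinder, IsPrefixOf]
  rw [this]
  exact MeasurableSet.iInter fun i => measurable_pi_apply _ (MeasurableSet.singleton _)

theorem ofReal_wt (n : ℕ) : ENNReal.ofReal (wt n) = 2⁻¹ ^ n := by
  rw [wt, ENNReal.ofReal_pow (by norm_num), ENNReal.ofReal_inv_of_pos two_pos,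
    ENNReal.ofReal_ofNat]

theorem μCantor_cylinder_le (σ : List Bool) :
    μCantor (cylinder σ) ≤ ENNReal.ofReal (wt σ.length) := by
  rw [μCantor, Measure.map_apply measurable_binaryDigits (measurableSet_cylinder σ),
    Measure.restrict_apply (measurable_binaryDigits (measurableSet_cylinder σ))]
  have hsub : binaryDigits ⁻¹' cylinder σ ∩ Set.Ico 0 1 ⊆
      Set.Ico (binVal σ * wt σ.length) ((binVal σ + 1) * wt σ.length) := by
    rintro x ⟨hxσ, hx⟩
    obtain ⟨hle, hlt⟩ := Int.floor_eq_iff.1 (floor_mul_two_pow_eq_binVal hx hxσ)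
    have hscale : x = x * 2 ^ σ.length * wt σ.length := by
      rw [mul_assoc, mul_comm (2 ^ _), wt_mul_two_pow, mul_one]
    rw [Int.cast_natCast] at hle hlt
    rw [hscale]
    exact ⟨mul_le_mul_of_nonneg_right hle (wt_nonneg _), mul_lt_mul_of_pos_right hlt (wt_pos _)⟩
  refine (measure_mono hsub).trans ?_
  rw [Real.volume_Ico, ← sub_mul, add_sub_cancel_left, one_mul]

/-- A property of strings inherited by all extensions. -/
def ExtensionClosed (p : List Bool → Prop) : Prop := ∀ ⦃σ τ⦄, σ <+: τ → p σ → p τ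

theorem μCantor_openOf_le {p : List Bool → Prop} (hp : ExtensionClosed p) {C : ℝ}
    (hC : ∀ s, strCount p s * wt s ≤ C) : μCantor (openOf {σ | p σ}) ≤ ENNReal.ofReal C := by
  classical
  have hUnion : openOf {σ | p σ} = ⋃ s, {X | p (strPrefix X s)} := by
    ext X
    simp only [openOf, Set.mem_iUnion, Set.mem_ofPred_eq, _root_.cylinder, exists_prop]
    exact ⟨fun ⟨σ, hpσ, hσ⟩ => ⟨σ.length, hσ.eq.symm ▸ hpσ⟩,
      fun ⟨s, hs⟩ => ⟨_, hs, isPrefixOf_strPrefix X s⟩⟩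
  have hmono : Monotone fun s => {X : ℕ → Bool | p (strPrefix X s)} :=
    fun s t hst X => hp (strPrefix_isPrefix X hst)
  rw [hUnion, hmono.measure_iUnion]
  refine iSup_le fun s => ?_
  calc μCantor {X | p (strPrefix X s)}
      ≤ μCantor (⋃ σ ∈ (strFinset s).filter p, cylinder σ) := by
        refine measure_mono fun X hX => Set.mem_iUnion₂.2 ⟨strPrefix X s, ?_, ?_⟩
        · exact Finset.mem_filter.2 ⟨mem_strFinset.2 (length_strPrefix X s), hX⟩
        · exact isPrefixOf_strPrefix X s
    _ ≤ ∑ σ ∈ (strFinset s).filter p, μCantor (cylinder σ) := measure_biUnion_finset_le _ _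
    _ ≤ ∑ _ ∈ (strFinset s).filter p, ENNReal.ofReal (wt s) := by
        refine Finset.sum_le_sum fun σ hσ => ?_
        rw [← mem_strFinset.1 (Finset.mem_filter.1 hσ).1]
        exact μCantor_cylinder_le σ
    _ = ENNReal.ofReal (strCount p s * wt s) := by
        rw [Finset.sum_const, nsmul_eq_mul, strCount_eq_card,
          ENNReal.ofReal_mul (Nat.cast_nonneg _), ENNReal.ofReal_natCast]
    _ ≤ ENNReal.ofReal C := ENNReal.ofReal_le_ofReal (hC s)

theorem MLRandom.exists_forall_not {X : ℕ → Bool} (hX : MLRandom X) {Q : ℕ → List Bool → Prop}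
    (hQ : PrimrecRel Q) (hclosed : ∀ n, ExtensionClosed (Q n))
    (hle : ∀ n s, strCount (Q n) s * wt s ≤ wt n) : ∃ n, ∀ m, ¬ Q n (strPrefix X m) := by
  obtain ⟨e, he⟩ := exists_oracleComputes_iff (P := fun _ k _ => ∃ σ : List Bool,
    Encodable.decode k.unpair.2 = some σ ∧ Q k.unpair.1 σ)
    (primrecPred_exists_eq_some (by fun_prop) (by
      exact hQ.comp (f := fun q : (List Bool × ℕ × ℕ) × List Bool => q.1.2.1.unpair.1)
        (by fun_prop) Primrec.snd))
  have hlevel : ∀ n, openOf {σ | Q n σ} = testLevel e emptyOracle n := fun n => by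
    simp only [testLevel, he, Nat.unpair_pair, Encodable.encodek, Option.some.injEq,
      exists_eq_left', exists_const]
  obtain ⟨n, hn⟩ := hX (fun n => openOf {σ | Q n σ})
    ⟨⟨e, hlevel⟩, fun n => (μCantor_openOf_le (hclosed n) (hle n)).trans_eq (ofReal_wt n)⟩
  exact ⟨n, fun m hm => hn (Set.mem_iUnion₂.2 ⟨_, hm, isPrefixOf_strPrefix X m⟩)⟩

end Measure

section Solovay

variable {W : ℕ → List Bool → Prop} {C : ℝ}

open Classical in
/-- The number of initial segments of `ρ` enumerated by `W` by stage `|ρ|`. -/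
noncomputable def prefixCount (W : ℕ → List Bool → Prop) (ρ : List Bool) : ℕ :=
  ((List.range (ρ.length + 1)).filter fun m => W ρ.length (ρ.take m)).length

theorem primrec_prefixCount (hW : PrimrecRel W) : Primrec (prefixCount W) := by
  classical
  have hmem : PrimrecPred fun q : List Bool × ℕ => W q.1.length (q.1.take q.2) :=
    hW.comp (by fun_prop) (by fun_prop)
  exact Primrec.list_length.comp (primrec_filter (by fun_prop) hmem)

theorem prefixCount_eq_card [∀ s, DecidablePred (W s)] (ρ : List Bool) :
    prefixCount W ρ =
      ((Finset.range (ρ.length + 1)).filter fun m => W ρ.length (ρ.take m)).card := by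
  rw [prefixCount, ← List.toFinset_card_of_nodup (List.nodup_range.filter _)]
  congr 1
  ext m; simp

theorem prefixCount_mono (hW : Monotone W) {ρ τ : List Bool} (h : ρ <+: τ) :
    prefixCount W ρ ≤ prefixCount W τ := by
  classical
  rw [prefixCount_eq_card, prefixCount_eq_card]
  obtain ⟨υ, rfl⟩ := h
  refine Finset.card_le_card fun m hm => ?_
  obtain ⟨hlt, hWm⟩ := Finset.mem_filter.1 hm
  have hle : m ≤ ρ.length := Nat.lt_succ_iff.1 (Finset.mem_range.1 hlt)
  rw [Finset.mem_filter, Finset.mem_range, List.take_append_of_le_length hle, List.length_append]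
  exact ⟨by omega, hW (Nat.le_add_right _ _) _ hWm⟩

theorem sum_prefixCount_eq (W : ℕ → List Bool → Prop) (s : ℕ) :
    ∑ ρ ∈ strFinset s, prefixCount W ρ =
      ∑ m ∈ Finset.range (s + 1), strCount (fun ρ => W s (ρ.take m)) s := by
  classical
  have hcount : ∀ ρ ∈ strFinset s,
      prefixCount W ρ = ((Finset.range (s + 1)).filter fun m => W s (ρ.take m)).card :=
    fun ρ hρ => by rw [prefixCount_eq_card, mem_strFinset.1 hρ]
  simp only [Finset.sum_congr rfl hcount, strCount_eq_card]
  exact Finset.sum_card_bipartiteAbove_eq_sum_card_bipartiteBelow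
    fun (ρ : List Bool) m => W s (ρ.take m)

theorem sum_prefixCount_le {s : ℕ} (hC : WeightLE List.length (W s) C) :
    (∑ ρ ∈ strFinset s, (prefixCount W ρ : ℝ)) * wt s ≤ C := by
  classical
  have hdisjoint : (Finset.range (s + 1) : Set ℕ).PairwiseDisjoint
      fun m => (strFinset m).filter (W s) := by
    intro m _ n _ hmn
    refine Finset.disjoint_left.2 fun σ hm hn => hmn ?_
    rw [← mem_strFinset.1 (Finset.mem_filter.1 hm).1, mem_strFinset.1 (Finset.mem_filter.1 hn).1]
  have hterm : ∀ m ∈ Finset.range (s + 1),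
      (strCount (fun ρ => W s (ρ.take m)) s : ℝ) * wt s ≤
        ∑ σ ∈ (strFinset m).filter (W s), wt σ.length := by
    intro m hm
    have hms : m ≤ s := Nat.lt_succ_iff.1 (Finset.mem_range.1 hm)
    have hle : (strCount (fun ρ => W s (ρ.take m)) s : ℝ) ≤ 2 ^ (s - m) * strCount (W s) m :=
      mod_cast strCount_le_mul hms fun _ _ h => h
    calc (strCount (fun ρ => W s (ρ.take m)) s : ℝ) * wt s
        ≤ 2 ^ (s - m) * strCount (W s) m * wt s := mul_le_mul_of_nonneg_right hle (wt_nonneg s)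
      _ = strCount (W s) m * wt m := by
        rw [two_pow_sub_eq hms]
        linear_combination (wt m * strCount (W s) m) * wt_mul_two_pow s
      _ = ∑ σ ∈ (strFinset m).filter (W s), wt σ.length := by
        rw [strCount_eq_card, ← nsmul_eq_mul, ← Finset.sum_const]
        exact Finset.sum_congr rfl fun σ hσ => by
          rw [mem_strFinset.1 (Finset.mem_filter.1 hσ).1]
  rw [← Nat.cast_sum, sum_prefixCount_eq, Nat.cast_sum, Finset.sum_mul]
  refine (Finset.sum_le_sum hterm).trans ?_
  rw [← Finset.sum_biUnion hdisjoint]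
  refine hC _ fun σ hσ => ?_
  obtain ⟨m, _, hm⟩ := Finset.mem_biUnion.1 hσ
  exact (Finset.mem_filter.1 hm).2

theorem strCount_le_prefixCount_mul_le {s : ℕ} (hC : WeightLE List.length (W s) C) (k : ℕ) :
    k * (strCount (fun ρ => k ≤ prefixCount W ρ) s * wt s) ≤ C := by
  classical
  have hmarkov : (strCount (fun ρ => k ≤ prefixCount W ρ) s : ℝ) * k ≤
      ∑ ρ ∈ strFinset s, (prefixCount W ρ : ℝ) := by
    rw [strCount_eq_card, ← nsmul_eq_mul]
    exact (Finset.card_nsmul_le_sum _ _ _ fun ρ hρ => mod_cast (Finset.mem_filter.1 hρ).2).trans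
      (Finset.sum_le_sum_of_subset_of_nonneg (Finset.filter_subset _ _)
        fun ρ _ _ => Nat.cast_nonneg _)
  linarith [mul_le_mul_of_nonneg_right hmarkov (wt_nonneg s), sum_prefixCount_le hC]

theorem lt_prefixCount_strPrefix (hW : Monotone W) {X : ℕ → Bool} {n m t : ℕ} (hnm : n < m)
    (h : W t (strPrefix X m)) :
    prefixCount W (strPrefix X n) < prefixCount W (strPrefix X (max m t)) := by
  classical
  rw [prefixCount_eq_card, prefixCount_eq_card]
  simp only [length_strPrefix]
  refine Finset.card_lt_card ⟨fun i hi => ?_, fun hsub => ?_⟩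
  · obtain ⟨hlt, hi⟩ := Finset.mem_filter.1 hi
    rw [Finset.mem_range] at hlt
    rw [take_strPrefix X (by omega)] at hi
    rw [Finset.mem_filter, Finset.mem_range, take_strPrefix X (by omega)]
    exact ⟨by omega, hW (by omega) _ hi⟩
  · have hm := @hsub m (by
      rw [Finset.mem_filter, Finset.mem_range, take_strPrefix X (le_max_left _ _)]
      exact ⟨by omega, hW (le_max_right _ _) _ h⟩)
    have := Finset.mem_range.1 (Finset.mem_filter.1 hm).1
    omega

theorem MLRandom.passes_solovay_test {X : ℕ → Bool} (hX : MLRandom X) (hW : IsEnumeration W)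
    (hC : ∀ s, WeightLE List.length (W s) C) : ∃ N, ∀ m, N ≤ m → ∀ s, ¬ W s (strPrefix X m) := by
  obtain ⟨c, hc⟩ := exists_nat_ge (max C 1)
  have hc0 : (0 : ℝ) < c := one_pos.trans_le ((le_max_right _ _).trans hc)
  have hprim := primrec_prefixCount hW.primrecRel
  obtain ⟨n, hn⟩ := hX.exists_forall_not (Q := fun n ρ => c * 2 ^ n ≤ prefixCount W ρ)
    (show PrimrecPred fun q : ℕ × List Bool => c * 2 ^ q.1 ≤ prefixCount W q.2 by
      fun_prop).primrecRel
    (fun n σ τ h => le_trans' (prefixCount_mono hW.monotone h)) fun n s => by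
      have hle := (strCount_le_prefixCount_mul_le (hC s) (c * 2 ^ n)).trans
        ((le_max_left _ _).trans hc)
      push_cast at hle
      rw [wt_eq_one_div n, le_div_iff₀ (by positivity)]
      refine le_of_mul_le_mul_left ?_ hc0
      linarith
  by_contra! hcon
  have hgrow : ∀ k, ∃ s, k ≤ prefixCount W (strPrefix X s) := by
    intro k
    induction k with
    | zero => exact ⟨0, Nat.zero_le _⟩
    | succ k ih =>
      obtain ⟨s, hs⟩ := ih
      obtain ⟨m, hm, t, ht⟩ := hcon (s + 1)
      exact ⟨_, hs.trans_lt (lt_prefixCount_strPrefix hW.monotone hm ht)⟩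
  obtain ⟨s, hs⟩ := hgrow (c * 2 ^ n)
  exact hn s hs

end Solovay

/-! ### Complements of sets enumerable in a `K`-trivial oracle -/

section Low

variable {β γ δ : Type*}

theorem exists_forall_mem_of_monotone {P : ℕ → β → Prop} (hP : Monotone P) (F : Finset β)
    (h : ∀ x ∈ F, ∃ s, P s x) : ∃ s, ∀ x ∈ F, P s x :=
  ((Filter.eventually_all_finset F).2 fun x hx =>
    let ⟨s, hs⟩ := h x hx
    Filter.eventually_atTop.2 ⟨s, fun _ hst => hP hst x hs⟩).exists

theorem weightLE_exists_stage {size : β → ℕ} {W : ℕ → β → Prop} {C : ℝ} (hW : Monotone W)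
    (hC : ∀ s, WeightLE size (W s) C) : WeightLE size (fun x => ∃ s, W s x) C := fun F hF =>
  let ⟨s, hs⟩ := exists_forall_mem_of_monotone hW F hF
  hC s F hs

theorem WeightLE.finite {size : β → ℕ} {S : β → Prop} {C : ℝ} (h : WeightLE size S C) (k : ℕ) :
    {x | S x ∧ size x ≤ k}.Finite := by
  by_contra hinf
  obtain ⟨c, hc⟩ := exists_nat_gt (C * 2 ^ k)
  obtain ⟨F, hF, hcard⟩ := Set.Infinite.exists_subset_card_eq hinf c
  have hle : (c : ℝ) * wt k ≤ C := calc
    (c : ℝ) * wt k ≤ ∑ x ∈ F, wt (size x) := by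
      rw [← hcard, ← nsmul_eq_mul]
      exact Finset.card_nsmul_le_sum _ _ _ fun x hx => wt_anti (hF hx).2
    _ ≤ C := h F fun x hx => (hF hx).1
  have := mul_le_mul_of_nonneg_right hle (pow_nonneg zero_le_two k)
  rw [mul_assoc, wt_mul_two_pow, mul_one] at this
  linarith

theorem zeroJump_eq_true_iff {n : ℕ} :
    zeroJump n = true ↔ ∃ m, OracleComputes n emptyOracle n m := by
  classical
  exact decide_eq_true_iff

variable [Primcodable γ] [Primcodable δ]

theorem exists_zeroJump_reduction {Q : γ → δ → Prop} (hQ : PrimrecRel Q) :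
    ∃ f : γ → ℕ, Primrec f ∧ ∀ x, zeroJump (f x) = true ↔ ∃ z, Q x z := by
  have hprim : PrimrecPred fun p : ℕ × ℕ × ℕ => ∃ x : γ, Encodable.decode p.1.unpair.1 = some x ∧
      ∃ z : δ, Encodable.decode p.2.1 = some z ∧ Q x z ∧ p.2.2 = 0 :=
    primrecPred_exists_eq_some (by fun_prop) <| primrecPred_exists_eq_some (by fun_prop) <|
      (hQ.comp (f := fun q : ((ℕ × ℕ × ℕ) × γ) × δ => q.1.2) (by fun_prop) (by fun_prop)).and
        (by fun_prop)
  obtain ⟨c, hc⟩ := exists_code_mem_eval_iff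
    (G := fun n t k => ∃ x : γ, Encodable.decode n.unpair.1 = some x ∧
      ∃ z : δ, Encodable.decode t = some z ∧ Q x z ∧ k = 0)
    hprim (by rintro _ _ _ _ _ ⟨-, -, -, -, -, rfl⟩ ⟨-, -, -, -, -, rfl⟩; rfl)
  refine ⟨fun x => Encodable.encode (c.curry (Encodable.encode x)), by fun_prop, fun x => ?_⟩
  have hWEnum : ∀ k, WEnum (Encodable.encode (c.curry (Encodable.encode x))) k ↔ ∃ z, Q x z := by
    intro k
    simp only [WEnum, Denumerable.ofNat_encode, Nat.Partrec.Code.eval_curry, Part.dom_iff_mem, hc,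
      Nat.unpair_pair, Encodable.encodek, Option.some.injEq, exists_eq_left']
    exact ⟨fun ⟨_, _, z, _, hz, _⟩ => ⟨z, hz⟩,
      fun ⟨z, hz⟩ => ⟨0, Encodable.encode z, z, Encodable.encodek z, hz, rfl⟩⟩
  simp only [zeroJump_eq_true_iff, OracleComputes, hWEnum]
  exact ⟨fun ⟨_, _, _, h⟩ => h, fun h => ⟨0, [], fun i => i.elim0, h⟩⟩

/-- The string analogue of `joinSet`, cut off at the length of the shorter string so that it is
monotone in both arguments. -/
def joinStr (α ρ : List Bool) : List Bool :=
  (List.range (min α.length ρ.length)).map fun i =>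
    if i % 2 = 0 then α[i / 2]?.getD false else ρ[i / 2]?.getD false

@[fun_prop]
theorem primrec_joinStr {f g : γ → List Bool} (hf : Primrec f) (hg : Primrec g) :
    Primrec fun a => joinStr (f a) (g a) := by
  unfold joinStr; fun_prop

variable {A R : ℕ → Bool} {α α' ρ ρ' : List Bool}

theorem joinStr_eq_strPrefix (hα : IsPrefixOf α A) (hρ : IsPrefixOf ρ R) :
    joinStr α ρ = strPrefix (joinSet A R) (min α.length ρ.length) := by
  have hget : ∀ {σ : List Bool} {X : ℕ → Bool} {i : ℕ}, IsPrefixOf σ X → i < σ.length →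
      σ[i]?.getD false = X i := fun hσ hi => by simp [hσ ⟨_, hi⟩, hi]
  refine List.map_congr_left fun i hi => ?_
  rw [List.mem_range, lt_min_iff] at hi
  rw [hget hα (by omega), hget hρ (by omega), joinSet]

theorem joinStr_isPrefix (hα : α <+: α') (hρ : ρ <+: ρ') : joinStr α ρ <+: joinStr α' ρ' := by
  have hpad : ∀ σ : List Bool, IsPrefixOf σ fun i => σ[i]?.getD false := fun σ i => by simp
  rw [joinStr_eq_strPrefix (hpad α') (hpad ρ'),
    joinStr_eq_strPrefix ((hpad α').of_isPrefix hα) ((hpad ρ').of_isPrefix hρ)]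
  exact strPrefix_isPrefix _ (min_le_min hα.length_le hρ.length_le)

theorem exists_oracleStage_joinStr_iff {X : ℕ → Bool} {e : ℕ}
    (he : ∀ n m, OracleComputes e (joinSet A R) n m ↔ m = natOfBool (X n)) (n m : ℕ) :
    (∃ s, OracleStage e (joinStr (strPrefix A s) (strPrefix R s)) n m) ↔ m = natOfBool (X n) := by
  rw [← he, oracleComputes_iff_exists_oracleStage]
  refine exists_congr fun s => ?_
  rw [joinStr_eq_strPrefix (isPrefixOf_strPrefix A s) (isPrefixOf_strPrefix R s),
    length_strPrefix, length_strPrefix, min_self]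

theorem weightLE_shortest {Q : List Bool → γ → Prop} :
    WeightLE (fun p : γ × List Bool => Encodable.encode p.1 + 1)
      (fun p => IsShortest (Q · p.1) p.2 ∧ IsPrefixOf p.2 A) 1 := by
  classical
  intro F hF
  have hinj : Set.InjOn (fun p : γ × List Bool => Encodable.encode p.1) F := by
    rintro ⟨y, σ⟩ hσ ⟨z, τ⟩ hτ hyz
    obtain rfl : y = z := Encodable.encode_injective hyz
    obtain ⟨hσ, hσA⟩ := hF _ hσ
    obtain ⟨hτ, hτA⟩ := hF _ hτ
    obtain h | h := hσA.isPrefix_or_isPrefix hτA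
    · exact Prod.ext rfl (IsShortest.eq_of_isPrefix hσ.1 hτ h)
    · exact Prod.ext rfl (IsShortest.eq_of_isPrefix hτ.1 hσ h).symm
  rw [← Finset.sum_image (f := fun n => wt (n + 1)) hinj]
  exact sum_wt_succ_le_one _

theorem exists_finite_cover {Q : List Bool → γ → Prop} (hA : KTrivial A) (hQ : PrimrecRel Q) :
    ∃ W : ℕ → γ × List Bool → Prop, IsEnumeration W ∧ (∀ y, {σ | ∃ s, W s (y, σ)}.Finite) ∧
      ∀ y σ, IsShortest (Q · y) σ → IsPrefixOf σ A → ∃ s, W s (y, σ) := by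
  let D : OracleItems (γ × List Bool) :=
    { Valid := fun p => IsShortest (Q · p.1) p.2
      use := Prod.snd
      size := fun p => Encodable.encode p.1 + 1
      primrecPred_valid := primrecPred_isShortest
        (hQ.comp Primrec.snd (Primrec.fst.comp Primrec.fst)) Primrec.snd
      primrec_use := Primrec.snd
      primrec_size := by fun_prop }
  obtain ⟨W, hW, ⟨C, hC⟩, hcover, -⟩ := D.exists_cover hA weightLE_shortest
  refine ⟨W, hW, fun y => ?_, fun y σ hσ hσA => hcover (y, σ) ⟨hσ, hσA⟩⟩
  have hfin := (weightLE_exists_stage hW.monotone hC).finite (Encodable.encode y + 1)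
  refine (hfin.preimage (Prod.mk_right_injective y).injOn).subset fun σ hσ => ?_
  exact ⟨hσ, le_rfl⟩

-- `∅′ ≤_T A ⊕ R` confirms that all uses which the cover keeps for `y` are shorter than `s`.
theorem exists_search_bound (hA : KTrivial A) (hcup : TuringLE zeroJump (joinSet A R))
    {Q : List Bool → γ → Prop} (hQ : PrimrecRel Q) :
    ∃ B : List Bool → List Bool → γ × ℕ → Prop,
      (PrimrecPred fun p : List Bool × List Bool × γ × ℕ => B p.1 p.2.1 p.2.2) ∧
      (∀ ⦃α α' ρ ρ' y⦄, α <+: α' → ρ <+: ρ' → B α ρ y → B α' ρ' y) ∧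
      (∀ y s t, B (strPrefix A t) (strPrefix R t) (y, s) → (∃ m, Q (strPrefix A m) y) →
        ∃ k < s, Q (strPrefix A k) y) ∧
      ∀ y, ∃ s t, B (strPrefix A t) (strPrefix R t) (y, s) := by
  obtain ⟨W, hW, hfin, hcover⟩ := exists_finite_cover hA hQ
  obtain ⟨f, hf, hfW⟩ := exists_zeroJump_reduction
    (Q := fun (x : γ × ℕ) (z : List Bool × ℕ) => x.2 ≤ z.1.length ∧ W z.2 (x.1, z.1)) <|
    (show PrimrecPred fun q : (γ × ℕ) × List Bool × ℕ => q.1.2 ≤ q.2.1.length by fun_prop).and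
      (hW.primrecRel.comp (f := fun q : (γ × ℕ) × List Bool × ℕ => q.2.2) (by fun_prop)
        (by fun_prop))
  obtain ⟨e, he⟩ := hcup
  have hbound : ∀ y s,
      (∃ t, OracleStage e (joinStr (strPrefix A t) (strPrefix R t)) (f (y, s)) 0) ↔
        ∀ σ t, W t (y, σ) → σ.length < s := by
    intro y s
    have hbool : ∀ b : Bool, 0 = natOfBool b ↔ ¬ b = true := by decide
    rw [exists_oracleStage_joinStr_iff he, hbool, hfW, Prod.exists]
    push Not
    exact forall₂_congr fun σ t => ⟨fun h hσ => not_le.1 fun hle => h hle hσ,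
      fun h hle hσ => hle.not_gt (h hσ)⟩
  refine ⟨fun α ρ x => OracleStage e (joinStr α ρ) (f x) 0, ?_, fun α α' ρ ρ' y hα hρ h =>
    h.mono (joinStr_isPrefix hα hρ), fun y s t ht ⟨m, hm⟩ => ?_, fun y => ?_⟩
  · exact primrecPred_oracleStage.comp (f := fun q : List Bool × List Bool × γ × ℕ =>
      (e, joinStr q.1 q.2.1, f q.2.2, 0)) (by fun_prop)
  · obtain ⟨σ, hσm, hσ⟩ := exists_isShortest (p := (Q · y)) hm
    have hσA := (isPrefixOf_strPrefix A m).of_isPrefix hσm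
    obtain ⟨u, hu⟩ := hcover y σ hσ hσA
    exact ⟨σ.length, (hbound y s).1 ⟨t, ht⟩ σ u hu, hσA.eq.symm ▸ hσ.1⟩
  · obtain ⟨s, hs⟩ : ∃ s, ∀ σ ∈ (hfin y).toFinset, σ.length < s :=
      ⟨_, fun σ hσ => Nat.lt_succ_of_le (Finset.le_sup (f := List.length) hσ)⟩
    exact ⟨s, (hbound y s).2 fun σ t hσ => hs σ ((hfin y).mem_toFinset.2 ⟨t, hσ⟩)⟩

theorem exists_complement_enumeration (hA : KTrivial A)
    (hcup : TuringLE zeroJump (joinSet A R)) {Q : List Bool → γ → Prop} (hQ : PrimrecRel Q) :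
    ∃ N : List Bool → List Bool → γ → Prop,
      (PrimrecPred fun p : List Bool × List Bool × γ => N p.1 p.2.1 p.2.2) ∧
      (∀ ⦃α α' ρ ρ' y⦄, α <+: α' → ρ <+: ρ' → N α ρ y → N α' ρ' y) ∧
      ∀ y, (∃ s, N (strPrefix A s) (strPrefix R s) y) ↔ ¬ ∃ s, Q (strPrefix A s) y := by
  obtain ⟨B, hB, hBmono, hbound, hBex⟩ := exists_search_bound hA hcup hQ
  refine ⟨fun α ρ y => ∃ s ≤ α.length, B α ρ (y, s) ∧ ∀ k < s, ¬ Q (α.take k) y, ?_, ?_,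
    fun y => ⟨?_, fun hy => ?_⟩⟩
  · have hQ' : PrimrecPred fun q : (List Bool × List Bool × γ) × ℕ =>
        ∀ k < q.2, ¬ Q (q.1.1.take k) q.1.2.2 :=
      primrecPred_forall_lt (by fun_prop) (hQ.comp
        (f := fun q : ((List Bool × List Bool × γ) × ℕ) × ℕ => q.1.1.1.take q.2)
        (g := fun q => q.1.1.2.2) (by fun_prop) (by fun_prop)).not
    have hB' : PrimrecPred fun q : (List Bool × List Bool × γ) × ℕ =>
        B q.1.1 q.1.2.1 (q.1.2.2, q.2) :=
      hB.comp (f := fun q : (List Bool × List Bool × γ) × ℕ =>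
        (q.1.1, q.1.2.1, q.1.2.2, q.2)) (by fun_prop)
    exact primrecPred_exists_le (by fun_prop) (hB'.and hQ')
  · rintro _ _ ρ ρ' y ⟨υ, rfl⟩ hρ ⟨s, hs, hsB, hsQ⟩
    refine ⟨s, hs.trans (by simp), hBmono (List.prefix_append _ _) hρ hsB, fun k hk => ?_⟩
    rw [List.take_append_of_le_length (by omega)]
    exact hsQ k hk
  · rintro ⟨t, s, hs, hsB, hsQ⟩ hy
    obtain ⟨k, hk, hkQ⟩ := hbound y s t hsB hy
    rw [length_strPrefix] at hs
    refine hsQ k hk ?_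
    rwa [take_strPrefix A (by omega)]
  · obtain ⟨s, t, ht⟩ := hBex y
    refine ⟨max s t, s, ?_, ?_, fun k hk hkQ => ?_⟩
    · rw [length_strPrefix]; exact le_max_left _ _
    · exact hBmono (strPrefix_isPrefix A (le_max_right _ _))
        (strPrefix_isPrefix R (le_max_right _ _)) ht
    · rw [take_strPrefix A (by omega)] at hkQ
      exact hy ⟨k, hkQ⟩

end Low

/-! ### Self-referential markings -/

/-- A marking of the strings `ρ` by pairs `(j, σ)`, enumerable in `A ⊕ R`: along `A` and `R`, the
pair `(j, σ)` gets marked exactly when `A` does not see that the strings it leaves unmarked have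
density less than `2⁻ʲ` above `σ`. -/
structure Marking (A R : ℕ → Bool) where
  /-- The oracle strings `α` and `ρ` enumerate the mark `(j, σ)`. -/
  Marked : List Bool → List Bool → ℕ → List Bool → Prop
  primrecPred_marked :
    PrimrecPred fun p : List Bool × List Bool × ℕ × List Bool => Marked p.1 p.2.1 p.2.2.1 p.2.2.2
  mono : ∀ ⦃α α' ρ ρ' j σ⦄, α <+: α' → ρ <+: ρ' → Marked α ρ j σ → Marked α' ρ' j σ
  exists_marked_iff : ∀ j σ, (∃ s, Marked (strPrefix A s) (strPrefix R s) j σ) ↔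
    ¬ ∃ s, LowDensity (fun ρ => ¬ Marked (strPrefix A s) ρ j σ) j s σ

-- The index `e` of the `A`-c.e. predicate is part of its argument, so the self reference needs
-- no recursion theorem.
theorem exists_marking {A R : ℕ → Bool} (hA : KTrivial A)
    (hcup : TuringLE zeroJump (joinSet A R)) : Nonempty (Marking A R) := by
  have hQ : PrimrecRel fun (α : List Bool) (y : ℕ × ℕ × List Bool) =>
      OracleStage y.1 α (Encodable.encode y) 0 :=
    (show PrimrecPred fun q : List Bool × ℕ × ℕ × List Bool =>
      OracleStage q.2.1 q.1 (Encodable.encode q.2) 0 by fun_prop).primrecRel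
  obtain ⟨N, hN, hNmono, hNiff⟩ := exists_complement_enumeration hA hcup hQ
  have hlow : PrimrecPred fun q : List Bool × ℕ × ℕ × List Bool =>
      LowDensity (fun ρ => ¬ N q.1 ρ q.2) q.2.2.1 q.1.length q.2.2.2 :=
    primrecPred_lowDensity (hN.comp (f := fun q : (List Bool × ℕ × ℕ × List Bool) × List Bool =>
      (q.1.1, q.2, q.1.2)) (by fun_prop)).not (by fun_prop) (by fun_prop) (by fun_prop)
  obtain ⟨e, he⟩ := exists_oracleComputes_iff (P := fun α n _ => ∃ y : ℕ × ℕ × List Bool,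
      Encodable.decode n = some y ∧ LowDensity (fun ρ => ¬ N α ρ y) y.2.1 α.length y.2.2)
    (primrecPred_exists_eq_some (by fun_prop) (hlow.comp
      (f := fun q : (List Bool × ℕ × ℕ) × ℕ × ℕ × List Bool => (q.1.1, q.2)) (by fun_prop)))
  refine ⟨⟨fun α ρ j σ => N α ρ (e, j, σ), hN.comp
    (f := fun q : List Bool × List Bool × ℕ × List Bool => (q.1, q.2.1, e, q.2.2)) (by fun_prop),
    fun _ _ _ _ _ _ hα hρ => hNmono hα hρ, fun j σ => ?_⟩⟩
  rw [hNiff, ← oracleComputes_iff_exists_oracleStage, he]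
  simp only [Encodable.encodek, Option.some.injEq, exists_eq_left', length_strPrefix]

namespace Marking

variable {A R : ℕ → Bool} (T : Marking A R)

@[fun_prop]
theorem primrecPred_marked_comp {β : Type*} [Primcodable β] {α ρ σ : β → List Bool} {j : β → ℕ}
    (hα : Primrec α) (hρ : Primrec ρ) (hj : Primrec j) (hσ : Primrec σ) :
    PrimrecPred fun b => T.Marked (α b) (ρ b) (j b) (σ b) :=
  T.primrecPred_marked.comp (hα.pair (hρ.pair (hj.pair hσ)))

/-- The string `σ` is `j`-big relative to `α` if the strings left unmarked by `(j, σ)` have density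
less than `2⁻ʲ` above `σ`. -/
def Big (α : List Bool) (j : ℕ) (σ : List Bool) : Prop :=
  LowDensity (fun ρ => ¬ T.Marked α ρ j σ) j α.length σ

@[fun_prop]
theorem primrecPred_big {β : Type*} [Primcodable β] {α σ : β → List Bool} {j : β → ℕ}
    (hα : Primrec α) (hj : Primrec j) (hσ : Primrec σ) :
    PrimrecPred fun b => T.Big (α b) (j b) (σ b) := by
  unfold Big; fun_prop

variable {T}

theorem exists_marked_iff_not_exists_big {j : ℕ} {σ : List Bool} :
    (∃ s, T.Marked (strPrefix A s) (strPrefix R s) j σ) ↔ ¬ ∃ s, T.Big (strPrefix A s) j σ := by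
  simp only [Big, length_strPrefix, T.exists_marked_iff]

end Marking

/-! ### Big initial segments of a random sequence -/

section StringCover

variable {A : ℕ → Bool} {P : List Bool → List Bool → Prop} {C : ℝ} {j : ℕ}

/-- The strings `ρ` such that `P α ρ` for the initial segment `α` of the oracle of the same length,
with weight `2 ^ (-|ρ| - j)`. -/
def stringItems (hP : PrimrecRel P) (j : ℕ) : OracleItems (List Bool × List Bool) where
  Valid x := x.1.length = x.2.length ∧ P x.1 x.2
  use := Prod.fst
  size x := x.2.length + j
  primrecPred_valid := (show PrimrecPred fun x : List Bool × List Bool =>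
    x.1.length = x.2.length by fun_prop).and hP
  primrec_use := Primrec.fst
  primrec_size := by fun_prop

theorem stringItems_enumerated_iff {hP : PrimrecRel P} {α ρ : List Bool} :
    (stringItems hP j).Enumerated A (α, ρ) ↔
      α = strPrefix A ρ.length ∧ P (strPrefix A ρ.length) ρ := by
  constructor
  · rintro ⟨⟨hlen, hαρ⟩, hα⟩
    have hαA : strPrefix A α.length = α := hα.eq
    dsimp only at hlen hαρ
    rw [← hlen, hαA]
    exact ⟨rfl, hαρ⟩
  · rintro ⟨rfl, h⟩
    exact ⟨⟨length_strPrefix _ _, h⟩, isPrefixOf_strPrefix _ _⟩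

theorem sum_wt_stringItems (hP : PrimrecRel P) (F : Finset (List Bool × List Bool)) :
    ∑ x ∈ F, wt ((stringItems hP j).size x) = (∑ x ∈ F, wt x.2.length) * wt j := by
  rw [Finset.sum_mul]
  exact Finset.sum_congr rfl fun x _ => wt_add _ _

theorem weightLE_stringItems (hP : PrimrecRel P)
    (hw : WeightLE List.length (fun ρ => P (strPrefix A ρ.length) ρ) C) (hj : C ≤ 2 ^ j) :
    WeightLE (stringItems hP j).size ((stringItems hP j).Enumerated A) 1 := by
  classical
  intro F hF
  have hF' : ∀ x ∈ F, x.1 = strPrefix A x.2.length ∧ P (strPrefix A x.2.length) x.2 :=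
    fun x hx => stringItems_enumerated_iff.1 (hF x hx)
  have hinj : Set.InjOn Prod.snd (F : Set (List Bool × List Bool)) := fun x hx y hy hxy =>
    Prod.ext (by rw [(hF' x hx).1, (hF' y hy).1, hxy]) hxy
  rw [sum_wt_stringItems, ← Finset.sum_image (f := fun ρ => wt ρ.length) hinj]
  have hle := hw (F.image Prod.snd) (Finset.forall_mem_image.2 fun x hx => (hF' x hx).2)
  calc _ ≤ 2 ^ j * wt j := mul_le_mul_of_nonneg_right (hle.trans hj) (wt_nonneg j)
    _ = 1 := by rw [mul_comm, wt_mul_two_pow]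

theorem exists_string_cover (hA : KTrivial A) (hP : PrimrecRel P)
    (hw : WeightLE List.length (fun ρ => P (strPrefix A ρ.length) ρ) C) :
    ∃ W : ℕ → List Bool → Prop, IsEnumeration W ∧ (∃ C', ∀ s, WeightLE List.length (W s) C') ∧
      ∀ ρ, P (strPrefix A ρ.length) ρ → ∃ s, W s ρ := by
  classical
  obtain ⟨j, hj⟩ := pow_unbounded_of_one_lt C one_lt_two
  obtain ⟨W, hW, ⟨C', hC'⟩, hcover, -⟩ :=
    (stringItems hP j).exists_cover hA (weightLE_stringItems hP hw hj.le)
  refine ⟨fun s ρ => ∃ α ∈ strs ρ.length, W s (α, ρ), ⟨?_, ?_⟩, ⟨C' * 2 ^ j, fun s F hF => ?_⟩,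
    fun ρ hρ => ?_⟩
  · have hW' : PrimrecPred fun q : (ℕ × List Bool) × List Bool => W q.1.1 (q.2, q.1.2) :=
      hW.primrecRel.comp (by fun_prop) (by fun_prop)
    exact (show PrimrecPred fun q : ℕ × List Bool => ∃ α ∈ strs q.2.length, W q.1 (α, q.2) from
      primrecPred_exists_mem (by fun_prop) hW').primrecRel
  · exact fun s t hst ρ ⟨α, hα, h⟩ => ⟨α, hα, hW.monotone hst _ h⟩
  · choose! g _ hg using hF
    have hle := hC' s (F.image fun ρ => (g ρ, ρ)) (Finset.forall_mem_image.2 hg)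
    rw [sum_wt_stringItems, Finset.sum_image fun _ _ _ _ h => congrArg Prod.snd h] at hle
    have := mul_le_mul_of_nonneg_right hle (pow_nonneg zero_le_two j)
    rwa [mul_assoc, wt_mul_two_pow, mul_one] at this
  · obtain ⟨s, hs⟩ := hcover (strPrefix A ρ.length, ρ) (stringItems_enumerated_iff.2 ⟨rfl, hρ⟩)
    exact ⟨s, _, mem_strs.2 (length_strPrefix _ _), hs⟩

end StringCover

theorem sum_wt_le_of_fiber_le {β : Type*} [DecidableEq β] {F : Finset β} {size : β → ℕ}
    {root : β} {parent : β → β} {j : ℕ} (hparent : ∀ x ∈ F, x ≠ root → parent x ∈ F)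
    (hfiber : ∀ y ∈ F, ∑ x ∈ F with x ≠ root ∧ parent x = y, wt (size x) ≤
      (1 - wt j) * wt (size y)) :
    ∑ x ∈ F, wt (size x) ≤ 2 ^ j := by
  have hroot : ∑ x ∈ F, wt (size x) ≤ ∑ x ∈ F.erase root, wt (size x) + 1 := by
    by_cases h : root ∈ F
    · rw [← Finset.sum_erase_add _ _ h]
      gcongr
      exact wt_le_one _
    · rw [Finset.erase_eq_of_notMem h]
      exact (lt_add_one _).le
  have hnonroot : ∑ x ∈ F.erase root, wt (size x) ≤
      (1 - wt j) * ∑ x ∈ F, wt (size x) := by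
    rw [← Finset.sum_fiberwise_of_maps_to fun x hx =>
      hparent x (Finset.mem_of_mem_erase hx) (Finset.ne_of_mem_erase hx), Finset.mul_sum]
    refine Finset.sum_le_sum fun y hy => (hfiber y hy).trans_eq' ?_
    rw [← Finset.filter_ne', Finset.filter_filter]
  have hS : wt j * ∑ x ∈ F, wt (size x) ≤ 1 := by linarith
  have := mul_le_mul_of_nonneg_left hS (pow_nonneg zero_le_two j)
  rwa [← mul_assoc, mul_comm _ (wt j), wt_mul_two_pow, one_mul, mul_one] at this

namespace Marking

variable {A R : ℕ → Bool} {T : Marking A R} {j n m : ℕ} {α ρ σ : List Bool}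

open Classical in
/-- The last exit along `ρ` up to position `n`. Exits start at the empty string, and the exit after
`c` is the first position `m` at which `ρ.take c` is marked without being known to be big. -/
noncomputable def lastExit (T : Marking A R) (j : ℕ) (α ρ : List Bool) (n : ℕ) : ℕ :=
  Nat.rec 0 (fun m c => if T.Marked (α.take (m + 1)) (ρ.take (m + 1)) j (ρ.take c) ∧
    ¬ T.Big (α.take (m + 1)) j (ρ.take c) then m + 1 else c) n

@[fun_prop]
theorem primrec_lastExit {β : Type*} [Primcodable β] {α ρ : β → List Bool} {j n : β → ℕ}
    (hj : Primrec j) (hα : Primrec α) (hρ : Primrec ρ) (hn : Primrec n) :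
    Primrec fun b => T.lastExit (j b) (α b) (ρ b) (n b) := by
  classical
  unfold lastExit
  refine primrec_natRec hn (Primrec.const 0) (Primrec.ite ?_ ?_ ?_) <;> fun_prop

open Classical in
theorem lastExit_succ (T : Marking A R) (j : ℕ) (α ρ : List Bool) (n : ℕ) :
    T.lastExit j α ρ (n + 1) =
      if T.Marked (α.take (n + 1)) (ρ.take (n + 1)) j (ρ.take (T.lastExit j α ρ n)) ∧
        ¬ T.Big (α.take (n + 1)) j (ρ.take (T.lastExit j α ρ n)) then n + 1
      else T.lastExit j α ρ n := rfl

theorem lastExit_le : T.lastExit j α ρ n ≤ n := by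
  induction n with
  | zero => exact le_rfl
  | succ n ih => rw [lastExit_succ]; split_ifs <;> omega

theorem lastExit_mono : Monotone (T.lastExit j α ρ) := monotone_nat_of_le_succ fun n => by
  have := lastExit_le (T := T) (j := j) (α := α) (ρ := ρ) (n := n)
  rw [lastExit_succ]; split_ifs <;> omega

theorem lastExit_take (h : n ≤ m) :
    T.lastExit j (α.take m) (ρ.take m) n = T.lastExit j α ρ n := by
  classical
  induction n with
  | zero => rfl
  | succ n ih =>
    have hle : T.lastExit j α ρ n ≤ m := lastExit_le.trans (by omega)
    rw [lastExit_succ, lastExit_succ, ih (by omega)]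
    simp only [List.take_take, min_eq_left h, min_eq_left hle]

theorem lastExit_lastExit : T.lastExit j α ρ (T.lastExit j α ρ n) = T.lastExit j α ρ n := by
  induction n with
  | zero => rfl
  | succ n ih =>
    rw [lastExit_succ]
    split_ifs with h
    · rw [lastExit_succ, if_pos h]
    · exact ih

/-- The string `ρ` ends at an exit. -/
def IsExit (T : Marking A R) (j : ℕ) (α ρ : List Bool) : Prop :=
  T.lastExit j α ρ ρ.length = ρ.length

/-- The longest proper initial segment of `ρ` ending at an exit. -/
noncomputable def parent (T : Marking A R) (j : ℕ) (α ρ : List Bool) : List Bool :=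
  ρ.take (T.lastExit j α ρ (ρ.length - 1))

theorem isExit_take_lastExit (hn : n ≤ ρ.length) :
    T.IsExit j (α.take (T.lastExit j α ρ n)) (ρ.take (T.lastExit j α ρ n)) := by
  rw [IsExit, List.length_take, min_eq_left (lastExit_le.trans hn), lastExit_take le_rfl,
    lastExit_lastExit]

theorem IsExit.marked_parent (h : T.IsExit j α ρ) (hρ : ρ ≠ []) (hα : α.length = ρ.length) :
    T.Marked α ρ j (T.parent j α ρ) ∧ ¬ T.Big α j (T.parent j α ρ) := by
  obtain ⟨n, hn⟩ := Nat.exists_eq_add_one_of_ne_zero (List.length_pos_iff.2 hρ).ne'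
  have hle : T.lastExit j α ρ n ≤ n := lastExit_le
  rw [IsExit, hn, lastExit_succ] at h
  rw [parent, hn, Nat.add_sub_cancel]
  split_ifs at h with hexit
  · rwa [List.take_of_length_le (by omega), List.take_of_length_le (by omega)] at hexit
  · omega

theorem isPrefix_parent_of_isExit {τ : List Bool} (hρ : T.IsExit j (strPrefix A ρ.length) ρ)
    (hρτ : ρ <+: τ) (hne : ρ ≠ τ) : ρ <+: T.parent j (strPrefix A τ.length) τ := by
  have hlt : ρ.length < τ.length :=
    lt_of_not_ge fun h => hne (hρτ.eq_of_length_le h)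
  have hexit : T.lastExit j (strPrefix A τ.length) τ ρ.length = ρ.length := by
    rw [← lastExit_take le_rfl, take_strPrefix A hlt.le, ← List.prefix_iff_eq_take.1 hρτ]
    exact hρ
  refine List.prefix_of_prefix_length_le hρτ (List.take_prefix _ _) ?_
  have hmono := lastExit_mono (T := T) (j := j) (α := strPrefix A τ.length) (ρ := τ)
    (Nat.le_sub_one_of_lt hlt)
  rw [hexit] at hmono
  rw [parent, List.length_take]
  exact le_min hmono hlt.le

theorem length_parent_lt (hρ : ρ ≠ []) : (T.parent j α ρ).length < ρ.length := by
  have hpos := List.length_pos_iff.2 hρ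
  have hle : T.lastExit j α ρ (ρ.length - 1) ≤ ρ.length - 1 := lastExit_le
  rw [parent, List.length_take]
  omega

/-- The strings left unmarked by `(j, σ)` are disjoint from the exits with parent `σ`. -/
theorem sum_wt_length_children_le {G : Finset (List Bool)}
    (hG : ∀ ρ ∈ G, T.IsExit j (strPrefix A ρ.length) ρ ∧ ρ ≠ [] ∧
      T.parent j (strPrefix A ρ.length) ρ = σ) :
    ∑ ρ ∈ G, wt ρ.length ≤ (1 - wt j) * wt σ.length := by
  obtain rfl | hne := G.eq_empty_or_nonempty
  · exact mul_nonneg (sub_nonneg.2 (wt_le_one j)) (wt_nonneg _)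
  obtain ⟨ρ₀, hρ₀, hmax⟩ := Finset.exists_max_image G List.length hne
  have hexit : ∀ ρ ∈ G, T.Marked (strPrefix A ρ.length) ρ j σ ∧
      ¬ T.Big (strPrefix A ρ.length) j σ := fun ρ hρ => by
    obtain ⟨hexit, hρ, rfl⟩ := hG ρ hρ
    exact hexit.marked_parent hρ (length_strPrefix _ _)
  have hlt : ∀ ρ ∈ G, σ.length < ρ.length := fun ρ hρ => by
    obtain ⟨-, hρ, rfl⟩ := hG ρ hρ
    exact length_parent_lt hρ
  have hnotbig := (hexit ρ₀ hρ₀).2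
  rw [Big, length_strPrefix] at hnotbig
  refine sum_wt_length_le_of_not_lowDensity (fun ρ hρ τ hτ hρτ => ?_) (hlt ρ₀ hρ₀).le
    (fun ρ hρ => ⟨?_, hmax ρ hρ⟩) (fun ρ hρ τ _ hρτ hτ => hτ ?_) hnotbig
  · by_contra hne
    have hpre := isPrefix_parent_of_isExit (hG ρ hρ).1 hρτ hne
    rw [(hG τ hτ).2.2] at hpre
    exact hpre.length_le.not_gt (hlt ρ hρ)
  · exact (hG ρ hρ).2.2 ▸ List.take_prefix _ _
  · exact T.mono (strPrefix_isPrefix A (hmax ρ hρ)) hρτ (hexit ρ hρ).1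

theorem isExit_parent (T : Marking A R) (j : ℕ) (ρ : List Bool) :
    T.IsExit j (strPrefix A (T.parent j (strPrefix A ρ.length) ρ).length)
      (T.parent j (strPrefix A ρ.length) ρ) := by
  have hle : T.lastExit j (strPrefix A ρ.length) ρ (ρ.length - 1) ≤ ρ.length :=
    lastExit_le.trans (Nat.sub_le _ _)
  have := T.isExit_take_lastExit (j := j) (α := strPrefix A ρ.length) (Nat.sub_le ρ.length 1)
  rw [take_strPrefix A hle] at this
  rwa [parent, List.length_take, min_eq_left hle]

theorem weightLE_isExit (T : Marking A R) (j : ℕ) :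
    WeightLE List.length (fun ρ => T.IsExit j (strPrefix A ρ.length) ρ) (2 ^ j) := by
  classical
  intro F hF
  let E := ((Finset.range (F.sup List.length + 1)).biUnion strFinset).filter
    fun ρ => T.IsExit j (strPrefix A ρ.length) ρ
  have hE : ∀ {ρ}, ρ ∈ E ↔ ρ.length ≤ F.sup List.length ∧
      T.IsExit j (strPrefix A ρ.length) ρ := by simp [E, mem_strFinset]
  have hFE : F ⊆ E := fun ρ hρ => hE.2 ⟨Finset.le_sup (f := List.length) hρ, hF ρ hρ⟩
  refine (Finset.sum_le_sum_of_subset_of_nonneg hFE fun _ _ _ => wt_nonneg _).trans ?_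
  refine sum_wt_le_of_fiber_le (root := [])
    (parent := fun ρ => T.parent j (strPrefix A ρ.length) ρ) (fun ρ hρ hne => ?_)
    fun σ _ => sum_wt_length_children_le (T := T) fun ρ hρ => ?_
  · exact hE.2 ⟨(length_parent_lt hne).le.trans (hE.1 hρ).1, T.isExit_parent j ρ⟩
  · obtain ⟨hρE, hρ⟩ := Finset.mem_filter.1 hρ
    exact ⟨(hE.1 hρE).2, hρ⟩

theorem exists_isExit_strPrefix (hbig : ∀ n s, ¬ T.Big (strPrefix A s) j (strPrefix R n))
    (k : ℕ) : ∃ n ≥ k, T.IsExit j (strPrefix A n) (strPrefix R n) := by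
  induction k with
  | zero => exact ⟨0, le_rfl, rfl⟩
  | succ k ih =>
    obtain ⟨n, hnk, hn⟩ := ih
    obtain ⟨s, hs⟩ := exists_marked_iff_not_exists_big.2 fun ⟨s, hs⟩ => hbig n s hs
    set m := n + s with hm
    set c := T.lastExit j (strPrefix A (m + 1)) (strPrefix R (m + 1)) with hc
    have hcn : c n = n := by
      rw [IsExit, length_strPrefix] at hn
      rw [hc, ← lastExit_take le_rfl, take_strPrefix _ (by omega), take_strPrefix _ (by omega), hn]
    have hlt : n < c (m + 1) := by
      have hle : n ≤ c m := hcn ▸ lastExit_mono (by omega)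
      obtain hlt | heq := hle.lt_or_eq
      · exact hlt.trans_le (lastExit_mono (Nat.le_succ m))
      · rw [hc, lastExit_succ, if_pos, hm]
        · omega
        rw [← hc, ← heq, take_strPrefix _ le_rfl, take_strPrefix _ le_rfl,
          take_strPrefix _ (by omega)]
        exact ⟨T.mono (strPrefix_isPrefix A (by omega)) (strPrefix_isPrefix R (by omega)) hs,
          hbig _ _⟩
    have hle : c (m + 1) ≤ m + 1 := lastExit_le
    refine ⟨c (m + 1), by omega, ?_⟩
    have := T.isExit_take_lastExit (j := j) (α := strPrefix A (m + 1))
      (ρ := strPrefix R (m + 1)) (n := m + 1) (by rw [length_strPrefix])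
    rwa [take_strPrefix _ hle, take_strPrefix _ hle] at this

theorem exists_big (hA : KTrivial A) (hR : MLRandom R) (T : Marking A R) (j : ℕ) :
    ∃ n s, T.Big (strPrefix A s) j (strPrefix R n) := by
  by_contra! hbig
  have hP : PrimrecRel (T.IsExit j) :=
    (show PrimrecPred fun q : List Bool × List Bool =>
      T.lastExit j q.1 q.2 q.2.length = q.2.length by fun_prop).primrecRel
  obtain ⟨W, hW, ⟨C, hC⟩, hcover⟩ := exists_string_cover hA hP (T.weightLE_isExit j)
  obtain ⟨N, hN⟩ := hR.passes_solovay_test hW hC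
  obtain ⟨n, hNn, hn⟩ := exists_isExit_strPrefix hbig N
  obtain ⟨s, hs⟩ := hcover (strPrefix R n) (by rwa [length_strPrefix])
  exact hN n hNn s hs

end Marking

/-! ### A `Π⁰₁` class of lower density zero along a random sequence -/

/-- The `Π⁰₁` class of paths through the primitive recursive tree `S` contains `R`, and its lower
density along `R` is zero. -/
structure IsSparseTree (R : ℕ → Bool) (S : List Bool → Prop) : Prop where
  primrecPred : PrimrecPred S
  of_isPrefix : ∀ ⦃σ τ⦄, σ <+: τ → S τ → S σ
  strPrefix_mem : ∀ n, S (strPrefix R n)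
  exists_lowDensity : ∀ j, ∃ n s, LowDensity S j s (strPrefix R n)

theorem weightLE_isShortest (p : List Bool → Prop) :
    WeightLE List.length (fun ρ => IsShortest p ρ) 1 := fun _ hF =>
  PrefixFreeSet.sum_wt_length_le_one fun σ hσ τ hτ h =>
    IsShortest.eq_of_isPrefix (hF σ hσ).1 (hF τ hτ) h

/-- By stage `|ρ|`, the only initial segments of `ρ` enumerated by `W` are initial segments of
`σ`. -/
def Avoids (W : ℕ → List Bool → Prop) (σ ρ : List Bool) : Prop :=
  ∀ τ, τ <+: ρ → W ρ.length τ → τ <+: σ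

theorem IsEnumeration.primrecPred_avoids {W : ℕ → List Bool → Prop} (hW : IsEnumeration W)
    (σ : List Bool) : PrimrecPred (Avoids W σ) := by
  have htake : PrimrecPred fun q : List Bool × ℕ => W q.1.length (q.1.take q.2) →
      q.1.take q.2 <+: σ :=
    ((hW.primrecRel.comp (by fun_prop) (by fun_prop)).not.or (by fun_prop)).of_eq
      fun _ => imp_iff_not_or.symm
  refine (primrecPred_forall_lt (f := fun ρ : List Bool => ρ.length + 1)
    (r := fun ρ m => W ρ.length (ρ.take m) → ρ.take m <+: σ) (by fun_prop) htake).of_eq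
    fun ρ => ⟨fun h τ hτ => ?_, fun h m _ => h _ (List.take_prefix _ _)⟩
  rw [List.prefix_iff_eq_take.1 hτ]
  exact h _ (Nat.lt_succ_of_le hτ.length_le)

namespace Marking

variable {A R : ℕ → Bool} {T : Marking A R} {α ρ : List Bool}

/-- An initial segment of `ρ` is `j`-big relative to `α` although `ρ` marks it, so that `ρ` is not
an initial segment of `R` if `α` is one of `A`. -/
def Refuted (T : Marking A R) (α ρ : List Bool) : Prop :=
  ∃ j ≤ ρ.length, ∃ k ≤ ρ.length, T.Big α j (ρ.take k) ∧ T.Marked α ρ j (ρ.take k)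

@[fun_prop]
theorem primrecPred_refuted {β : Type*} [Primcodable β] {α ρ : β → List Bool}
    (hα : Primrec α) (hρ : Primrec ρ) : PrimrecPred fun b => T.Refuted (α b) (ρ b) := by
  unfold Refuted; fun_prop

theorem not_refuted_strPrefix (n : ℕ) : ¬ T.Refuted (strPrefix A n) (strPrefix R n) := by
  rintro ⟨j, -, k, -, hbig, hmarked⟩
  exact exists_marked_iff_not_exists_big.1 ⟨n, hmarked⟩ ⟨n, hbig⟩

theorem exists_cover_of_refuted (hA : KTrivial A) (T : Marking A R) :
    ∃ W : ℕ → List Bool → Prop, IsEnumeration W ∧ (∃ C, ∀ s, WeightLE List.length (W s) C) ∧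
      ∀ ρ, T.Refuted (strPrefix A ρ.length) ρ →
        ∃ τ, τ <+: ρ ∧ ¬ IsPrefixOf τ R ∧ ∃ s, W s τ := by
  let P (α ρ : List Bool) : Prop := IsShortest (fun τ => T.Refuted (α.take τ.length) τ) ρ
  have hP : PrimrecRel P :=
    (show PrimrecPred fun q : List Bool × List Bool => P q.1 q.2 by
      simp only [P]; fun_prop).primrecRel
  have hPA : ∀ ρ, P (strPrefix A ρ.length) ρ ↔
      IsShortest (fun τ => T.Refuted (strPrefix A τ.length) τ) ρ := fun ρ =>
    isShortest_congr fun τ hτ => by rw [take_strPrefix A hτ.length_le]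
  obtain ⟨W, hW, hC, hcover⟩ := exists_string_cover hA hP (C := 1) (by
    simp only [hPA]; exact weightLE_isShortest _)
  refine ⟨W, hW, hC, fun ρ hρ => ?_⟩
  obtain ⟨τ, hτρ, hτ⟩ := exists_isShortest (p := fun τ => T.Refuted (strPrefix A τ.length) τ) hρ
  refine ⟨τ, hτρ, fun hτR => ?_, hcover τ ((hPA τ).2 hτ)⟩
  have hrefuted := hτ.1
  rw [← hτR.eq, length_strPrefix] at hrefuted
  exact not_refuted_strPrefix _ hrefuted

theorem refuted_of_marked {n s j : ℕ} (hbig : T.Big (strPrefix A s) j (strPrefix R n))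
    (hlen : ρ.length = s) (hRρ : strPrefix R n <+: ρ)
    (hρ : T.Marked (strPrefix A s) ρ j (strPrefix R n)) : T.Refuted (strPrefix A s) ρ := by
  have hjs : j < s - n := by
    have hns : n ≤ s := by simpa only [length_strPrefix] using hbig.1
    have hunmarked : ¬ T.Marked (strPrefix A s) (strPrefix R s) j (strPrefix R n) :=
      fun hmarked => exists_marked_iff_not_exists_big.1 ⟨s, hmarked⟩ ⟨s, hbig⟩
    simpa only [length_strPrefix] using hbig.lt_sub (ρ := strPrefix R s)
      (by simp only [length_strPrefix]) (strPrefix_isPrefix R hns) hunmarked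
  have htake : ρ.take n = strPrefix R n := by
    simpa only [length_strPrefix] using (List.prefix_iff_eq_take.1 hRρ).symm
  exact ⟨j, by omega, n, by omega, by rwa [htake], by rwa [htake]⟩

theorem exists_lowDensity_avoids {W : ℕ → List Bool → Prop} (hA : KTrivial A) (hR : MLRandom R)
    (T : Marking A R) (hW : Monotone W)
    (hcover : ∀ ρ, T.Refuted (strPrefix A ρ.length) ρ →
      ∃ τ, τ <+: ρ ∧ ¬ IsPrefixOf τ R ∧ ∃ s, W s τ) (N j : ℕ) :
    ∃ n s, LowDensity (Avoids W (strPrefix R N)) j s (strPrefix R n) := by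
  classical
  obtain ⟨n, s, hbig⟩ := exists_big hA hR T j
  have hcaught : ∀ ρ ∈ (strFinset s).filter fun ρ => strPrefix R n <+: ρ ∧
      T.Marked (strPrefix A s) ρ j (strPrefix R n),
      ∃ t, ∃ τ, τ <+: ρ ∧ ¬ IsPrefixOf τ R ∧ W t τ := fun ρ hρ => by
    obtain ⟨hlen, hRρ, hmarked⟩ := Finset.mem_filter.1 hρ
    rw [mem_strFinset] at hlen
    obtain ⟨τ, hτρ, hτR, t, ht⟩ := hcover ρ (hlen.symm ▸ refuted_of_marked hbig hlen hRρ hmarked)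
    exact ⟨t, τ, hτρ, hτR, ht⟩
  obtain ⟨t, ht⟩ := exists_forall_mem_of_monotone
    (fun t t' htt' ρ ⟨τ, hτρ, hτR, h⟩ => ⟨τ, hτρ, hτR, hW htt' _ h⟩) _ hcaught
  have hns : (strPrefix R n).length ≤ s := by simpa only [length_strPrefix A] using hbig.1
  refine ⟨n, max s t, LowDensity.refine hbig (by simp) fun ρ hlen hRρ hρ hmarked => ?_⟩
  rw [length_strPrefix] at hmarked
  obtain ⟨τ, hτρ, hτR, hτ⟩ := ht (ρ.take s) <| Finset.mem_filter.2
    ⟨mem_strFinset.2 (by simp [hlen]), List.prefix_take_iff.2 ⟨hRρ, hns⟩, hmarked⟩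
  refine hτR (isPrefix_strPrefix_iff.1 (hρ τ (hτρ.trans (List.take_prefix _ _)) ?_)).1
  exact hW (by omega) _ hτ

theorem exists_isSparseTree (hA : KTrivial A) (hR : MLRandom R) (T : Marking A R) :
    ∃ S, IsSparseTree R S := by
  obtain ⟨W, hW, ⟨C, hC⟩, hcover⟩ := exists_cover_of_refuted hA T
  obtain ⟨N, hN⟩ := hR.passes_solovay_test hW hC
  refine ⟨Avoids W (strPrefix R N), hW.primrecPred_avoids _,
    fun σ ρ hσρ hρ τ hτ h => hρ τ (hτ.trans hσρ) (hW.monotone hσρ.length_le _ h),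
    fun n τ hτ h => ?_, exists_lowDensity_avoids hA hR T hW.monotone hcover N⟩
  obtain ⟨hτR, -⟩ := isPrefix_strPrefix_iff.1 hτ
  rw [← hτR.eq] at h ⊢
  exact strPrefix_isPrefix R (not_lt.1 fun hlt => hN _ hlt.le _ h)

end Marking

/-! ### Computing the halting problem from a sparse tree -/

/-- `n` has entered the halting problem by stage `s`. -/
def JumpStage (n s : ℕ) : Prop := ∃ m ≤ s, OracleStage n (List.replicate s false) n m

@[fun_prop]
theorem primrecPred_jumpStage : PrimrecPred fun p : ℕ × ℕ => JumpStage p.1 p.2 := by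
  unfold JumpStage; fun_prop

theorem JumpStage.mono {n s t : ℕ} (h : JumpStage n s) (hst : s ≤ t) : JumpStage n t := by
  obtain ⟨m, hm, h⟩ := h
  refine ⟨m, hm.trans hst, h.mono ⟨List.replicate (t - s) false, ?_⟩⟩
  rw [List.replicate_append_replicate, Nat.add_sub_cancel' hst]

theorem JumpStage.lt {n s : ℕ} (h : JumpStage n s) : n < s := by
  obtain ⟨m, -, h⟩ := h
  simpa only [List.length_replicate] using h.lt_length.1

theorem zeroJump_eq_true_iff_exists_jumpStage {n : ℕ} :
    zeroJump n = true ↔ ∃ s, JumpStage n s := by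
  have hempty (s : ℕ) : strPrefix emptyOracle s = List.replicate s false := by
    refine List.eq_replicate_iff.2 ⟨length_strPrefix _ _, fun b hb => ?_⟩
    obtain ⟨m, -, rfl⟩ := List.mem_map.1 hb
    rfl
  simp only [zeroJump_eq_true_iff, oracleComputes_iff_exists_oracleStage, JumpStage, hempty]
  constructor
  · rintro ⟨m, s, h⟩
    have hm := h.lt_length.2
    rw [List.length_replicate] at hm
    exact ⟨s, m, hm.le, h⟩
  · rintro ⟨s, m, -, h⟩
    exact ⟨m, s, h⟩

section LowDensity

variable {p : List Bool → Prop} {n t : ℕ} {σ : List Bool}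

theorem LowDensity.strCount_mul_wt_le (h : LowDensity p n t σ) :
    strCount (fun ρ => σ <+: ρ ∧ p ρ) t * wt t ≤ wt n * wt σ.length := by
  have hlt : (2 : ℝ) ^ n * strCount (fun ρ => σ <+: ρ ∧ p ρ) t ≤ 2 ^ t * wt σ.length := by
    rw [← two_pow_sub_eq h.1]
    exact_mod_cast h.2.le
  calc (strCount (fun ρ => σ <+: ρ ∧ p ρ) t : ℝ) * wt t
      = wt n * wt t * (2 ^ n * strCount (fun ρ => σ <+: ρ ∧ p ρ) t) := by
        linear_combination -(strCount (fun ρ => σ <+: ρ ∧ p ρ) t * wt t : ℝ) * wt_mul_two_pow n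
    _ ≤ wt n * wt t * (2 ^ t * wt σ.length) :=
        mul_le_mul_of_nonneg_left hlt (mul_nonneg (wt_nonneg n) (wt_nonneg t))
    _ = wt n * wt σ.length := by linear_combination wt n * wt σ.length * wt_mul_two_pow t

theorem strCount_exists_lowDensity_mul_wt_le (p : List Bool → Prop) (n t : ℕ) :
    strCount (fun ρ => p ρ ∧ ∃ σ, σ <+: ρ ∧ LowDensity p n t σ) t * wt t ≤ wt n := by
  classical
  set F := (strFinset t).filter fun ρ => p ρ ∧ ∃ σ, σ <+: ρ ∧ LowDensity p n t σ
  have hF : ∀ ρ ∈ F, ∃ σ, σ <+: ρ ∧ IsShortest (LowDensity p n t) σ := fun ρ hρ => by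
    obtain ⟨-, -, σ, hσρ, hσ⟩ := Finset.mem_filter.1 hρ
    obtain ⟨τ, hτσ, hτ⟩ := exists_isShortest hσ
    exact ⟨τ, hτσ.trans hσρ, hτ⟩
  choose! root hpre hroot using hF
  have hkraft : ∑ σ ∈ F.image root, wt σ.length ≤ 1 :=
    weightLE_isShortest _ _ (Finset.forall_mem_image.2 hroot)
  have hfiber : ∀ σ ∈ F.image root, ({ρ ∈ F | root ρ = σ}.card : ℝ) * wt t ≤
      wt n * wt σ.length := Finset.forall_mem_image.2 fun ρ hρ => by
    refine le_trans ?_ (hroot ρ hρ).1.strCount_mul_wt_le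
    rw [strCount_eq_card]
    refine mul_le_mul_of_nonneg_right (mod_cast Finset.card_le_card fun τ hτ => ?_) (wt_nonneg t)
    obtain ⟨hτF, hτ⟩ := Finset.mem_filter.1 hτ
    obtain ⟨hlen, hp, -⟩ := Finset.mem_filter.1 hτF
    exact Finset.mem_filter.2 ⟨hlen, hτ ▸ hpre τ hτF, hp⟩
  calc (strCount (fun ρ => p ρ ∧ ∃ σ, σ <+: ρ ∧ LowDensity p n t σ) t : ℝ) * wt t
      = ∑ σ ∈ F.image root, ({ρ ∈ F | root ρ = σ}.card : ℝ) * wt t := by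
        rw [strCount_eq_card, Finset.card_eq_sum_card_image root, Nat.cast_sum, Finset.sum_mul]
    _ ≤ wt n * ∑ σ ∈ F.image root, wt σ.length := by
        rw [Finset.mul_sum]
        exact Finset.sum_le_sum hfiber
    _ ≤ wt n := mul_le_of_le_one_right (wt_nonneg n) hkraft

end LowDensity

section IsSparseTree

variable {R : ℕ → Bool} {S : List Bool → Prop} {n : ℕ} {ρ τ : List Bool}

/-- Some initial segment of `ρ` is seen at stage `|ρ|` to have density less than `2⁻ⁿ` in `S`. -/
def Certifies (S : List Bool → Prop) (n : ℕ) (ρ : List Bool) : Prop :=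
  ∃ k ≤ ρ.length, LowDensity S n ρ.length (ρ.take k)

theorem IsSparseTree.primrecPred_certifies (hS : IsSparseTree R S) :
    PrimrecPred fun q : ℕ × List Bool => Certifies S q.1 q.2 := by
  have := hS.primrecPred
  unfold Certifies; fun_prop

theorem IsSparseTree.certifies_mono (hS : IsSparseTree R S) (h : Certifies S n ρ)
    (hρτ : ρ <+: τ) : Certifies S n τ := by
  obtain ⟨k, hk, hlow⟩ := h
  refine ⟨k, hk.trans hρτ.length_le, ?_⟩
  have htake : τ.take k = ρ.take k := by
    rw [List.prefix_iff_eq_take.1 hρτ, List.take_take, min_eq_left hk]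
  exact htake ▸ hlow.refine hρτ.length_le fun _ _ _ => hS.of_isPrefix (List.take_prefix _ _)

/-- The number `n` enters the halting problem at stage `|ρ|`, although `ρ` certifies it at that
stage. -/
def Caught (S : List Bool → Prop) (n : ℕ) (ρ : List Bool) : Prop :=
  JumpStage n ρ.length ∧ ¬ JumpStage n (ρ.length - 1) ∧ S ρ ∧ Certifies S n ρ

theorem Caught.length_le (hρ : Caught S n ρ) (hτ : Caught S n τ) : ρ.length ≤ τ.length :=
  not_lt.1 fun hlt => hρ.2.1 (hτ.1.mono (Nat.le_sub_one_of_lt hlt))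

theorem sum_wt_caught_le {F : Finset (List Bool)} (hF : ∀ ρ ∈ F, Caught S n ρ) :
    ∑ ρ ∈ F, wt ρ.length ≤ wt n := by
  classical
  obtain rfl | ⟨ρ₀, hρ₀⟩ := F.eq_empty_or_nonempty
  · exact wt_nonneg n
  have hlen : ∀ ρ ∈ F, ρ.length = ρ₀.length := fun ρ hρ =>
    ((hF ρ hρ).length_le (hF ρ₀ hρ₀)).antisymm ((hF ρ₀ hρ₀).length_le (hF ρ hρ))
  rw [Finset.sum_congr rfl fun ρ hρ => by rw [hlen ρ hρ], Finset.sum_const, nsmul_eq_mul]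
  refine le_trans ?_ (strCount_exists_lowDensity_mul_wt_le S n ρ₀.length)
  rw [strCount_eq_card]
  refine mul_le_mul_of_nonneg_right (mod_cast Finset.card_le_card fun ρ hρ => ?_) (wt_nonneg _)
  obtain ⟨-, -, hSρ, k, -, hk⟩ := hF ρ hρ
  rw [hlen ρ hρ] at hk
  exact Finset.mem_filter.2 ⟨mem_strFinset.2 (hlen ρ hρ), hSρ, _, List.take_prefix _ _, hk⟩

theorem weightLE_caught (S : List Bool → Prop) :
    WeightLE List.length (fun ρ => ∃ n < ρ.length, Caught S n ρ) 2 := by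
  classical
  intro F hF
  choose! entry _ hentry using hF
  have hsum : ∑ n ∈ F.image entry, wt n ≤ 2 := by
    have := sum_wt_succ_le_one (F.image entry)
    simp only [wt_succ, ← Finset.sum_div] at this
    linarith
  rw [← Finset.sum_fiberwise_of_maps_to fun ρ hρ => Finset.mem_image_of_mem entry hρ]
  refine (Finset.sum_le_sum fun n _ => sum_wt_caught_le (S := S) fun ρ hρ => ?_).trans hsum
  obtain ⟨hρF, rfl⟩ := Finset.mem_filter.1 hρ
  exact hentry ρ hρF

theorem IsSparseTree.exists_forall_zeroJump_eq_false_iff (hR : MLRandom R)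
    (hS : IsSparseTree R S) :
    ∃ N, ∀ n ≥ N, zeroJump n = false ↔
      ∃ s, Certifies S n (strPrefix R s) ∧ ¬ JumpStage n s := by
  classical
  have hprim : PrimrecRel fun (_ : ℕ) ρ => ∃ n < ρ.length, Caught S n ρ := by
    have hSprim := hS.primrecPred
    have hcert := hS.primrecPred_certifies
    exact (show PrimrecPred fun q : ℕ × List Bool => ∃ n < q.2.length, Caught S n q.2 by
      unfold Caught; fun_prop).primrecRel
  obtain ⟨N, hN⟩ := hR.passes_solovay_test ⟨hprim, monotone_const⟩ fun _ => weightLE_caught S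
  refine ⟨N, fun n hn => ?_⟩
  rw [← Bool.not_eq_true, zeroJump_eq_true_iff_exists_jumpStage]
  constructor
  · intro h
    obtain ⟨m, s, hlow⟩ := hS.exists_lowDensity n
    have hms : m ≤ s := by simpa only [length_strPrefix] using hlow.1
    refine ⟨s, ⟨m, by rwa [length_strPrefix], ?_⟩, fun hs => h ⟨s, hs⟩⟩
    rwa [length_strPrefix, take_strPrefix R hms]
  · rintro ⟨s, hcert, hns⟩ hex
    obtain ⟨t, ht, htmin⟩ : ∃ t, JumpStage n t ∧ ∀ u < t, ¬ JumpStage n u :=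
      ⟨Nat.find hex, Nat.find_spec hex, fun _ => Nat.find_min hex⟩
    have hst : s < t := not_le.1 fun hts => hns (ht.mono hts)
    have hnt : n < t := ht.lt
    refine hN t (hn.trans hnt.le) 0 ⟨n, by rwa [length_strPrefix], ?_⟩
    rw [Caught, length_strPrefix]
    exact ⟨ht, htmin _ (by omega), hS.strPrefix_mem t,
      hS.certifies_mono hcert (strPrefix_isPrefix R hst.le)⟩

end IsSparseTree

theorem turingLE_of_eventually_iff {X Y : ℕ → Bool} {P : List Bool → ℕ → Bool → Prop} {N : ℕ}
    (hP : PrimrecPred fun q : List Bool × ℕ × Bool => P q.1 q.2.1 q.2.2)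
    (h : ∀ n ≥ N, ∀ b, X n = b ↔ ∃ s, P (strPrefix Y s) n b) : TuringLE X Y := by
  have hnatOfBool : Primrec natOfBool := Primrec.dom_finite _
  obtain ⟨e, he⟩ := exists_oracleComputes_iff (P := fun α n m => ∃ b ∈ [false, true],
    m = natOfBool b ∧ ((strPrefix X N)[n]? = some b ∨ N ≤ n ∧ P α n b)) (by fun_prop)
  refine ⟨e, fun n m => ?_⟩
  have hvalue : ∀ b, (∃ s, (strPrefix X N)[n]? = some b ∨ N ≤ n ∧ P (strPrefix Y s) n b) ↔
      X n = b := fun b => by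
    obtain hn | hn := lt_or_ge n N
    · simp [strPrefix, hn, hn.not_ge]
    · simp [strPrefix, hn, h n hn]
  rw [he]
  constructor
  · rintro ⟨s, b, -, rfl, hb⟩
    exact congrArg natOfBool ((hvalue b).1 ⟨s, hb⟩).symm
  · rintro rfl
    obtain ⟨s, hs⟩ := (hvalue (X n)).2 rfl
    exact ⟨s, X n, by cases X n <;> simp, rfl, hs⟩

theorem IsSparseTree.turingLE_zeroJump {R : ℕ → Bool} {S : List Bool → Prop} (hR : MLRandom R)
    (hS : IsSparseTree R S) : TuringLE zeroJump R := by
  obtain ⟨N, hN⟩ := hS.exists_forall_zeroJump_eq_false_iff hR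
  refine turingLE_of_eventually_iff (N := N) (P := fun α n b => b = true ∧ JumpStage n α.length ∨
    b = false ∧ Certifies S n α ∧ ¬ JumpStage n α.length) ?_ fun n hn b => ?_
  · have := hS.primrecPred_certifies
    fun_prop
  · cases b
    · simp [hN n hn]
    · simp [zeroJump_eq_true_iff_exists_jumpStage]

/-- no K-trivial set is weakly ML-cuppable: if `A` is K-trivial and
`R` is Martin-Löf random with `A ⊕ R ≥_T ∅′`, then `R ≥_T ∅′`. -/
theorem stmt9 (A : ℕ → Bool) (hA : KTrivial A)
    (R : ℕ → Bool) (hR : MLRandom R) (hcup : TuringLE zeroJump (joinSet A R)) :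
    TuringLE zeroJump R := by
  obtain ⟨T⟩ := exists_marking hA hcup
  obtain ⟨S, hS⟩ := T.exists_isSparseTree hA hR
  exact hS.turingLE_zeroJump hR
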